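/- arXiv:1610.07945 — 3 statements merged into one kernel-verified Lean document; each statement's English description precedes it below -/
import Mathlib

section
/- Let N ≥ -1 be an integer and let 0 < a ≤ 1. The Hurwitz zeta function σ ↦ ζ(σ, a) has a real zero in the open interval (-N-1, -N) if and only if B_{N+1}(a) · B_{N+2}(a) < 0, where B_n denotes the n-th Bernoulli polynomial. -/
open HurwitzZeta Polynomial Set

/-- The `n`-th Bernoulli polynomial evaluated at a real number. -/
noncomputable def bernoulliPoly (n : ℕ) (x : ℝ) : ℝ := Polynomial.aeval x (Polynomial.bernoulli n)

section Helpers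

/-- midpoint term -/
noncomputable def midT (a : ℝ) (n : ℕ) (s : ℂ) : ℂ :=
  (((n + 1 + a : ℝ)) : ℂ) ^ (-s) -
    ((((n + 1 + a + 1/2 : ℝ)) : ℂ) ^ (1 - s) - (((n + 1 + a - 1/2 : ℝ)) : ℂ) ^ (1 - s)) / (1 - s)

lemma hasDerivAt_cpow_aux (s : ℂ) {x : ℝ} (hx : 0 < x) :
    HasDerivAt (fun y : ℝ => (y : ℂ) ^ s) (s * (x : ℂ) ^ (s - 1)) x := by
  rcases eq_or_ne s 0 with rfl | hs
  · simpa using hasDerivAt_const x (1 : ℂ)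
  · exact hasDerivAt_ofReal_cpow_const hx.ne' hs

lemma midT_eq_integral {a : ℝ} (ha : 0 < a) (n : ℕ) {s : ℂ} (hs : s ≠ 1) :
    midT a n s = - ∫ x in (n + 1 + a - 1/2 : ℝ)..(n + 1 + a + 1/2 : ℝ),
      ((x : ℂ) ^ (-s) - (((n + 1 + a : ℝ)) : ℂ) ^ (-s)
        - (x - (n + 1 + a : ℝ)) • ((-s) * (((n + 1 + a : ℝ)) : ℂ) ^ (-s - 1))) := by
  set c : ℝ := n + 1 + a with hc
  have hc1 : 1 < c := by rw [hc]; have : (0 : ℝ) ≤ n := n.cast_nonneg; linarith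
  have h1s : (1 - s) ≠ 0 := sub_ne_zero.mpr hs.symm
  have hpos : ∀ x ∈ uIcc (c - 1/2) (c + 1/2), 0 < x := by
    intro x hx
    rw [uIcc_of_le (by linarith)] at hx
    linarith [hx.1]
  have hd : ∀ x ∈ uIcc (c - 1/2) (c + 1/2), HasDerivAt
      (fun x : ℝ => (x : ℂ) ^ (1 - s) / (1 - s) - x • (c : ℂ) ^ (-s)
        - ((x - c) ^ 2 / 2) • ((-s) * (c : ℂ) ^ (-s - 1)))
      ((x : ℂ) ^ (-s) - (c : ℂ) ^ (-s) - (x - c) • ((-s) * (c : ℂ) ^ (-s - 1))) x := by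
    intro x hx
    have h1 := (hasDerivAt_cpow_aux (1 - s) (hpos x hx)).div_const (1 - s)
    have h2 := (hasDerivAt_id x).smul_const ((c : ℂ) ^ (-s))
    have h3 := ((((hasDerivAt_id x).sub_const c).pow 2).div_const 2).smul_const
      ((-s) * (c : ℂ) ^ (-s - 1))
    have h4 := (h1.sub h2).sub h3
    convert! h4 using 1
    have e1 : (1 - s) * (x : ℂ) ^ (1 - s - 1) / (1 - s) = (x : ℂ) ^ (-s) := by
      rw [mul_div_cancel_left₀ _ h1s]; congr 1; ring
    rw [e1]
    simp
  rw [intervalIntegral.integral_eq_sub_of_hasDerivAt hd]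
  · unfold midT
    rw [← hc]
    simp only [Complex.real_smul]
    push_cast
    ring
  · apply ContinuousOn.intervalIntegrable
    intro x hx
    have := (hasDerivAt_cpow_aux (-s) (hpos x hx)).continuousAt
    apply ContinuousAt.continuousWithinAt
    fun_prop

lemma taylor_aux (s : ℂ) (hs : -2 < s.re) {c : ℝ} (hc : 1/2 < c) {x : ℝ}
    (hx : x ∈ Icc (c - 1/2) (c + 1/2)) :
    ‖(x : ℂ) ^ (-s) - (c : ℂ) ^ (-s) - (x - c) • ((-s) * (c : ℂ) ^ (-s - 1))‖
      ≤ ‖s‖ * ‖s + 1‖ * (c - 1/2) ^ (-s.re - 2) := by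
  set K := ‖s‖ * ‖s + 1‖ * (c - 1/2) ^ (-s.re - 2) with hK
  have hKn : 0 ≤ K := by
    have : 0 ≤ c - 1/2 := by linarith
    positivity
  have hpos : ∀ y ∈ Icc (c - 1/2) (c + 1/2), 0 < y := fun y hy => by linarith [hy.1]
  have hcm : c ∈ Icc (c - 1/2) (c + 1/2) := by constructor <;> linarith
  have hab : ∀ y ∈ Icc (c - 1/2) (c + 1/2), ‖y - c‖ ≤ 1 := by
    intro y hy
    rw [Real.norm_eq_abs, abs_le]; constructor <;> linarith [hy.1, hy.2]
  have h1 : ∀ y ∈ Icc (c - 1/2) (c + 1/2),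
      ‖(-s) * (y : ℂ) ^ (-s - 1) - (-s) * (c : ℂ) ^ (-s - 1)‖ ≤ K := by
    intro y hy
    have := (convex_Icc (c - 1/2) (c + 1/2)).norm_image_sub_le_of_norm_hasDerivWithin_le
      (f := fun y : ℝ => (-s) * (y : ℂ) ^ (-s - 1))
      (f' := fun y : ℝ => (-s) * ((-s - 1) * (y : ℂ) ^ (-s - 1 - 1))) (C := K)
      (fun z hz => ((hasDerivAt_cpow_aux (-s - 1) (hpos z hz)).const_mul (-s)).hasDerivWithinAt)
      (fun z hz => by
        rw [norm_mul, norm_mul, Complex.norm_cpow_eq_rpow_re_of_pos (hpos z hz), hK, ← mul_assoc]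
        rw [norm_neg, show -s - 1 = -(s + 1) by ring, norm_neg]
        gcongr ?_ * ?_
        have : (-(s + 1) - 1).re = -s.re - 2 := by simp; ring
        rw [this]
        exact Real.rpow_le_rpow_of_nonpos (by linarith) hz.1 (by linarith)) hcm hy
    refine this.trans ?_
    simpa using mul_le_mul_of_nonneg_left (hab y hy) hKn
  have := (convex_Icc (c - 1/2) (c + 1/2)).norm_image_sub_le_of_norm_hasDerivWithin_le
      (f := fun y : ℝ => (y : ℂ) ^ (-s) - (c : ℂ) ^ (-s) - (y - c) • ((-s) * (c : ℂ) ^ (-s - 1)))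
      (f' := fun y : ℝ => (-s) * (y : ℂ) ^ (-s - 1) - (-s) * (c : ℂ) ^ (-s - 1)) (C := K)
      (fun z hz => by
        have h2 := ((hasDerivAt_cpow_aux (-s) (hpos z hz)).sub_const ((c : ℂ) ^ (-s))).sub
          (((hasDerivAt_id z).sub_const c).smul_const ((-s) * (c : ℂ) ^ (-s - 1)))
        convert! h2.hasDerivWithinAt using 1
        simp) h1 hcm hx
  simp only [sub_self, zero_smul, sub_zero] at this
  refine this.trans ?_
  simpa using mul_le_mul_of_nonneg_left (hab x hx) hKn

lemma midT_norm_le {a : ℝ} (ha : 0 < a) (n : ℕ) {s : ℂ} (hs : s ≠ 1) (hs2 : -2 < s.re) :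
    ‖midT a n s‖ ≤ ‖s‖ * ‖s + 1‖ * (n + 1 + a - 1/2) ^ (-s.re - 2) := by
  have hn : (0 : ℝ) ≤ n := n.cast_nonneg
  rw [midT_eq_integral ha n hs, norm_neg]
  have := intervalIntegral.norm_integral_le_of_norm_le_const
    (a := (n + 1 + a - 1/2 : ℝ)) (b := (n + 1 + a + 1/2 : ℝ))
    (C := ‖s‖ * ‖s + 1‖ * (n + 1 + a - 1/2) ^ (-s.re - 2))
    (f := fun x : ℝ => ((x : ℂ) ^ (-s) - (((n + 1 + a : ℝ)) : ℂ) ^ (-s)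
        - (x - (n + 1 + a : ℝ)) • ((-s) * (((n + 1 + a : ℝ)) : ℂ) ^ (-s - 1))))
    (fun x hx => by
      rw [uIoc_of_le (by linarith)] at hx
      exact taylor_aux s hs2 (by linarith) ⟨hx.1.le, hx.2⟩)
  refine this.trans (le_of_eq ?_)
  rw [show (n + 1 + a + 1/2 : ℝ) - (n + 1 + a - 1/2) = 1 by ring]; simp

lemma midT_norm_le' {a : ℝ} (ha : 0 < a) (n : ℕ) {s : ℂ} (hs : s ≠ 1) {δ R : ℝ} (hδ : 0 < δ)
    (hs2 : -1 + δ ≤ s.re) (hR : ‖s‖ ≤ R) :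
    ‖midT a n s‖ ≤ R * (R + 1) * 2 ^ (R + 2) * ((n : ℝ) + 1) ^ (-1 - δ) := by
  have hn : (0 : ℝ) ≤ n := n.cast_nonneg
  have hR0 : 0 ≤ R := (norm_nonneg _).trans hR
  refine (midT_norm_le ha n hs (by linarith)).trans ?_
  rw [mul_assoc (R * (R + 1))]
  have h1 : ‖s + 1‖ ≤ R + 1 := (norm_add_le _ _).trans (by simpa using hR)
  have h2 : s.re ≤ R := (Complex.re_le_norm s).trans hR
  have hb : (0 : ℝ) ≤ n + 1 + a - 1/2 := by linarith
  refine mul_le_mul (mul_le_mul hR h1 (norm_nonneg _) hR0) ?_ (Real.rpow_nonneg hb _)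
    (by positivity)
  calc (n + 1 + a - 1/2 : ℝ) ^ (-s.re - 2) ≤ ((n + 1) / 2 : ℝ) ^ (-s.re - 2) :=
        Real.rpow_le_rpow_of_nonpos (by linarith) (by linarith) (by linarith)
    _ = 2 ^ (s.re + 2) * (n + 1 : ℝ) ^ (-s.re - 2) := by
        rw [Real.div_rpow (by linarith) (by norm_num), show -s.re - 2 = -(s.re + 2) by ring,
          Real.rpow_neg (by norm_num : (0:ℝ) ≤ 2), div_inv_eq_mul, mul_comm]
    _ ≤ 2 ^ (R + 2) * (n + 1 : ℝ) ^ (-1 - δ) := by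
        refine mul_le_mul (Real.rpow_le_rpow_of_exponent_le (by norm_num) (by linarith))
          (Real.rpow_le_rpow_of_exponent_le (by linarith) (by linarith)) (by positivity)
          (by positivity)

lemma summable_aux {δ : ℝ} (hδ : 0 < δ) (C : ℝ) :
    Summable (fun n : ℕ => C * ((n : ℝ) + 1) ^ (-1 - δ)) := by
  apply Summable.mul_left
  have := (summable_nat_add_iff 1).mpr (Real.summable_nat_rpow.mpr (by linarith : -1 - δ < -1))
  simpa using this

lemma midT_summable {a : ℝ} (ha : 0 < a) {s : ℂ} (hs : s ≠ 1) (hs2 : -1 < s.re) :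
    Summable (fun n => midT a n s) := by
  refine Summable.of_norm_bounded (summable_aux (δ := s.re + 1) (by linarith) _)
    (fun n => midT_norm_le' ha n hs (by linarith) (by linarith) le_rfl)

noncomputable def midF (a : ℝ) (s : ℂ) : ℂ :=
  (a : ℂ) ^ (-s) - ((a + 1/2 : ℝ) : ℂ) ^ (1 - s) / (1 - s) + ∑' n, midT a n s

lemma midF_differentiableAt {a : ℝ} (ha : 0 < a) {s : ℂ} (hs : s ≠ 1) (hs2 : -1 < s.re) :
    DifferentiableAt ℂ (midF a) s := by
  have h1s : (1 - s) ≠ 0 := sub_ne_zero.mpr hs.symm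
  have hcp : ∀ b : ℝ, 0 < b → ∀ (z : ℂ), DifferentiableAt ℂ (fun s : ℂ => (b : ℂ) ^ (-s)) z := by
    intro b hb z
    exact (differentiableAt_id.neg).const_cpow (Or.inl (by exact_mod_cast hb.ne'))
  have hcp' : ∀ b : ℝ, 0 < b → ∀ (z : ℂ),
      DifferentiableAt ℂ (fun s : ℂ => (b : ℂ) ^ (1 - s)) z := by
    intro b hb z
    exact ((differentiableAt_const 1).sub differentiableAt_id).const_cpow
      (Or.inl (by exact_mod_cast hb.ne'))
  have hl : ∀ z : ℂ, DifferentiableAt ℂ (fun s : ℂ => 1 - s) z := fun z => by fun_prop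
  unfold midF
  refine ((hcp a ha s).sub ((hcp' _ (by linarith) s).div (hl s) h1s)).add ?_
  set δ := (s.re + 1) / 2 with hδ
  have hδ0 : 0 < δ := by rw [hδ]; linarith
  set U : Set ℂ := {z | -1 + δ < z.re} ∩ {z | ‖z‖ < ‖s‖ + 1} ∩ {1}ᶜ with hU
  have hUo : IsOpen U := by
    refine ((isOpen_lt continuous_const Complex.continuous_re).inter
      (isOpen_lt continuous_norm continuous_const)).inter isOpen_compl_singleton
  have hsU : s ∈ U := ⟨⟨by simp only [mem_ofPred_eq]; rw [hδ]; linarith, by simp⟩, hs⟩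
  refine (Complex.differentiableOn_tsum_of_summable_norm (u := fun n : ℕ =>
    ((‖s‖ + 1) * ((‖s‖ + 1) + 1) * 2 ^ ((‖s‖ + 1) + 2)) * ((n : ℝ) + 1) ^ (-1 - δ))
    (summable_aux hδ0 _) ?_ hUo ?_).differentiableAt (hUo.mem_nhds hsU)
  · intro n z hz
    have h1z : (1 - z) ≠ 0 := sub_ne_zero.mpr (Ne.symm hz.2)
    have hn : (0 : ℝ) ≤ n := n.cast_nonneg
    apply DifferentiableAt.differentiableWithinAt
    unfold midT
    exact (hcp _ (by linarith) z).sub (((hcp' _ (by linarith) z).sub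
      (hcp' _ (by linarith) z)).div (hl z) h1z)
  · intro n z hz
    exact midT_norm_le' ha n hz.2 hδ0 (le_of_lt hz.1.1) (le_of_lt hz.1.2)

lemma midF_eq_of_one_lt {a : ℝ} (ha : 0 < a) (ha' : a ≤ 1) {s : ℂ} (hs : 1 < s.re) :
    hurwitzZeta (a : UnitAddCircle) s = midF a s := by
  have hs1 : s ≠ 1 := by rintro rfl; simp at hs
  have hz := hasSum_hurwitzZeta_of_one_lt_re ⟨ha.le, ha'⟩ hs
  have hz1 := (hasSum_nat_add_iff' 1).mpr hz
  have hT := midT_summable ha hs1 (by linarith)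
  have hd := hz1.sub hT.hasSum
  set g : ℕ → ℂ := fun n => ((n + a + 1/2 : ℝ) : ℂ) ^ (1 - s) / (1 - s) with hg
  have hd' : HasSum (fun n => g (n + 1) - g n) (hurwitzZeta (↑a) s -
      ∑ i ∈ Finset.range 1, 1 / ((i : ℂ) + ↑a) ^ s - ∑' (b : ℕ), midT a b s) := by
    refine HasSum.congr_fun hd (fun n => ?_)
    simp only [hg, midT]
    rw [Complex.cpow_neg]
    push_cast
    rw [show (n : ℂ) + 1 + a - 1/2 = n + a + 1/2 by ring]
    ring
  have ht := hd'.tendsto_sum_nat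
  simp only [Finset.sum_range_sub] at ht
  have hg0 : Filter.Tendsto g Filter.atTop (nhds 0) := by
    rw [hg, ← zero_div (1 - s)]
    apply Filter.Tendsto.div_const
    rw [tendsto_zero_iff_norm_tendsto_zero]
    have : (fun n : ℕ => ‖((n + a + 1/2 : ℝ) : ℂ) ^ (1 - s)‖) =
        fun n : ℕ => (n + a + 1/2 : ℝ) ^ (-(s.re - 1)) := by
      ext n
      have hn : (0 : ℝ) ≤ n := n.cast_nonneg
      rw [Complex.norm_cpow_eq_rpow_re_of_pos (by linarith)]
      simp
    rw [this]
    refine (tendsto_rpow_neg_atTop (by linarith)).comp ?_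
    simp only [add_assoc]
    exact Filter.tendsto_atTop_add_const_right _ _ tendsto_natCast_atTop_atTop
  have := tendsto_nhds_unique ht (hg0.sub_const (g 0))
  unfold midF
  simp only [Finset.range_one, Finset.sum_singleton, hg] at this
  rw [Complex.cpow_neg]
  push_cast at this ⊢
  simp only [zero_add, one_div] at this ⊢
  linear_combination this

lemma hurwitz_eq_midF {a : ℝ} (ha : 0 < a) (ha' : a ≤ 1) {σ : ℝ} (hs : σ < 1) (hs2 : -1 < σ) :
    hurwitzZeta (a : UnitAddCircle) (σ : ℂ) = midF a σ := by
  set U : Set ℂ := {z | -1 < z.re} ∩ {z | 0 < z.im} with hU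
  have hUo : IsOpen U := (isOpen_lt continuous_const Complex.continuous_re).inter
    (isOpen_lt continuous_const Complex.continuous_im)
  have hpc : IsPreconnected U :=
    ((convex_halfSpace_re_gt _).inter (convex_halfSpace_im_gt _)).isPreconnected
  have hne : ∀ z ∈ U, z ≠ 1 := by
    rintro z hz rfl
    simpa using hz.2
  have h2 : (2 + Complex.I : ℂ) ∈ U := by
    constructor
    · simp; norm_num
    · simp
  have key : EqOn (hurwitzZeta (a : UnitAddCircle)) (midF a) U := by
    refine AnalyticOnNhd.eqOn_of_preconnected_of_eventuallyEq (𝕜 := ℂ)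
      (DifferentiableOn.analyticOnNhd (fun z hz =>
        (differentiableAt_hurwitzZeta _ (hne z hz)).differentiableWithinAt) hUo)
      (DifferentiableOn.analyticOnNhd (fun z hz =>
        (midF_differentiableAt ha (hne z hz) hz.1).differentiableWithinAt) hUo) hpc h2 ?_
    filter_upwards [(isOpen_lt continuous_const Complex.continuous_re).mem_nhds
      (show (1 : ℝ) < (2 + Complex.I : ℂ).re by simp)] with z hz
    exact midF_eq_of_one_lt ha ha' hz
  have hσ : (σ : ℂ) ≠ 1 := by exact_mod_cast hs.ne
  have ht : Filter.Tendsto (fun ε : ℝ => (σ : ℂ) + ε * Complex.I) (nhdsWithin 0 (Ioi 0))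
      (nhds (σ : ℂ)) := by
    have : Continuous (fun ε : ℝ => (σ : ℂ) + ε * Complex.I) := by fun_prop
    have := this.tendsto 0
    simp only [Complex.ofReal_zero, zero_mul, add_zero] at this
    exact this.mono_left nhdsWithin_le_nhds
  have t1 := (differentiableAt_hurwitzZeta (a : UnitAddCircle) hσ).continuousAt.tendsto.comp ht
  have t2 := (midF_differentiableAt ha hσ (by simpa using hs2)).continuousAt.tendsto.comp ht
  refine tendsto_nhds_unique (t1.congr' ?_) t2
  filter_upwards [self_mem_nhdsWithin] with ε hε
  apply key
  constructor
  · simpa using hs2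
  · simpa using hε

lemma midT_zero (a : ℝ) (n : ℕ) : midT a n 0 = 0 := by
  unfold midT; simp; ring

lemma hurwitz_zero {a : ℝ} (ha : 0 < a) (ha' : a ≤ 1) :
    hurwitzZeta (a : UnitAddCircle) 0 = ((1/2 - a : ℝ) : ℂ) := by
  have := hurwitz_eq_midF ha ha' (σ := 0) (by norm_num) (by norm_num)
  rw [Complex.ofReal_zero] at this
  rw [this, midF]
  simp [midT_zero]
  ring

/-- real version -/
noncomputable def midTr (a : ℝ) (n : ℕ) (s : ℝ) : ℝ :=
  (n + 1 + a) ^ (-s) - ((n + 1 + a + 1/2) ^ (1 - s) - (n + 1 + a - 1/2) ^ (1 - s)) / (1 - s)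

noncomputable def midFr (a : ℝ) (s : ℝ) : ℝ :=
  a ^ (-s) - (a + 1/2) ^ (1 - s) / (1 - s) + ∑' n, midTr a n s

lemma midT_ofReal {a : ℝ} (ha : 0 < a) (n : ℕ) (s : ℝ) : midT a n s = (midTr a n s : ℂ) := by
  have hn : (0 : ℝ) ≤ n := n.cast_nonneg
  unfold midT midTr
  have e1 := Complex.ofReal_cpow (show 0 ≤ (n + 1 + a : ℝ) by linarith) (-s)
  have e2 := Complex.ofReal_cpow (show 0 ≤ (n + 1 + a + 1/2 : ℝ) by linarith) (1 - s)
  have e3 := Complex.ofReal_cpow (show 0 ≤ (n + 1 + a - 1/2 : ℝ) by linarith) (1 - s)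
  rw [Complex.ofReal_sub (_ ^ _), Complex.ofReal_div (_ - _), Complex.ofReal_sub (_ ^ _), e1, e2, e3]
  push_cast
  rfl

lemma midF_ofReal {a : ℝ} (ha : 0 < a) (s : ℝ) : midF a s = (midFr a s : ℂ) := by
  unfold midF midFr
  simp only [midT_ofReal ha]
  have e1 := Complex.ofReal_cpow ha.le (-s)
  have e2 := Complex.ofReal_cpow (show 0 ≤ (a + 1/2 : ℝ) by linarith) (1 - s)
  rw [Complex.ofReal_add (_ - _), Complex.ofReal_sub (_ ^ _), Complex.ofReal_div (_ ^ _), e1, e2,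
    Complex.ofReal_tsum]
  push_cast
  rfl

lemma midTr_nonpos {a : ℝ} (ha : 0 < a) (n : ℕ) {s : ℝ} (hs0 : 0 < s) (hs1 : s < 1) :
    midTr a n s ≤ 0 := by
  have hn : (0 : ℝ) ≤ n := n.cast_nonneg
  set c : ℝ := n + 1 + a with hc
  have hpos : ∀ x ∈ uIcc (c - 1/2) (c + 1/2), 0 < x := by
    intro x hx
    rw [uIcc_of_le (by linarith)] at hx
    linarith [hx.1]
  have hcont : ContinuousOn (fun x : ℝ => x ^ (-s)) (uIcc (c - 1/2) (c + 1/2)) := fun x hx =>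
    (Real.continuousAt_rpow_const _ _ (Or.inl (hpos x hx).ne')).continuousWithinAt
  have hi : ∫ x in (c - 1/2)..(c + 1/2), x ^ (-s) =
      ((c + 1/2) ^ (1 - s) - (c - 1/2) ^ (1 - s)) / (1 - s) := by
    rw [integral_rpow (Or.inl (by linarith))]
    rw [show -s + 1 = 1 - s by ring]
  have htan : ∀ x ∈ Icc (c - 1/2) (c + 1/2), c ^ (-s) - s * c ^ (-s - 1) * (x - c) ≤ x ^ (-s) := by
    intro x hx
    have hc0 : 0 < c := by linarith
    have hx0 : 0 < x := by linarith [hx.1]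
    have h : 1 + -s * (x / c - 1) ≤ (x / c) ^ (-s) := by
      have hy := div_pos hx0 hc0
      rw [Real.rpow_def_of_pos hy]
      have h1 := Real.add_one_le_exp (Real.log (x / c) * -s)
      have h2 := Real.log_le_sub_one_of_pos hy
      nlinarith
    rw [Real.div_rpow hx0.le hc0.le, le_div_iff₀ (by positivity)] at h
    rw [Real.rpow_sub_one hc0.ne']
    refine le_trans (le_of_eq ?_) h
    field_simp
    ring
  have hm := intervalIntegral.integral_mono_on (a := c - 1/2) (b := c + 1/2) (μ := MeasureTheory.volume)
    (by linarith) (by apply Continuous.intervalIntegrable; fun_prop) hcont.intervalIntegrable htan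
  have hl : ∫ x in (c - 1/2)..(c + 1/2), (c ^ (-s) - s * c ^ (-s - 1) * (x - c)) = c ^ (-s) := by
    rw [intervalIntegral.integral_sub (by simp) (by apply Continuous.intervalIntegrable; fun_prop),
      intervalIntegral.integral_const_mul, intervalIntegral.integral_sub (by simp) (by simp),
      integral_id]
    simp
    ring_nf
  unfold midTr
  rw [← hc, ← hi]
  linarith

lemma midFr_neg {a : ℝ} (ha : 1/2 ≤ a) {s : ℝ} (hs0 : 0 < s) (hs1 : s < 1) : midFr a s < 0 := by
  have ha0 : 0 < a := by linarith
  have h1 : ∑' n, midTr a n s ≤ 0 := tsum_nonpos fun n => midTr_nonpos ha0 n hs0 hs1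
  have h2 : a ^ (-s) < (a + 1/2) ^ (1 - s) / (1 - s) := by
    rw [lt_div_iff₀ (by linarith)]
    have h3 : 1 - s < (2 : ℝ) ^ (-s) := by
      have := Real.add_one_lt_exp (x := -s * Real.log 2)
        (by have := Real.log_pos (by norm_num : (1:ℝ) < 2); nlinarith)
      rw [Real.rpow_def_of_pos (by norm_num)]
      rw [mul_comm (Real.log 2)]
      have h4 := Real.log_two_lt_d9
      nlinarith
    have h5 : (2 : ℝ) ^ (-s) * a ^ (-s) ≤ (a + 1/2) ^ (-s) := by
      rw [← Real.mul_rpow (by norm_num) ha0.le]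
      exact Real.rpow_le_rpow_of_nonpos (by linarith) (by linarith) (by linarith)
    have h6 : (a + 1/2) ^ (-s) ≤ (a + 1/2) ^ (1 - s) :=
      Real.rpow_le_rpow_of_exponent_le (by linarith) (by linarith)
    have h7 : 0 < a ^ (-s) := by positivity
    nlinarith
  unfold midFr
  linarith


lemma bern_zero_odd (k : ℕ) : bernoulliFun (2 * k + 3) 0 = 0 := by
  rw [bernoulliFun_eval_zero, bernoulli_eq_zero_of_odd ⟨k + 1, by ring⟩ (by omega)]
  simp

lemma bern_half_odd (k : ℕ) : bernoulliFun (2 * k + 3) (1/2) = 0 := by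
  have := bernoulliFun_eval_half_eq_zero (k + 1)
  rw [one_div, show 2 * k + 3 = 2 * (k + 1) + 1 by ring]
  exact this

lemma bern_step (k : ℕ) (ε : ℝ) (hA : ∀ x ∈ Ioo (0:ℝ) (1/2), 0 < ε * bernoulliFun (2 * k + 1) x) :
    StrictMonoOn (fun x => ε * bernoulliFun (2 * k + 2) x) (Icc 0 (1/2)) ∧
    (∃ b ∈ Ioo (0:ℝ) (1/2), ε * bernoulliFun (2 * k + 2) b = 0) ∧
    ∀ x ∈ Ioo (0:ℝ) (1/2), ε * bernoulliFun (2 * k + 3) x < 0 := by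
  have hd2 : ∀ x, HasDerivAt (fun x => ε * bernoulliFun (2 * k + 2) x)
      (ε * ((2 * k + 2 : ℕ) * bernoulliFun (2 * k + 1) x)) x := fun x =>
    (hasDerivAt_bernoulliFun (2 * k + 2) x).const_mul ε
  have hd3 : ∀ x, HasDerivAt (fun x => ε * bernoulliFun (2 * k + 3) x)
      (ε * ((2 * k + 3 : ℕ) * bernoulliFun (2 * k + 2) x)) x := fun x =>
    (hasDerivAt_bernoulliFun (2 * k + 3) x).const_mul ε
  have hc2 : Continuous (fun x => ε * bernoulliFun (2 * k + 2) x) := by fun_prop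
  have hc3 : Continuous (fun x => ε * bernoulliFun (2 * k + 3) x) := by fun_prop
  have hmono : StrictMonoOn (fun x => ε * bernoulliFun (2 * k + 2) x) (Icc 0 (1/2)) := by
    apply strictMonoOn_of_deriv_pos (convex_Icc _ _) hc2.continuousOn
    intro x hx
    rw [interior_Icc] at hx
    rw [(hd2 x).deriv]
    have := hA x hx
    have h2 : (0 : ℝ) < (2 * k + 2 : ℕ) := by positivity
    nlinarith
  have hpos3 : (0 : ℝ) < (2 * k + 3 : ℕ) := by positivity
  have h0 : ε * bernoulliFun (2 * k + 3) 0 = 0 := by rw [bern_zero_odd]; simp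
  have h12 : ε * bernoulliFun (2 * k + 3) (1/2) = 0 := by rw [bern_half_odd]; simp
  obtain ⟨b, hb, hb0⟩ := exists_hasDerivAt_eq_zero (f := fun x => ε * bernoulliFun (2 * k + 3) x)
    (by norm_num : (0:ℝ) < 1/2) hc3.continuousOn (by simp only [h0, h12])
    (fun x _ => hd3 x)
  have hb0' : ε * bernoulliFun (2 * k + 2) b = 0 := by
    rcases mul_eq_zero.mp hb0 with h | h
    · simp [h]
    · rcases mul_eq_zero.mp h with h | h
      · exact absurd h hpos3.ne'
      · simp [h]
  refine ⟨hmono, ⟨b, hb, hb0'⟩, ?_⟩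
  intro x hx
  have hbm : b ∈ Icc (0:ℝ) (1/2) := ⟨hb.1.le, hb.2.le⟩
  rcases le_or_gt x b with hxb | hxb
  · have hanti : StrictAntiOn (fun x => ε * bernoulliFun (2 * k + 3) x) (Icc 0 b) := by
      apply strictAntiOn_of_deriv_neg (convex_Icc _ _) hc3.continuousOn
      intro y hy
      rw [interior_Icc] at hy
      rw [(hd3 y).deriv]
      have := hmono (show y ∈ Icc (0:ℝ) (1/2) from ⟨hy.1.le, by linarith [hy.2, hb.2]⟩) hbm hy.2
      simp only [hb0'] at this
      nlinarith
    have := hanti (left_mem_Icc.mpr hb.1.le) ⟨hx.1.le, hxb⟩ hx.1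
    simpa only [h0] using this
  · have hmon : StrictMonoOn (fun x => ε * bernoulliFun (2 * k + 3) x) (Icc b (1/2)) := by
      apply strictMonoOn_of_deriv_pos (convex_Icc _ _) hc3.continuousOn
      intro y hy
      rw [interior_Icc] at hy
      rw [(hd3 y).deriv]
      have := hmono hbm (show y ∈ Icc (0:ℝ) (1/2) from ⟨by linarith [hy.1, hb.1], hy.2.le⟩) hy.1
      simp only [hb0'] at this
      nlinarith
    have := hmon ⟨hxb.le, hx.2.le⟩ (right_mem_Icc.mpr hb.2.le) hx.2
    simpa only [h12] using this

lemma bern_odd (k : ℕ) : ∃ ε : ℝ, ∀ x ∈ Ioo (0:ℝ) (1/2), 0 < ε * bernoulliFun (2 * k + 1) x := by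
  induction k with
  | zero =>
    refine ⟨-1, fun x hx => ?_⟩
    simp only [mul_zero, zero_add, bernoulliFun_one]
    linarith [hx.2]
  | succ k ih =>
    obtain ⟨ε, h⟩ := ih
    refine ⟨-ε, fun x hx => ?_⟩
    have := (bern_step k ε h).2.2 x hx
    rw [show 2 * (k + 1) + 1 = 2 * k + 3 by ring]
    linarith

open MeasureTheory in
lemma I_neg (f : ℝ → ℝ) (hf : Continuous f) (hper : Function.Periodic f 1)
    (hmean : ∫ x in (0:ℝ)..1, f x = 0) {w : ℝ} (hw : 0 < w) (a t0 q : ℝ) (ht0 : 0 ≤ t0)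
    (hq0 : 0 < q) (hq1 : q < 1) (h1 : ∀ t ∈ Icc 0 t0, f (a - t) ≤ f a) (h2 : 0 ≤ f a)
    (h3 : ∀ u ∈ Ioo 0 q, f (a - t0 - u) < 0) (h4 : ∀ u ∈ Icc q 1, 0 ≤ f (a - t0 - u))
    (hint : IntegrableOn (fun t => (f (a - t) - f a) * t ^ (-w - 1)) (Ioi 0)) :
    ∫ t in Ioi (0:ℝ), (f (a - t) - f a) * t ^ (-w - 1) < 0 := by
  set φ : ℝ → ℝ := fun t => (f (a - t) - f a) * t ^ (-w - 1) with hφ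
  have hii : ∀ x y : ℝ, 0 ≤ x → 0 ≤ y → IntervalIntegrable φ volume x y := by
    intro x y hx hy
    rw [intervalIntegrable_iff]
    refine hint.mono_set ?_
    intro z hz
    rw [mem_uIoc] at hz
    simp only [mem_Ioi]
    rcases hz with hz | hz <;> linarith [hz.1]
  have hinit : ∫ t in (0:ℝ)..t0, φ t ≤ 0 := by
    have : 0 ≤ ∫ t in (0:ℝ)..t0, - φ t := by
      apply intervalIntegral.integral_nonneg ht0
      intro t ht
      have h5 := h1 t ht
      have h6 : 0 ≤ t ^ (-w - 1) := Real.rpow_nonneg ht.1 _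
      simp only [hφ]
      nlinarith
    rw [intervalIntegral.integral_neg] at this
    linarith
  have hψ : ∀ k : ℕ, ∀ W : ℝ, ∫ t in (t0 + k : ℝ)..(t0 + k + 1 : ℝ), f (a - t) * W = 0 := by
    intro k W
    rw [intervalIntegral.integral_mul_const, intervalIntegral.integral_comp_sub_left (fun x => f x)]
    have := hper.intervalIntegral_add_eq (a - (t0 + k + 1)) 0
    rw [zero_add, hmean, show a - (t0 + k + 1) + 1 = a - (t0 + k) by ring] at this
    rw [this, zero_mul]
  have hper' : ∀ (k : ℕ) (t : ℝ), f (a - t) = f (a - t0 - (t - t0 - k)) := by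
    intro k t
    have := (hper.nat_mul k) (a - t)
    rw [← this]; congr 1; ring
  have hle : ∀ (k : ℕ) (t : ℝ), t ∈ Ioo (t0 + k : ℝ) (t0 + k + 1) →
      φ t ≤ f (a - t) * (t0 + k + q) ^ (-w - 1) := by
    intro k t ht
    have hk : (0 : ℝ) ≤ k := k.cast_nonneg
    have ht' : 0 < t := by linarith [ht.1]
    have hW : 0 ≤ t ^ (-w - 1) := by positivity
    have s1 : φ t ≤ f (a - t) * t ^ (-w - 1) := by
      simp only [hφ]; nlinarith
    refine s1.trans ?_
    rcases lt_or_ge (t - t0 - k) q with hlt | hge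
    · have hf := h3 (t - t0 - k) ⟨by linarith [ht.1], hlt⟩
      rw [← hper' k t] at hf
      exact mul_le_mul_of_nonpos_left
        (Real.rpow_le_rpow_of_nonpos ht' (by linarith) (by linarith)) hf.le
    · have hf := h4 (t - t0 - k) ⟨hge, by linarith [ht.2]⟩
      rw [← hper' k t] at hf
      exact mul_le_mul_of_nonneg_left
        (Real.rpow_le_rpow_of_nonpos (by positivity) (by linarith) (by linarith)) hf
  have hψi : ∀ W x y : ℝ, IntervalIntegrable (fun t => f (a - t) * W) volume x y := by
    intro W x y
    apply Continuous.intervalIntegrable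
    fun_prop
  have hk : ∀ k : ℕ, ∫ t in (t0 + k : ℝ)..(t0 + k + 1 : ℝ), φ t ≤ 0 := by
    intro k
    have hk : (0 : ℝ) ≤ k := k.cast_nonneg
    rw [← hψ k ((t0 + k + q) ^ (-w - 1))]
    exact intervalIntegral.integral_mono_on_of_le_Ioo (by linarith)
      (hii _ _ (by linarith) (by linarith)) (hψi _ _ _) (fun t ht => hle k t ht)
  have h0 : ∫ t in t0..(t0 + 1), φ t < 0 := by
    have e := hψ 0 ((t0 + q) ^ (-w - 1))
    simp only [Nat.cast_zero, add_zero] at e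
    have hle0 := hle 0
    simp only [Nat.cast_zero, add_zero] at hle0
    have s1 : 0 < ∫ t in t0..(t0 + q), (f (a - t) * (t0 + q) ^ (-w - 1) - φ t) := by
      apply intervalIntegral.intervalIntegral_pos_of_pos_on
      · exact (hψi _ _ _).sub (hii _ _ ht0 (by linarith))
      · intro t ht
        have ht' : 0 < t := by linarith [ht.1]
        have hf := h3 (t - t0) ⟨by linarith [ht.1], by linarith [ht.2]⟩
        rw [show a - t0 - (t - t0) = a - t by ring] at hf
        have hlt : (t0 + q) ^ (-w - 1) < t ^ (-w - 1) :=
          Real.rpow_lt_rpow_of_neg ht' ht.2 (by linarith)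
        have hW : 0 ≤ t ^ (-w - 1) := by positivity
        simp only [hφ]
        nlinarith
      · linarith
    rw [intervalIntegral.integral_sub (hψi _ _ _) (hii _ _ ht0 (by linarith))] at s1
    have s2 : ∫ t in (t0 + q)..(t0 + 1), φ t ≤
        ∫ t in (t0 + q)..(t0 + 1), f (a - t) * (t0 + q) ^ (-w - 1) :=
      intervalIntegral.integral_mono_on_of_le_Ioo (by linarith)
        (hii _ _ (by linarith) (by linarith)) (hψi _ _ _)
        (fun t ht => hle0 t ⟨by linarith [ht.1], ht.2⟩)
    rw [← intervalIntegral.integral_add_adjacent_intervals (b := t0 + q) (hψi _ _ _) (hψi _ _ _)] at e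
    rw [← intervalIntegral.integral_add_adjacent_intervals (b := t0 + q)
      (hii _ _ ht0 (by linarith)) (hii _ _ (by linarith) (by linarith))]
    linarith
  have hlim : Filter.Tendsto (fun k : ℕ => ∫ t in (0:ℝ)..(t0 + 1 + k), φ t) Filter.atTop
      (nhds (∫ t in Ioi (0:ℝ), φ t)) :=
    intervalIntegral_tendsto_integral_Ioi 0 hint
      (Filter.tendsto_atTop_add_const_left _ _ tendsto_natCast_atTop_atTop)
  have hbound : ∀ k : ℕ, ∫ t in (0:ℝ)..(t0 + 1 + k), φ t ≤ ∫ t in t0..(t0 + 1), φ t := by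
    intro k
    induction k with
    | zero =>
      simp only [Nat.cast_zero, add_zero]
      rw [← intervalIntegral.integral_add_adjacent_intervals (b := t0)
        (hii _ _ le_rfl ht0) (hii _ _ ht0 (by linarith))]
      linarith
    | succ k ih =>
      have hk0 : (0 : ℝ) ≤ k := k.cast_nonneg
      rw [← intervalIntegral.integral_add_adjacent_intervals (b := t0 + 1 + k)
        (hii _ _ le_rfl (by linarith)) (hii _ _ (by linarith) (by push_cast; linarith))]
      have := hk (k + 1)
      push_cast at this ⊢
      rw [show t0 + 1 + (k : ℝ) = t0 + (k + 1) by ring,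
        show t0 + 1 + ((k : ℝ) + 1) = t0 + (k + 1) + 1 by ring] at *
      linarith
  exact lt_of_le_of_lt (le_of_tendsto' hlim hbound) h0


lemma per_symm (n : ℕ) (G : ℝ → ℝ) (hper : Function.Periodic G 1)
    (hG : ∀ x ∈ Icc (0:ℝ) 1, G x = bernoulliFun n x) (x : ℝ) : G (-x) = (-1) ^ n * G x := by
  have h1 : G x = G (Int.fract x) := by
    have := hper.sub_int_mul_eq (x := x) ⌊x⌋
    rw [mul_one] at this
    exact this.symm
  have h2 : G (-x) = G (1 - Int.fract x) := by
    have := hper.sub_int_mul_eq (x := 1 - Int.fract x) (⌊x⌋ + 1)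
    rw [← this]
    congr 1
    unfold Int.fract
    push_cast
    ring
  have h3 := Int.fract_nonneg x
  have h4 := (Int.fract_lt_one x).le
  rw [h1, h2, hG _ ⟨by linarith, by linarith⟩, hG _ ⟨h3, h4⟩, bernoulliFun_eval_one_sub]

open MeasureTheory in
lemma even_case (g : ℝ → ℝ) (hf : Continuous g) (hper : Function.Periodic g 1)
    (hmean : ∫ x in (0:ℝ)..1, g x = 0) {w : ℝ} (hw : 0 < w) (a b : ℝ)
    (hint : IntegrableOn (fun t => (g (a - t) - g a) * t ^ (-w - 1)) (Ioi 0))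
    (hmono : StrictMonoOn g (Icc 0 (1/2))) (hb : b ∈ Ioo (0:ℝ) (1/2)) (hgb : g b = 0)
    (heven : ∀ x, g (-x) = g x) (ha : a ∈ Icc b (1/2) ∨ a ∈ Icc (1 - b) 1) :
    ∫ t in Ioi (0:ℝ), (g (a - t) - g a) * t ^ (-w - 1) ≠ 0 := by
  obtain ⟨hb0, hb1⟩ := hb
  have hbm : b ∈ Icc (0:ℝ) (1/2) := ⟨hb0.le, hb1.le⟩
  have hs : ∀ x, g (1 - x) = g x := fun x => by
    rw [← heven x, ← hper (-x)]; congr 1; ring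
  have hA0 : ∀ x, 0 ≤ x → x < b → g x < 0 := fun x h0 h1 => by
    rw [← hgb]; exact hmono ⟨h0, by linarith⟩ hbm h1
  have hA : ∀ x, -b < x → x < b → g x < 0 := fun x h0 h1 => by
    rcases le_total 0 x with h | h
    · exact hA0 x h h1
    · rw [← heven]; exact hA0 _ (by linarith) (by linarith)
  have hB0 : ∀ x, b < x → x ≤ 1/2 → 0 < g x := fun x h0 h1 => by
    rw [← hgb]; exact hmono hbm ⟨by linarith, h1⟩ h0
  have hB : ∀ x, b < x → x < 1 - b → 0 < g x := fun x h0 h1 => by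
    rcases le_total x (1/2) with h | h
    · exact hB0 x h0 h
    · rw [← hs]; exact hB0 _ (by linarith) (by linarith)
  have hAc : ∀ x, -b ≤ x → x ≤ b → g x ≤ 0 := fun x h0 h1 => by
    rcases h0.eq_or_lt with h | h
    · rw [← h, heven, hgb]
    · rcases h1.eq_or_lt with h' | h'
      · rw [h', hgb]
      · exact (hA x h h').le
  have hBc : ∀ x, b ≤ x → x ≤ 1 - b → 0 ≤ g x := fun x h0 h1 => by
    rcases h0.eq_or_lt with h | h
    · rw [← h, hgb]
    · rcases h1.eq_or_lt with h' | h'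
      · rw [h', hs, hgb]
      · exact (hB x h h').le
  rcases ha with ⟨h1, h2⟩ | ⟨h1, h2⟩
  · refine (I_neg g hf hper hmean hw a (a - b) (2 * b) (by linarith) (by linarith) (by linarith)
      ?_ (hBc a h1 (by linarith)) ?_ ?_ hint).ne
    · intro t ht
      exact hmono.monotoneOn ⟨by linarith [ht.2], by linarith [ht.1]⟩ ⟨by linarith, h2⟩
        (by linarith [ht.1])
    · intro u hu
      exact hA _ (by linarith [hu.2]) (by linarith [hu.1])
    · intro u hu
      rw [← heven]
      exact hBc _ (by linarith [hu.1]) (by linarith [hu.2])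
  · have key := I_neg (fun x => - g x) hf.neg (fun x => by simp only [hper x])
      (by rw [intervalIntegral.integral_neg, hmean, neg_zero]) hw a (a - (1 - b)) (1 - 2 * b)
      (by linarith) (by linarith) (by linarith) ?_ ?_ ?_ ?_ ?_
    · intro h
      have : (fun t : ℝ => (-g (a - t) - -g a) * t ^ (-w - 1)) =
          fun t => -((g (a - t) - g a) * t ^ (-w - 1)) := by funext t; ring
      rw [this, integral_neg, h] at key
      simp at key
    · intro t ht
      rw [neg_le_neg_iff, ← hs a, ← hs (a - t)]
      exact hmono.monotoneOn ⟨by linarith, by linarith⟩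
        ⟨by linarith [ht.1], by linarith [ht.2]⟩ (by linarith [ht.1])
    · have := hAc (1 - a) (by linarith) (by linarith)
      rw [hs] at this
      linarith
    · intro u hu
      have := hB (a - (a - (1 - b)) - u) (by linarith [hu.2]) (by linarith [hu.1])
      linarith
    · intro u hu
      have := hAc (a - (a - (1 - b)) - u) (by linarith [hu.2]) (by linarith [hu.1])
      linarith
    · have : (fun t : ℝ => (-g (a - t) - -g a) * t ^ (-w - 1)) =
          fun t => -((g (a - t) - g a) * t ^ (-w - 1)) := by funext t; ring
      rw [this]
      exact hint.neg

open MeasureTheory in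
lemma odd_case (g : ℝ → ℝ) (hf : Continuous g) (hper : Function.Periodic g 1)
    (hmean : ∫ x in (0:ℝ)..1, g x = 0) {w : ℝ} (hw : 0 < w) (a b : ℝ)
    (hint : IntegrableOn (fun t => (g (a - t) - g a) * t ^ (-w - 1)) (Ioi 0))
    (hanti : AntitoneOn g (Icc 0 b)) (hmono : MonotoneOn g (Icc b (1/2)))
    (hb : b ∈ Ioo (0:ℝ) (1/2)) (hg0 : g 0 = 0) (hg1 : g (1/2) = 0)
    (hneg : ∀ x ∈ Ioo (0:ℝ) (1/2), g x < 0)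
    (hodd : ∀ x, g (-x) = - g x) (ha : a ∈ Ioc 0 b ∨ a ∈ Icc (1/2) (1 - b) ∨ a = 1) :
    ∫ t in Ioi (0:ℝ), (g (a - t) - g a) * t ^ (-w - 1) ≠ 0 := by
  obtain ⟨hb0, hb1⟩ := hb
  have hs : ∀ x, g (1 - x) = - g x := fun x => by
    rw [← hodd x, ← hper (-x)]; congr 1; ring
  have hnegc : ∀ x ∈ Icc (0:ℝ) (1/2), g x ≤ 0 := fun x hx => by
    rcases hx.1.eq_or_lt with h | h
    · rw [← h, hg0]
    · rcases hx.2.eq_or_lt with h' | h'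
      · rw [h', hg1]
      · exact (hneg x ⟨h, h'⟩).le
  have main : ∀ t0, 0 ≤ t0 → (∀ u, g (a - t0 - u) = g (-u)) → 
      (∀ t ∈ Icc 0 t0, g a ≤ g (a - t)) → g a ≤ 0 → 
      ∫ t in Ioi (0:ℝ), (g (a - t) - g a) * t ^ (-w - 1) ≠ 0 := by
    intro t0 ht0 hu h1 h2
    have this : (fun t : ℝ => (-g (a - t) - -g a) * t ^ (-w - 1)) =
          fun t => -((g (a - t) - g a) * t ^ (-w - 1)) := by funext t; ring
    have key := I_neg (fun x => - g x) hf.neg (fun x => by simp only [hper x])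
      (by rw [intervalIntegral.integral_neg, hmean, neg_zero]) hw a t0 (1/2)
      ht0 (by norm_num) (by norm_num) (fun t ht => neg_le_neg (h1 t ht)) (by linarith)
      (fun u hu' => by rw [hu, hodd]; have := hneg u hu'; linarith) 
      (fun u hu' => by 
        rw [hu, hodd]
        have := hnegc (1 - u) ⟨by linarith [hu'.2], by linarith [hu'.1]⟩
        rw [hs] at this
        linarith) (by rw [this]; exact hint.neg)
    intro h
    rw [this, integral_neg, h] at key
    simp at key
  rcases ha with ⟨h1, h2⟩ | ⟨h1, h2⟩ | h1
  · refine main a h1.le (fun u => by rw [sub_self, zero_sub]) ?_ (hnegc a ⟨h1.le, by linarith⟩)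
    intro t ht
    exact hanti ⟨by linarith [ht.2], by linarith [ht.1]⟩ ⟨h1.le, h2⟩ (by linarith [ht.1])
  · refine (I_neg g hf hper hmean hw a (a - 1/2) (1/2) (by linarith) (by norm_num) (by norm_num)
      ?_ ?_ ?_ ?_ hint).ne
    · intro t ht
      have := hmono (a := 1 - a) (b := 1 - (a - t)) ⟨by linarith, by linarith⟩
        ⟨by linarith [ht.1], by linarith [ht.2]⟩ (by linarith [ht.1])
      rw [hs, hs] at this
      linarith
    · have := hnegc (1 - a) ⟨by linarith, by linarith⟩
      rw [hs] at this
      linarith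
    · intro u hu
      exact hneg _ ⟨by linarith [hu.2], by linarith [hu.1]⟩
    · intro u hu
      have := hnegc (-(a - (a - 1/2) - u)) ⟨by linarith [hu.1], by linarith [hu.2]⟩
      rw [hodd] at this
      linarith
  · subst h1
    refine main 0 le_rfl (fun u => ?_) ?_ ?_
    · rw [← hper (-u)]; congr 1; ring
    · intro t ht
      have : t = 0 := le_antisymm ht.2 ht.1
      simp [this]
    · have := hs 0
      rw [sub_zero, hg0] at this
      simp [this]

open MeasureTheory in
lemma I_ne_zero (M : ℕ) (hM : 1 ≤ M) (G : ℝ → ℝ) (hf : Continuous G) (hper : Function.Periodic G 1)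
    (hG : ∀ x ∈ Icc (0:ℝ) 1, G x = bernoulliFun (M + 1) x) {w : ℝ} (hw : 0 < w) (a : ℝ)
    (ha : 0 < a) (ha' : a ≤ 1)
    (hint : IntegrableOn (fun t => (G (a - t) - G a) * t ^ (-w - 1)) (Ioi 0))
    (hB : 0 ≤ bernoulliFun M a * bernoulliFun (M + 1) a) :
    ∫ t in Ioi (0:ℝ), (G (a - t) - G a) * t ^ (-w - 1) ≠ 0 := by
  have hmean : ∫ x in (0:ℝ)..1, G x = 0 := by
    refine Eq.trans ?_ (integral_bernoulliFun_eq_zero (k := M + 1) (by omega))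
    apply intervalIntegral.integral_congr
    intro x hx
    rw [uIcc_of_le zero_le_one] at hx
    exact hG x hx
  have hsym := per_symm (M + 1) G hper hG
  have red : ∀ ε : ℝ, ∫ t in Ioi (0:ℝ), (ε * G (a - t) - ε * G a) * t ^ (-w - 1) ≠ 0 →
      ∫ t in Ioi (0:ℝ), (G (a - t) - G a) * t ^ (-w - 1) ≠ 0 := by
    intro ε h h'
    apply h
    have : (fun t : ℝ => (ε * G (a - t) - ε * G a) * t ^ (-w - 1)) =
          fun t => ε * ((G (a - t) - G a) * t ^ (-w - 1)) := by funext t; ring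
    rw [this, integral_const_mul, h', mul_zero]
  have hint' : ∀ ε : ℝ, 
      IntegrableOn (fun t => (ε * G (a - t) - ε * G a) * t ^ (-w - 1)) (Ioi 0) := by
    intro ε
    have : (fun t : ℝ => (ε * G (a - t) - ε * G a) * t ^ (-w - 1)) =
          fun t => ε * ((G (a - t) - G a) * t ^ (-w - 1)) := by funext t; ring
    rw [this]
    exact hint.const_mul ε
  have hper' : ∀ ε : ℝ, Function.Periodic (fun x => ε * G x) 1 := fun ε x => by simp only [hper x]
  have hmean' : ∀ ε : ℝ, ∫ x in (0:ℝ)..1, ε * G x = 0 := fun ε => by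
    rw [intervalIntegral.integral_const_mul, hmean, mul_zero]
  rcases Nat.even_or_odd' M with ⟨k', hk | hk⟩
  · skip
    obtain ⟨k, rfl⟩ : ∃ k, k' = k + 1 := ⟨k' - 1, by omega⟩
    obtain rfl : M = 2 * k + 2 := by omega
    obtain ⟨ε, hε⟩ := bern_odd k
    obtain ⟨hmono, ⟨b, hb, hb0⟩, hneg⟩ := bern_step k ε hε
    have hbm : b ∈ Icc (0:ℝ) (1/2) := ⟨hb.1.le, hb.2.le⟩
    have hε0 : ε ≠ 0 := by
      rintro rfl
      have := hε (1/4) ⟨by norm_num, by norm_num⟩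
      simp at this
    have hε2 : 0 < ε ^ 2 := by positivity
    have hB' : 0 ≤ (ε * bernoulliFun (2 * k + 2) a) * (ε * bernoulliFun (2 * k + 3) a) := by
      have : 0 ≤ ε ^ 2 * (bernoulliFun (2 * k + 2) a * bernoulliFun (2 * k + 2 + 1) a) :=
        mul_nonneg hε2.le hB
      calc _ ≤ _ := this
        _ = _ := by ring
    have hs2 : ∀ x, bernoulliFun (2 * k + 2) (1 - x) = bernoulliFun (2 * k + 2) x := fun x => by
      rw [bernoulliFun_eval_one_sub, Even.neg_one_pow ⟨k + 1, by ring⟩, one_mul]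
    have hs3 : ∀ x, bernoulliFun (2 * k + 3) (1 - x) = - bernoulliFun (2 * k + 3) x := fun x => by
      rw [bernoulliFun_eval_one_sub, Odd.neg_one_pow ⟨k + 1, by ring⟩, neg_one_mul]
    have hd3 : ∀ x, HasDerivAt (fun x => ε * bernoulliFun (2 * k + 3) x)
      (ε * ((2 * k + 3 : ℕ) * bernoulliFun (2 * k + 2) x)) x := fun x =>
      (hasDerivAt_bernoulliFun (2 * k + 3) x).const_mul ε
    have hc3 : Continuous (fun x => ε * bernoulliFun (2 * k + 3) x) := by fun_prop
    have hpos3 : (0 : ℝ) < (2 * k + 3 : ℕ) := by positivity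
    refine red ε (odd_case (fun x => ε * G x) (by fun_prop) (hper' ε) (hmean' ε) hw a b (hint' ε)
      ?_ ?_ hb ?_ ?_ ?_ ?_ ?_)
    · have hanti : AntitoneOn (fun x => ε * bernoulliFun (2 * k + 3) x) (Icc 0 b) := by
        apply antitoneOn_of_deriv_nonpos (convex_Icc _ _) hc3.continuousOn
          (fun x _ => (hd3 x).differentiableAt.differentiableWithinAt)
        intro y hy
        rw [interior_Icc] at hy
        rw [(hd3 y).deriv]
        have := hmono (show y ∈ Icc (0:ℝ) (1/2) from ⟨hy.1.le, by linarith [hy.2, hb.2]⟩) hbm hy.2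
        simp only [hb0] at this
        nlinarith
      refine hanti.congr ?_
      intro x hx
      simp only [hG x ⟨hx.1, by linarith [hx.2, hb.2]⟩]
    · have hmon : MonotoneOn (fun x => ε * bernoulliFun (2 * k + 3) x) (Icc b (1/2)) := by
        apply monotoneOn_of_deriv_nonneg (convex_Icc _ _) hc3.continuousOn
          (fun x _ => (hd3 x).differentiableAt.differentiableWithinAt)
        intro y hy
        rw [interior_Icc] at hy
        rw [(hd3 y).deriv]
        have := hmono hbm (show y ∈ Icc (0:ℝ) (1/2) from ⟨by linarith [hy.1, hb.1], hy.2.le⟩) hy.1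
        simp only [hb0] at this
        nlinarith
      refine hmon.congr ?_
      intro x hx
      simp only [hG x ⟨by linarith [hx.1, hb.1], by linarith [hx.2]⟩]
    · rw [hG 0 (by norm_num), bern_zero_odd, mul_zero]
    · rw [hG (1/2) (by norm_num), bern_half_odd, mul_zero]
    · intro x hx
      rw [hG x ⟨hx.1.le, by linarith [hx.2]⟩]
      exact hneg x hx
    · intro x
      rw [hsym, Odd.neg_one_pow ⟨k + 1, by ring⟩]
      ring
    · by_contra hcon
      push Not at hcon
      obtain ⟨hc1, hc2, hc3⟩ := hcon
      have hab : b < a := by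
        by_contra h
        exact hc1 ⟨ha, not_lt.mp h⟩
      have ha1 : a < 1 := lt_of_le_of_ne ha' hc3
      rcases lt_or_ge a (1/2) with h | h
      · have h1 := hmono hbm ⟨ha.le, h.le⟩ hab
        simp only [hb0] at h1
        have h2 := hneg a ⟨ha, h⟩
        nlinarith
      · have h3 : 1 - b < a := by
          by_contra h'
          exact hc2 ⟨h, not_lt.mp h'⟩
        have h1 := hmono (a := 1 - a) (b := b) ⟨by linarith, by linarith⟩ hbm (by linarith)
        simp only [hb0, hs2] at h1
        have h2 := hneg (1 - a) ⟨by linarith, by linarith [hb.2]⟩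
        rw [hs3] at h2
        nlinarith
  · skip
    obtain rfl : M = 2 * k' + 1 := by omega
    obtain ⟨ε, hε⟩ := bern_odd k'
    obtain ⟨hmono, ⟨b, hb, hb0⟩, hneg⟩ := bern_step k' ε hε
    have hbm : b ∈ Icc (0:ℝ) (1/2) := ⟨hb.1.le, hb.2.le⟩
    have hε0 : ε ≠ 0 := by
      rintro rfl
      have := hε (1/4) ⟨by norm_num, by norm_num⟩
      simp at this
    have hε2 : 0 < ε ^ 2 := by positivity
    have hB' : 0 ≤ (ε * bernoulliFun (2 * k' + 1) a) * (ε * bernoulliFun (2 * k' + 2) a) := by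
      have : 0 ≤ ε ^ 2 * (bernoulliFun (2 * k' + 1) a * bernoulliFun (2 * k' + 1 + 1) a) :=
        mul_nonneg hε2.le hB
      calc _ ≤ _ := this
        _ = _ := by ring
    have hs2 : ∀ x, bernoulliFun (2 * k' + 2) (1 - x) = bernoulliFun (2 * k' + 2) x := fun x => by
      rw [bernoulliFun_eval_one_sub, Even.neg_one_pow ⟨k' + 1, by ring⟩, one_mul]
    have hs3 : ∀ x, bernoulliFun (2 * k' + 1) (1 - x) = - bernoulliFun (2 * k' + 1) x := fun x => by
      rw [bernoulliFun_eval_one_sub, Odd.neg_one_pow ⟨k', by ring⟩, neg_one_mul]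
    refine red ε (even_case (fun x => ε * G x) (by fun_prop) (hper' ε) (hmean' ε) hw a b (hint' ε)
      ?_ hb ?_ ?_ ?_)
    · refine hmono.congr ?_
      intro x hx
      simp only [hG x ⟨hx.1, by linarith [hx.2]⟩]
    · rw [hG b ⟨hb.1.le, by linarith [hb.2]⟩]
      exact hb0
    · intro x
      rw [hsym, Even.neg_one_pow ⟨k' + 1, by ring⟩, one_mul]
    · by_contra hcon
      push Not at hcon
      obtain ⟨hc1, hc2⟩ := hcon
      have hab : a < 1 - b := by
        by_contra h
        exact hc2 ⟨not_lt.mp h, ha'⟩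
      rcases lt_or_ge a b with h | h
      · have h1 := hmono ⟨ha.le, by linarith [hb.2]⟩ hbm h
        simp only [hb0] at h1
        have h2 := hε a ⟨ha, by linarith [hb.2]⟩
        nlinarith
      · have h3 : 1/2 < a := by
          by_contra h'
          exact hc1 ⟨h, not_lt.mp h'⟩
        have h1 := hmono (a := b) (b := 1 - a) hbm ⟨by linarith, by linarith⟩ (by linarith)
        simp only [hb0, hs2] at h1
        have h2 := hε (1 - a) ⟨by linarith [hb.1], by linarith⟩
        rw [hs3] at h2
        nlinarith


open MeasureTheory Filter Topology

lemma norm_exp_bd (z : ℂ) (hz : 0 ≤ z.re) : ‖Complex.exp (-z) - 1‖ ≤ 2 * min 1 ‖z‖ := by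
  have h2 : ‖Complex.exp (-z) - 1‖ ≤ 2 := by
    refine (norm_sub_le _ _).trans ?_
    rw [Complex.norm_exp, norm_one]
    have : Real.exp (-z).re ≤ 1 := Real.exp_le_one_iff.mpr (by simpa using hz)
    linarith
  rcases le_total ‖z‖ 1 with h | h
  · rw [min_eq_right h]
    have := Complex.norm_exp_sub_one_le (x := -z) (by rwa [norm_neg])
    rwa [norm_neg] at this
  · rw [min_eq_left h]
    linarith

lemma min_int {w : ℝ} (hw0 : 0 < w) (hw1 : w < 1) :
    IntegrableOn (fun t : ℝ => min 1 t * t ^ (-w - 1)) (Ioi 0) := by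
  rw [← Ioc_union_Ioi_eq_Ioi (zero_le_one' ℝ)]
  refine IntegrableOn.union ?_ ?_
  · have h := (intervalIntegral.intervalIntegrable_rpow' (a := 0) (b := 1) (r := -w) (by linarith)).1
    refine h.congr_fun ?_ measurableSet_Ioc
    intro t ht
    simp only
    rw [min_eq_right ht.2, show -w = 1 + (-w - 1) by ring, Real.rpow_add ht.1, Real.rpow_one]
    ring_nf
  · have h := integrableOn_Ioi_rpow_of_lt (a := -w - 1) (by linarith) (zero_lt_one' ℝ)
    refine h.congr_fun ?_ measurableSet_Ioi
    intro t ht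
    simp only
    rw [min_eq_left (le_of_lt ht), one_mul]

noncomputable def Kf (w : ℝ) (r : ℂ) (t : ℝ) : ℂ :=
  (Complex.exp (-(r * t)) - 1) * ((t ^ (-w - 1) : ℝ) : ℂ)

noncomputable def KI (w : ℝ) (r : ℂ) : ℂ := ∫ t in Ioi (0:ℝ), Kf w r t

lemma Kf_meas (w : ℝ) (r : ℂ) : Measurable (Kf w r) := by
  unfold Kf
  fun_prop

lemma Kf_bd (w : ℝ) (r : ℂ) (hr : 0 ≤ r.re) (C : ℝ) (hC : ‖r‖ ≤ C) (hC1 : 1 ≤ C) (t : ℝ) 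
    (ht : 0 < t) : ‖Kf w r t‖ ≤ 2 * C * (min 1 t * t ^ (-w - 1)) := by
  unfold Kf
  have h0 : 0 ≤ t ^ (-w - 1) := (Real.rpow_pos_of_pos ht _).le
  rw [norm_mul, Complex.norm_real, Real.norm_of_nonneg h0, ← mul_assoc]
  refine mul_le_mul_of_nonneg_right ?_ h0
  refine (norm_exp_bd (r * t) ?_).trans ?_
  · simp only [Complex.mul_re, Complex.ofReal_re, Complex.ofReal_im, mul_zero, sub_zero]
    positivity
  · rw [norm_mul, Complex.norm_real, Real.norm_of_nonneg ht.le, mul_assoc]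
    refine mul_le_mul_of_nonneg_left ?_ zero_le_two
    rw [mul_comm C,
      min_mul_of_nonneg _ _ (by linarith : (0:ℝ) ≤ C)]
    refine min_le_min (by linarith) ?_
    nlinarith

lemma Kf_int {w : ℝ} (hw0 : 0 < w) (hw1 : w < 1) (r : ℂ) (hr : 0 ≤ r.re) :
    IntegrableOn (Kf w r) (Ioi 0) := by
  refine Integrable.mono' ((min_int hw0 hw1).const_mul (2 * (‖r‖ + 1))) 
    (Kf_meas w r).aestronglyMeasurable ?_
  refine (ae_restrict_iff' measurableSet_Ioi).mpr (Eventually.of_forall fun t ht => ?_)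
  exact Kf_bd w r hr _ (by linarith) (by linarith [norm_nonneg r]) t ht

lemma Kf_scale (w : ℝ) (r : ℂ) (v : ℝ) (hv : 0 < v) (t : ℝ) (ht : 0 < t) :
    Kf w (v * r) t = ((v ^ (w + 1) : ℝ) : ℂ) * Kf w r (v * t) := by
  unfold Kf
  rw [Real.mul_rpow hv.le ht.le]
  have : ((v ^ (w + 1) : ℝ) : ℂ) * ((v ^ (-w - 1) : ℝ) : ℂ) = 1 := by
    rw [← Complex.ofReal_mul, ← Real.rpow_add hv]
    simp
  push_cast
  rw [show (v : ℂ) * r * t = r * (v * t) by ring]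
  linear_combination (-(Complex.exp (-(r * (v * t))) - 1) * ((t ^ (-w - 1) : ℝ) : ℂ)) * this

lemma KI_scale (w : ℝ) (r : ℂ) (v : ℝ) (hv : 0 < v) :
    KI w (v * r) = ((v ^ w : ℝ) : ℂ) * KI w r := by
  unfold KI
  rw [setIntegral_congr_fun measurableSet_Ioi (fun t ht => Kf_scale w r v hv t ht),
    integral_const_mul, integral_comp_mul_left_Ioi (fun t => Kf w r t) 0 hv, mul_zero,
    Complex.real_smul, ← mul_assoc, ← Complex.ofReal_mul, Real.rpow_add hv, Real.rpow_one]
  congr 2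
  field_simp

lemma Kf_norm_scale (w : ℝ) (r : ℂ) (v : ℝ) (hv : 0 < v) :
    ∫ t in Ioi (0:ℝ), ‖Kf w (v * r) t‖ = v ^ w * ∫ t in Ioi (0:ℝ), ‖Kf w r t‖ := by
  have h : ∀ t ∈ Ioi (0:ℝ), ‖Kf w (v * r) t‖ = v ^ (w + 1) * ‖Kf w r (v * t)‖ := by
    intro t ht
    rw [Kf_scale w r v hv t ht, norm_mul, Complex.norm_real, Real.norm_of_nonneg (by positivity)]
  rw [setIntegral_congr_fun measurableSet_Ioi h,
    integral_const_mul, integral_comp_mul_left_Ioi (fun t => ‖Kf w r t‖) 0 hv, mul_zero,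
    smul_eq_mul, ← mul_assoc, Real.rpow_add hv, Real.rpow_one]
  congr 1
  field_simp

lemma KI_diff {w : ℝ} (hw0 : 0 < w) (hw1 : w < 1) (r : ℂ) (hr : 0 < r.re) :
    DifferentiableAt ℂ (KI w) r := by
  have hint : IntegrableOn (fun t : ℝ => t ^ (-w) * Real.exp (-(r.re / 2) * t)) (Ioi 0) := by
    have := integrableOn_rpow_mul_exp_neg_mul_rpow (p := 1) (s := -w) (b := r.re / 2)
      (by linarith) (by norm_num) (by linarith)
    simpa using this
  have hnh : Metric.ball r (r.re / 2) ∈ 𝓝 r := Metric.ball_mem_nhds _ (by linarith)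
  have hre : ∀ x ∈ Metric.ball r (r.re / 2), r.re / 2 < x.re := by
    intro x hx
    rw [Metric.mem_ball, dist_eq_norm] at hx
    have := (Complex.abs_re_le_norm (x - r)).trans_lt hx
    rw [Complex.sub_re, abs_lt] at this
    linarith [this.1]
  refine (hasDerivAt_integral_of_dominated_loc_of_deriv_le (μ := volume.restrict (Ioi (0:ℝ)))
    (F := fun x t => Kf w x t) (x₀ := r) (s := Metric.ball r (r.re / 2)) hnh
    (F' := fun x t => -(Complex.exp (-(x * t)) * ((t ^ (-w) : ℝ) : ℂ)))
    (bound := fun t => t ^ (-w) * Real.exp (-(r.re / 2) * t))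
    (Eventually.of_forall fun x => (Kf_meas w x).aestronglyMeasurable)
    (Kf_int hw0 hw1 r hr.le) ?_ ?_ hint ?_).2.differentiableAt
  · have : Measurable fun t : ℝ => -(Complex.exp (-(r * t)) * ((t ^ (-w) : ℝ) : ℂ)) := by fun_prop
    exact this.aestronglyMeasurable
  · refine (ae_restrict_iff' measurableSet_Ioi).mpr (Eventually.of_forall fun t ht x hx => ?_)
    have ht' : 0 < t := ht
    rw [norm_neg, norm_mul, Complex.norm_real, Real.norm_of_nonneg (by positivity), mul_comm,
      Complex.norm_exp]
    refine mul_le_mul_of_nonneg_left (Real.exp_le_exp.mpr ?_) (by positivity)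
    simp only [Complex.neg_re, Complex.mul_re, Complex.ofReal_re, Complex.ofReal_im, mul_zero, 
      sub_zero]
    have := hre x hx
    nlinarith
  · refine (ae_restrict_iff' measurableSet_Ioi).mpr (Eventually.of_forall fun t ht x hx => ?_)
    have ht' : 0 < t := ht
    have h1 : HasDerivAt (fun x : ℂ => Complex.exp (-(x * t))) 
        (Complex.exp (-(x * t)) * (-(1 * (t:ℂ)))) x := 
      (((hasDerivAt_id x).mul_const (t:ℂ)).neg).cexp
    have h2 := (h1.sub_const 1).mul_const ((t ^ (-w - 1) : ℝ) : ℂ)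
    unfold Kf
    refine h2.congr_deriv ?_
    rw [show t ^ (-w) = t * t ^ (-w - 1) by
      rw [show -w = 1 + (-w - 1) by ring, Real.rpow_add ht', Real.rpow_one]; ring_nf]
    push_cast
    ring

lemma KI_right {w : ℝ} (hw0 : 0 < w) (hw1 : w < 1) (r : ℂ) (hr : 0 < r.re) :
    KI w r = r ^ (w : ℂ) * KI w 1 := by
  have hopen : IsOpen {z : ℂ | 0 < z.re} := isOpen_lt continuous_const Complex.continuous_re
  have hA : AnalyticOnNhd ℂ (KI w) {z : ℂ | 0 < z.re} :=
    DifferentiableOn.analyticOnNhd (fun z hz => (KI_diff hw0 hw1 z hz).differentiableWithinAt) hopen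
  have hB : AnalyticOnNhd ℂ (fun r : ℂ => r ^ (w : ℂ) * KI w 1) {z : ℂ | 0 < z.re} := by
    refine DifferentiableOn.analyticOnNhd (fun z hz => ?_) hopen
    have : z ∈ Complex.slitPlane := Or.inl hz
    have h : DifferentiableAt ℂ (fun r : ℂ => r ^ (w : ℂ)) z := 
      (hasStrictDerivAt_id z |>.hasDerivAt.cpow_const this).differentiableAt
    exact (h.mul_const _).differentiableWithinAt
  refine hA.eqOn_of_preconnected_of_frequently_eq hB (convex_halfSpace_re_gt 0).isPreconnected 
    (z₀ := 1) (by simp) ?_ hr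
  have h_real : ∃ᶠ x : ℝ in 𝓝[≠] 1, KI w x = (x : ℂ) ^ (w : ℂ) * KI w 1 := by
    refine Eventually.frequently ?_
    have : ∀ᶠ x : ℝ in 𝓝 1, 0 < x := lt_mem_nhds zero_lt_one
    filter_upwards [nhdsWithin_le_nhds this] with x hx
    have := KI_scale w 1 x hx
    rw [mul_one] at this
    rw [this, Complex.ofReal_cpow hx.le]
  have ht : Tendsto (fun x : ℝ => (x : ℂ)) (𝓝[≠] 1) (𝓝[≠] 1) := by
    rw [tendsto_nhdsWithin_iff]
    constructor
    · have : Tendsto (fun x : ℝ => (x : ℂ)) (𝓝 1) (𝓝 ((1:ℝ):ℂ)) := 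
        Complex.continuous_ofReal.tendsto 1
      rw [Complex.ofReal_one] at this
      exact this.mono_left nhdsWithin_le_nhds
    · filter_upwards [self_mem_nhdsWithin] with x hx
      simpa using hx
  exact ht.frequently h_real

lemma KI_I {w : ℝ} (hw0 : 0 < w) (hw1 : w < 1) :
    KI w Complex.I = Complex.I ^ (w : ℂ) * KI w 1 := by
  have ht : Tendsto (fun x : ℝ => Complex.I + (x : ℂ)) (𝓝[>] 0) (𝓝 Complex.I) := by
    have : Tendsto (fun x : ℝ => Complex.I + (x : ℂ)) (𝓝 0) (𝓝 (Complex.I + (0:ℝ))) :=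
      (by fun_prop : Continuous fun x : ℝ => Complex.I + (x : ℂ)).tendsto 0
    simp only [Complex.ofReal_zero, add_zero] at this
    exact this.mono_left nhdsWithin_le_nhds
  have h1 : Tendsto (fun x : ℝ => KI w (Complex.I + x)) (𝓝[>] 0) (𝓝 (KI w Complex.I)) := by
    unfold KI
    refine tendsto_integral_filter_of_dominated_convergence
      (fun t => 2 * 2 * (min 1 t * t ^ (-w - 1))) ?_ ?_ ((min_int hw0 hw1).const_mul _) ?_
    · exact Eventually.of_forall fun x => (Kf_meas w _).aestronglyMeasurable
    · have : ∀ᶠ x : ℝ in 𝓝[>] 0, x < 1 := nhdsWithin_le_nhds (gt_mem_nhds zero_lt_one)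
      filter_upwards [this, self_mem_nhdsWithin] with x hx hx0
      have hx0' : 0 < x := hx0
      refine (ae_restrict_iff' measurableSet_Ioi).mpr (Eventually.of_forall fun t ht => ?_)
      refine Kf_bd w _ (by simpa using hx0'.le) 2 ?_ (by norm_num) t ht
      refine (norm_add_le _ _).trans ?_
      rw [Complex.norm_I, Complex.norm_real, Real.norm_of_nonneg hx0'.le]
      linarith
    · refine Eventually.of_forall fun t => ?_
      have hc : Continuous fun r : ℂ => Kf w r t := by unfold Kf; fun_prop
      exact (hc.tendsto _).comp ht
  have h2 : Tendsto (fun x : ℝ => (Complex.I + x) ^ (w : ℂ) * KI w 1) (𝓝[>] 0)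
      (𝓝 (Complex.I ^ (w : ℂ) * KI w 1)) := by
    refine Tendsto.mul_const _ ?_
    have hc : ContinuousAt (fun z : ℂ => z ^ (w : ℂ)) Complex.I := 
      ((hasStrictDerivAt_id Complex.I).hasDerivAt.cpow_const
        (by simp [Complex.mem_slitPlane_iff])).continuousAt
    exact hc.tendsto.comp ht
  refine tendsto_nhds_unique h1 (h2.congr' ?_)
  filter_upwards [self_mem_nhdsWithin] with x hx
  have hx0' : 0 < x := hx
  exact (KI_right hw0 hw1 _ (by simpa using hx0')).symm

lemma KI_one_real (w : ℝ) : ∃ κ : ℝ, KI w 1 = κ := by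
  refine ⟨∫ t in Ioi (0:ℝ), (Real.exp (-t) - 1) * t ^ (-w - 1), ?_⟩
  rw [← integral_complex_ofReal]
  unfold KI Kf
  congr 1
  funext t
  push_cast
  simp


noncomputable def Es (k : ℕ) (y : ℝ) : ℂ :=
  ∑' n : ℕ, 1 / (n : ℂ) ^ k * Complex.exp (2 * Real.pi * Complex.I * n * y)

lemma Es_norm (k n : ℕ) (y : ℝ) :
    ‖1 / (n : ℂ) ^ k * Complex.exp (2 * Real.pi * Complex.I * n * y)‖ = 1 / (n : ℝ) ^ k := by
  rw [show 2 * Real.pi * Complex.I * n * y = ((2 * Real.pi * n * y : ℝ) : ℂ) * Complex.I by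
    push_cast; ring, norm_mul, Complex.norm_exp_ofReal_mul_I, mul_one, norm_div, norm_pow,
    Complex.norm_natCast, norm_one]

lemma Es_summable {k : ℕ} (hk : 2 ≤ k) (y : ℝ) :
    Summable fun n : ℕ => 1 / (n : ℂ) ^ k * Complex.exp (2 * Real.pi * Complex.I * n * y) := by
  refine Summable.of_norm ?_
  simp_rw [Es_norm]
  exact Real.summable_one_div_nat_pow.mpr hk

lemma Es_cont {k : ℕ} (hk : 2 ≤ k) : Continuous (Es k) := by
  unfold Es
  refine continuous_tsum (u := fun n : ℕ => 1 / (n : ℝ) ^ k) (fun n => by fun_prop)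
    (Real.summable_one_div_nat_pow.mpr hk) (fun n y => (Es_norm k n y).le)

lemma Es_per (k : ℕ) : Function.Periodic (Es k) 1 := by
  intro y
  unfold Es
  congr 1
  funext n
  congr 1
  rw [Complex.exp_eq_exp_iff_exists_int]
  refine ⟨n, ?_⟩
  push_cast
  ring

lemma Es_bern {k : ℕ} (hk : 2 ≤ k) (y : ℝ) (hy : y ∈ Icc (0:ℝ) 1) :
    2 * ((-Complex.I) ^ k * Es k y).re =
      -(2 * Real.pi) ^ k / k.factorial * bernoulliFun k y := by
  have h1 := hasSum_one_div_nat_pow_mul_fourier hk hy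
  have h2 := (Es_summable hk y).hasSum
  have h3 := (Es_summable hk (-y)).hasSum.mul_left ((-1 : ℂ) ^ k)
  have h4 := (h2.add h3).unique (h1.congr_fun ?_)
  swap
  · intro n
    rw [fourier_coe_apply, fourier_coe_apply]
    push_cast
    rw [div_one, div_one, mul_add]
    congr 1
    rw [show 2 * Real.pi * Complex.I * (-(n : ℂ)) * y = 2 * Real.pi * Complex.I * n * (-y) by ring]
    ring
  have h5 : Es k (-y) = (starRingEnd ℂ) (Es k y) := by
    unfold Es
    rw [Complex.conj_tsum]
    congr 1
    funext n
    rw [map_mul, ← Complex.exp_conj]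
    simp [map_ofNat]
  change Es k y + (-1) ^ k * Es k (-y) = _ at h4
  rw [h5] at h4
  have h6 : (((2 * ((-Complex.I) ^ k * Es k y).re : ℝ)) : ℂ) =
     ((-(2 * Real.pi) ^ k / k.factorial * bernoulliFun k y : ℝ) : ℂ) := by
    push_cast
    have h7 := Complex.add_conj ((-Complex.I) ^ k * Es k y)
    push_cast at h7
    rw [← h7, map_mul, map_pow, map_neg, Complex.conj_I, neg_neg]
    have e1 : (-Complex.I) ^ k * (-1) ^ k = Complex.I ^ k := by rw [← mul_pow]; simp
    have e2 : (-Complex.I) ^ k * Complex.I ^ k = 1 := by rw [← mul_pow]; simp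
    rw [← e1]
    linear_combination (-Complex.I) ^ k * h4 + 
      (-(2 * Real.pi : ℂ) ^ k / k.factorial * bernoulliFun k y) * e2
  exact_mod_cast h6

lemma swap_int {ι : Type*} [Countable ι] {F : ι → ℝ → ℂ} (μ : Measure ℝ)
    (hF : ∀ i, Integrable (F i) μ) (hs : Summable fun i => ∫ t, ‖F i t‖ ∂μ)
    (f : ℝ → ℂ) (hf : AEStronglyMeasurable f μ) (h : ∀ t, f t = ∑' i, F i t) : Integrable f μ := by
  refine ⟨hf, ?_⟩
  have h1 : ∫⁻ t, ‖f t‖ₑ ∂μ ≤ ∑' i, ∫⁻ t, ‖F i t‖ₑ ∂μ := by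
    rw [← lintegral_tsum (fun i => (hF i).1.enorm)]
    refine lintegral_mono fun t => ?_
    rw [h]
    exact enorm_tsum_le_tsum_enorm
  refine h1.trans_lt ?_
  have h2 : ∀ i, ∫⁻ t, ‖F i t‖ₑ ∂μ = ENNReal.ofReal (∫ t, ‖F i t‖ ∂μ) := fun i =>
    (ofReal_integral_norm_eq_lintegral_enorm (hF i)).symm
  simp_rw [h2]
  rw [← ENNReal.ofReal_tsum_of_nonneg (fun i => integral_nonneg fun t => norm_nonneg _) hs]
  exact ENNReal.ofReal_lt_top

lemma Es_main {k : ℕ} (hk : 2 ≤ k) {w : ℝ} (hw0 : 0 < w) (hw1 : w < 1) (a : ℝ) :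
    IntegrableOn (fun t : ℝ => (Es k (a - t) - Es k a) * ((t ^ (-w - 1) : ℝ) : ℂ)) (Ioi 0) ∧
    ∫ t in Ioi (0:ℝ), (Es k (a - t) - Es k a) * ((t ^ (-w - 1) : ℝ) : ℂ) =
      KI w 1 * ((2 * Real.pi) ^ w : ℝ) * Complex.I ^ (w : ℂ) * expZeta a ((k - w : ℝ) : ℂ) := by
  set F : ℕ → ℝ → ℂ := fun n t => (1 / (n : ℂ) ^ k * Complex.exp (2 * Real.pi * Complex.I * n * a)) *
    Kf w (((2 * Real.pi * n : ℝ) : ℂ) * Complex.I) t with hF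
  have hre : ∀ n : ℕ, 0 ≤ (((2 * Real.pi * n : ℝ) : ℂ) * Complex.I).re := fun n => by simp
  have hFint : ∀ n, Integrable (F n) (volume.restrict (Ioi 0)) := fun n =>
    (Kf_int hw0 hw1 _ (hre n)).const_mul _
  have hFsum : Summable fun n => ∫ t in Ioi (0:ℝ), ‖F n t‖ := by
    have hs : Summable fun n : ℕ => (1 / (n : ℝ) ^ (k - w)) * 
        ((2 * Real.pi) ^ w * ∫ t in Ioi (0:ℝ), ‖Kf w Complex.I t‖) := by
      refine Summable.mul_right _ (Real.summable_one_div_nat_rpow.mpr ?_)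
      have : (2 : ℝ) ≤ k := by exact_mod_cast hk
      linarith
    refine hs.congr fun n => ?_
    simp only [hF, norm_mul]
    rw [integral_const_mul, ← norm_mul, Es_norm]
    rcases Nat.eq_zero_or_pos n with rfl | hn
    · have : (k : ℝ) - w ≠ 0 := by
        have : (2 : ℝ) ≤ k := by exact_mod_cast hk
        linarith
      simp [Real.zero_rpow this, show k ≠ 0 by omega]
    · have hn' : (0:ℝ) < n := by exact_mod_cast hn
      rw [Kf_norm_scale w _ _ (by positivity), Real.mul_rpow (by positivity) hn'.le,
        Real.rpow_sub hn', Real.rpow_natCast]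
      field_simp
  have hpt : ∀ t, (Es k (a - t) - Es k a) * ((t ^ (-w - 1) : ℝ) : ℂ) = ∑' n, F n t := by
    intro t
    unfold Es
    rw [← (Es_summable hk (a - t)).tsum_sub (Es_summable hk a), ← tsum_mul_right]
    congr 1
    funext n
    simp only [hF, Kf]
    rw [show 2 * Real.pi * Complex.I * n * ((a - t : ℝ) : ℂ) = 
      2 * Real.pi * Complex.I * n * a + -(((2 * Real.pi * n : ℝ) : ℂ) * Complex.I * t) by
      push_cast; ring, Complex.exp_add]
    ring
  have hmeas : Measurable fun t : ℝ => (Es k (a - t) - Es k a) * ((t ^ (-w - 1) : ℝ) : ℂ) := by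
    have : Measurable (Es k) := (Es_cont hk).measurable
    fun_prop
  refine ⟨swap_int _ hFint hFsum _ hmeas.aestronglyMeasurable hpt, ?_⟩
  have h1 := hasSum_integral_of_summable_integral_norm hFint hFsum
  simp_rw [← hpt] at h1
  have hk1 : 1 < (((k - w : ℝ) : ℂ)).re := by
    rw [Complex.ofReal_re]
    have : (2 : ℝ) ≤ k := by exact_mod_cast hk
    linarith
  have h2 := (hasSum_expZeta_of_one_lt_re a hk1).mul_left 
    (KI w 1 * ((2 * Real.pi) ^ w : ℝ) * Complex.I ^ (w : ℂ))
  refine h1.unique (h2.congr_fun ?_)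
  intro n
  simp only [hF]
  rw [integral_const_mul]
  change _ * KI w _ = _
  rcases Nat.eq_zero_or_pos n with rfl | hn
  · have : ((k - w : ℝ) : ℂ) ≠ 0 := by
      intro h
      rw [h] at hk1
      simp at hk1
      linarith
    rw [Nat.cast_zero, Complex.zero_cpow this]
    simp [show k ≠ 0 by omega]
  · have hn' : (0:ℝ) < n := by exact_mod_cast hn
    have hnc : (n : ℂ) ≠ 0 := by exact_mod_cast hn.ne'
    rw [KI_scale w _ _ (by positivity), KI_I hw0 hw1, Real.mul_rpow (by positivity) hn'.le,
      Complex.ofReal_sub, Complex.cpow_sub _ _ hnc, Complex.ofReal_natCast, Complex.cpow_natCast,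
      Complex.ofReal_mul, Complex.ofReal_cpow hn'.le, Complex.ofReal_natCast,
      show 2 * Real.pi * Complex.I * a * n = 2 * Real.pi * Complex.I * n * a by ring]
    have : (n : ℂ) ^ (w : ℂ) ≠ 0 := by
      rw [Complex.cpow_ne_zero_iff]
      exact Or.inl hnc
    field_simp


lemma hurwitz_neg_formula (a : ℝ) {s : ℝ} (hs : 1 < s) :
    hurwitzZeta (a : UnitAddCircle) ((1 - s : ℝ) : ℂ) =
      ((2 * (2 * Real.pi) ^ (-s) * Real.Gamma s *
        (Complex.exp (-Real.pi * Complex.I * s / 2) * expZeta a s).re : ℝ) : ℂ) := by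
  have h := hurwitzZeta_one_sub (a : UnitAddCircle) (s := (s : ℂ)) ?_ ?_
  rotate_left
  · intro n h
    have h' := congrArg Complex.re h
    simp at h'
    have : (0:ℝ) ≤ n := Nat.cast_nonneg n
    linarith
  · right
    intro h
    have h' := congrArg Complex.re h
    simp at h'
    linarith
  have hs' : 1 < ((s : ℂ)).re := by simpa using hs
  have h5 : expZeta (-(a : UnitAddCircle)) s = (starRingEnd ℂ) (expZeta a s) := by
    have h1 := hasSum_expZeta_of_one_lt_re (-a) hs'
    have h2 := (hasSum_expZeta_of_one_lt_re a hs')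
    rw [AddCircle.coe_neg] at h1
    rw [← h1.tsum_eq, ← h2.tsum_eq, Complex.conj_tsum]
    congr 1
    funext n
    rw [map_div₀, ← Complex.exp_conj]
    have : (starRingEnd ℂ) ((n : ℂ) ^ (s : ℂ)) = (n : ℂ) ^ (s : ℂ) := by
      rw [← Complex.ofReal_natCast, ← Complex.ofReal_cpow (Nat.cast_nonneg n), Complex.conj_ofReal]
    rw [this]
    simp [map_ofNat]
  have h6 : Complex.exp (Real.pi * Complex.I * s / 2) = 
      (starRingEnd ℂ) (Complex.exp (-Real.pi * Complex.I * s / 2)) := by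
    rw [← Complex.exp_conj]
    simp [map_ofNat]
  rw [h5, h6, ← map_mul, Complex.add_conj] at h
  rw [Complex.ofReal_sub, Complex.ofReal_one, h]
  push_cast
  rw [Complex.ofReal_cpow (by positivity), Complex.Gamma_ofReal]
  push_cast
  ring

lemma hurwitz_ne_zero (M : ℕ) (hM : 1 ≤ M) (a : ℝ) (ha : 0 < a) (ha' : a ≤ 1) (σ : ℝ)
    (h1 : -(M : ℝ) < σ) (h2 : σ < 1 - M) 
    (hB : 0 ≤ bernoulliFun M a * bernoulliFun (M + 1) a) : 
    hurwitzZeta (a : UnitAddCircle) (σ : ℂ) ≠ 0 := by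
  intro hz
  have hk : 2 ≤ M + 1 := by omega
  have hM' : (1 : ℝ) ≤ M := by exact_mod_cast hM
  set w : ℝ := M + σ with hw
  have hw0 : 0 < w := by linarith
  have hw1 : w < 1 := by linarith
  have hs : 1 < 1 - σ := by linarith
  have hform := hurwitz_neg_formula a hs
  rw [sub_sub_cancel, hz] at hform
  have hre : (Complex.exp (-Real.pi * Complex.I * ((1 - σ : ℝ) : ℂ) / 2) * 
      expZeta a ((1 - σ : ℝ) : ℂ)).re = 0 := by
    have h3 := (Complex.ofReal_eq_zero.mp hform.symm)
    have hG : Real.Gamma (1 - σ) ≠ 0 := (Real.Gamma_pos_of_pos (by linarith)).ne'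
    have hp : (2 * Real.pi) ^ (-(1 - σ)) ≠ 0 := (Real.rpow_pos_of_pos (by positivity) _).ne'
    exact (mul_eq_zero.mp h3).resolve_left (mul_ne_zero (mul_ne_zero two_ne_zero hp) hG)
  obtain ⟨hint, hval⟩ := Es_main hk hw0 hw1 a
  have hsw : (((M + 1 : ℕ) : ℝ) - w : ℝ) = 1 - σ := by rw [hw]; push_cast; ring
  rw [hsw] at hval
  set c : ℝ := -(2 * (M + 1).factorial / (2 * Real.pi) ^ (M + 1)) with hc
  set ω : ℂ := (-Complex.I) ^ (M + 1) with hω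
  set G : ℝ → ℝ := fun y => c * (ω * Es (M + 1) y).re with hGd
  have hGc : Continuous G := by
    have := Es_cont hk
    fun_prop
  have hGper : Function.Periodic G 1 := fun y => by simp only [hGd, Es_per (M + 1) y]
  have hGb : ∀ x ∈ Icc (0:ℝ) 1, G x = bernoulliFun (M + 1) x := by
    intro x hx
    have := Es_bern hk x hx
    simp only [hGd, hc, hω]
    have h2p : (2 * Real.pi) ^ (M + 1) ≠ 0 := by positivity
    have hf : ((M + 1).factorial : ℝ) ≠ 0 := by exact_mod_cast (Nat.factorial_ne_zero _)
    calc _ = -((M + 1).factorial / (2 * Real.pi) ^ (M + 1)) * 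
          (2 * ((-Complex.I) ^ (M + 1) * Es (M + 1) x).re) := by ring
      _ = _ := by rw [this]; field_simp
  have hpt : ∀ t : ℝ, (G (a - t) - G a) * t ^ (-w - 1) = 
      c * (ω * ((Es (M + 1) (a - t) - Es (M + 1) a) * ((t ^ (-w - 1) : ℝ) : ℂ))).re := by
    intro t
    simp only [hGd]
    rw [← mul_assoc ω, Complex.re_mul_ofReal, mul_sub ω, Complex.sub_re]
    ring
  have hint2 : IntegrableOn (fun t : ℝ => ω * 
      ((Es (M + 1) (a - t) - Es (M + 1) a) * ((t ^ (-w - 1) : ℝ) : ℂ))) (Ioi 0) := 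
    hint.const_mul ω
  have hint3 : IntegrableOn (fun t => (G (a - t) - G a) * t ^ (-w - 1)) (Ioi 0) := by
    simp_rw [hpt]
    exact (hint2.re).const_mul c
  refine I_ne_zero M hM G hGc hGper hGb hw0 a ha ha' hint3 hB ?_
  simp_rw [hpt]
  rw [integral_const_mul]
  have hre2 := integral_re hint2
  simp only [RCLike.re_eq_complex_re] at hre2
  rw [hre2, integral_const_mul, hval]
  obtain ⟨κ, hκ⟩ := KI_one_real w
  have hexp : ω * Complex.I ^ (w : ℂ) = 
      Complex.exp (-Real.pi * Complex.I * ((1 - σ : ℝ) : ℂ) / 2) := by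
    have e1 : -Complex.I = Complex.exp (-(Real.pi / 2 * Complex.I)) := by
      rw [Complex.exp_neg, Complex.exp_pi_div_two_mul_I, Complex.inv_I]
    rw [hω, Complex.cpow_def_of_ne_zero Complex.I_ne_zero, Complex.log_I, e1, ← Complex.exp_nat_mul,
      ← Complex.exp_add]
    congr 1
    rw [hw]
    push_cast
    ring
  have : ω * (KI w 1 * ((2 * Real.pi) ^ w : ℝ) * Complex.I ^ (w : ℂ) * 
      expZeta a ((1 - σ : ℝ) : ℂ)) = ((κ * (2 * Real.pi) ^ w : ℝ) : ℂ) * 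
      (Complex.exp (-Real.pi * Complex.I * ((1 - σ : ℝ) : ℂ) / 2) * 
      expZeta a ((1 - σ : ℝ) : ℂ)) := by
    rw [← hexp, hκ]
    push_cast
    ring
  rw [this, Complex.re_ofReal_mul, hre]
  simp

lemma hurwitz_im (a : ℝ) (ha : 0 < a) (ha' : a ≤ 1) (σ : ℝ) (hσ : σ < 1) :
    (hurwitzZeta (a : UnitAddCircle) (σ : ℂ)).im = 0 := by
  rcases lt_or_ge σ 0 with h | h
  · have := hurwitz_neg_formula a (s := 1 - σ) (by linarith)
    rw [sub_sub_cancel] at this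
    rw [this, Complex.ofReal_im]
  · rw [hurwitz_eq_midF ha ha' hσ (by linarith), midF_ofReal ha, Complex.ofReal_im]

lemma hurwitz_re_neg_nat (a : ℝ) (ha : 0 < a) (ha' : a ≤ 1) (k : ℕ) :
    (hurwitzZeta (a : UnitAddCircle) ((-(k : ℝ) : ℝ) : ℂ)).re = 
      -(1 / (k + 1)) * bernoulliFun (k + 1) a := by
  rcases Nat.eq_zero_or_pos k with rfl | hk
  · simp [hurwitz_zero ha ha', bernoulliFun_one]
  · have h := hurwitzZeta_neg_nat (k := k) hk.ne' (x := a) ⟨ha.le, ha'⟩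
    have h2 : ((Polynomial.bernoulli (k + 1)).map (algebraMap ℚ ℂ)).eval (a : ℂ) = 
        ((bernoulliFun (k + 1) a : ℝ) : ℂ) := by
      unfold bernoulliFun
      rw [← Complex.coe_algebraMap, ← Polynomial.eval_map_apply, Polynomial.map_map]
      rfl
    rw [h2] at h
    push_cast
    rw [h, show (-1 / ((k : ℂ) + 1) * (bernoulliFun (k + 1) a : ℂ)) = 
      ((-(1 / ((k : ℝ) + 1)) * bernoulliFun (k + 1) a : ℝ) : ℂ) by push_cast; ring,
      Complex.ofReal_re]

lemma hurwitz_re_cont (a : ℝ) : ContinuousOn 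
    (fun σ : ℝ => (hurwitzZeta (a : UnitAddCircle) (σ : ℂ)).re) (Iio 1) := by
  intro σ hσ
  have h1 : (σ : ℂ) ≠ 1 := by
    intro h
    have : σ = 1 := by exact_mod_cast h
    simp [this] at hσ
  have h2 : ContinuousAt (fun σ : ℝ => hurwitzZeta (a : UnitAddCircle) (σ : ℂ)) σ :=
    ContinuousAt.comp (f := fun σ : ℝ => (σ : ℂ))
      (differentiableAt_hurwitzZeta (a : UnitAddCircle) h1).continuousAt 
      Complex.continuous_ofReal.continuousAt
  exact (Complex.continuous_re.continuousAt.comp h2).continuousWithinAt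

lemma hurwitz_ivt (a : ℝ) (ha : 0 < a) (ha' : a ≤ 1) (x y : ℝ) (hxy : x < y) (hy : y < 1)
    (h : (hurwitzZeta (a : UnitAddCircle) (x : ℂ)).re * 
      (hurwitzZeta (a : UnitAddCircle) (y : ℂ)).re < 0) :
    ∃ σ ∈ Ioo x y, hurwitzZeta (a : UnitAddCircle) (σ : ℂ) = 0 := by
  have hc : ContinuousOn (fun σ : ℝ => (hurwitzZeta (a : UnitAddCircle) (σ : ℂ)).re) (Icc x y) :=
    (hurwitz_re_cont a).mono fun z hz => lt_of_le_of_lt hz.2 hy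
  have : ∃ σ ∈ Ioo x y, (hurwitzZeta (a : UnitAddCircle) (σ : ℂ)).re = 0 := by
    rcases mul_neg_iff.mp h with ⟨h1, h2⟩ | ⟨h1, h2⟩
    · exact intermediate_value_Ioo' hxy.le hc ⟨h2, h1⟩
    · exact intermediate_value_Ioo hxy.le hc ⟨h1, h2⟩
  obtain ⟨σ, hσ, h0⟩ := this
  exact ⟨σ, hσ, Complex.ext h0 (hurwitz_im a ha ha' σ (hσ.2.trans hy))⟩

lemma hurwitz_neg_near_one (a : ℝ) : 
    ∃ y ∈ Ioo (0:ℝ) 1, (hurwitzZeta (a : UnitAddCircle) (y : ℂ)).re < 0 := by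
  have h := hurwitzZeta_residue_one (a : UnitAddCircle)
  have ht : Tendsto (fun x : ℝ => (x : ℂ)) (𝓝[<] 1) (𝓝[≠] 1) := by
    rw [tendsto_nhdsWithin_iff]
    constructor
    · have : Tendsto (fun x : ℝ => (x : ℂ)) (𝓝 1) (𝓝 ((1:ℝ):ℂ)) := 
        Complex.continuous_ofReal.tendsto 1
      rw [Complex.ofReal_one] at this
      exact this.mono_left nhdsWithin_le_nhds
    · filter_upwards [self_mem_nhdsWithin] with x hx
      have : x ≠ 1 := ne_of_lt hx
      simpa using this
  have h2 := (Complex.continuous_re.tendsto _).comp (h.comp ht)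
  rw [Complex.one_re] at h2
  have h3 := h2.eventually (lt_mem_nhds (zero_lt_one' ℝ))
  have h4 : ∀ᶠ x : ℝ in 𝓝[<] 1, 0 < x := nhdsWithin_le_nhds (lt_mem_nhds zero_lt_one)
  obtain ⟨y, hy1, hy2, hy3⟩ := (h3.and (h4.and self_mem_nhdsWithin)).exists
  have hy3' : y < 1 := hy3
  refine ⟨y, ⟨hy2, hy3'⟩, ?_⟩
  simp only [Function.comp] at hy1
  rw [show (y : ℂ) - 1 = ((y - 1 : ℝ) : ℂ) by push_cast; rfl, Complex.re_ofReal_mul] at hy1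
  by_contra hcon
  nlinarith

lemma main_nat (M : ℕ) (a : ℝ) (ha : 0 < a) (ha' : a ≤ 1) :
    (∃ σ : ℝ, σ ∈ Set.Ioo (-(M : ℝ)) (1 - M) ∧ hurwitzZeta (a : UnitAddCircle) (σ : ℂ) = 0) ↔
      bernoulliFun M a * bernoulliFun (M + 1) a < 0 := by
  rcases Nat.eq_zero_or_pos M with rfl | hM
  · rw [bernoulliFun_zero, zero_add, bernoulliFun_one, one_mul]
    constructor
    · rintro ⟨σ, hσ, hz⟩
      simp only [Nat.cast_zero, neg_zero, sub_zero] at hσ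
      by_contra hcon
      have := midFr_neg (a := a) (by linarith) hσ.1 hσ.2
      rw [hurwitz_eq_midF ha ha' hσ.2 (by linarith [hσ.1]), midF_ofReal ha] at hz
      have hz' := Complex.ofReal_eq_zero.mp hz
      linarith
    · intro h
      obtain ⟨y, hy, hy'⟩ := hurwitz_neg_near_one a
      obtain ⟨σ, hσ, h0⟩ := hurwitz_ivt a ha ha' 0 y hy.1 hy.2 (by
        refine mul_neg_of_pos_of_neg ?_ hy'
        rw [Complex.ofReal_zero, hurwitz_zero ha ha', Complex.ofReal_re]
        linarith)
      exact ⟨σ, ⟨by simpa using hσ.1, by simpa using hσ.2.trans hy.2⟩, h0⟩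
  · constructor
    · rintro ⟨σ, hσ, hz⟩
      by_contra hcon
      exact hurwitz_ne_zero M hM a ha ha' σ hσ.1 hσ.2 (not_lt.mp hcon) hz
    · intro h
      obtain ⟨m, rfl⟩ : ∃ m, M = m + 1 := ⟨M - 1, by omega⟩
      have e : (1 : ℝ) - ((m + 1 : ℕ) : ℝ) = -(m : ℝ) := by push_cast; ring
      rw [e]
      obtain ⟨σ, hσ, h0⟩ := hurwitz_ivt a ha ha' (-((m + 1 : ℕ) : ℝ)) (-(m : ℝ)) 
        (by push_cast; linarith) (by linarith [Nat.cast_nonneg (α := ℝ) m]) (by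
          rw [hurwitz_re_neg_nat a ha ha', hurwitz_re_neg_nat a ha ha']
          have p1 : (0:ℝ) < 1 / (((m + 1 : ℕ) : ℝ) + 1) := by positivity
          have p2 : (0:ℝ) < 1 / ((m : ℝ) + 1) := by positivity
          have := mul_neg_of_pos_of_neg (mul_pos p1 p2) h
          calc _ = _ := by ring
            _ < _ := this)
      exact ⟨σ, hσ, h0⟩


end Helpers

/-- For an integer `N ≥ -1` and `0 < a ≤ 1`, the Hurwitz zeta function `σ ↦ ζ(σ, a)` has a
real zero in the open interval `(-N-1, -N)` iff `B_{N+1}(a) * B_{N+2}(a) < 0`. -/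
theorem hurwitzZeta_has_real_zero_iff (N : ℤ) (hN : -1 ≤ N) (a : ℝ) (ha : 0 < a) (ha' : a ≤ 1) :
    (∃ σ : ℝ, σ ∈ Set.Ioo (-(N : ℝ) - 1) (-(N : ℝ)) ∧
        hurwitzZeta (a : UnitAddCircle) (σ : ℂ) = 0) ↔
      bernoulliPoly (N + 1).toNat a * bernoulliPoly (N + 2).toNat a < 0 := by
  obtain ⟨M, hM⟩ : ∃ M : ℕ, N = (M : ℤ) - 1 := ⟨(N + 1).toNat, by omega⟩
  subst hM
  have hb : ∀ n x, bernoulliPoly n x = bernoulliFun n x := by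
    intro n x
    unfold bernoulliPoly bernoulliFun
    rw [Polynomial.aeval_def, Polynomial.eval_map]
  have e1 : ((M : ℤ) - 1 + 1).toNat = M := by omega
  have e2 : ((M : ℤ) - 1 + 2).toNat = M + 1 := by omega
  rw [e1, e2, hb, hb, ← main_nat M a ha ha']
  have e3 : -(((M : ℤ) - 1 : ℤ) : ℝ) - 1 = -(M : ℝ) := by push_cast; ring
  have e4 : -(((M : ℤ) - 1 : ℤ) : ℝ) = 1 - (M : ℝ) := by push_cast; ring
  rw [e3, e4]
end

section
/- Let N ≥ 0 be an even integer, let 0 < a ≤ 1, and let b⁻ ∈ [0, 1/2) and b⁺ ∈ [1/2, 1) be roots of the Bernoulli polynomial B_{N+2} (such roots exist and are unique in those intervals). Then the Hurwitz zeta function σ ↦ ζ(σ, a) has a real zero in the open interval (-N-1, -N) if and only if 0 < a < b⁻ or 1/2 < a < b⁺. -/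
open HurwitzZeta Polynomial Set

open MeasureTheory Filter Topology in
lemma wint (δ : ℝ) (h0 : 0 < δ) (h1 : δ < 1) :
    IntegrableOn (fun t : ℝ => min 1 t * t ^ (-1 - δ)) (Ioi 0) := by
  rw [← Ioc_union_Ioi_eq_Ioi zero_le_one]
  apply IntegrableOn.union
  · have : IntegrableOn (fun t : ℝ => t ^ (-δ)) (Ioc 0 1) := by
      rw [← intervalIntegrable_iff_integrableOn_Ioc_of_le zero_le_one]
      exact intervalIntegral.intervalIntegrable_rpow' (by linarith)
    refine this.congr_fun (fun t ht => ?_) measurableSet_Ioc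
    dsimp only
    rw [min_eq_right ht.2, ← Real.rpow_one_add' ht.1.le (by linarith)]
    congr 1; ring
  · have : IntegrableOn (fun t : ℝ => t ^ (-1 - δ)) (Ioi 1) :=
      integrableOn_Ioi_rpow_of_lt (by linarith) one_pos
    refine this.congr_fun (fun t ht => ?_) measurableSet_Ioi
    dsimp only
    rw [min_eq_left (le_of_lt ht), one_mul]

lemma expbd {z : ℂ} (hz : 0 ≤ z.re) {t : ℝ} (ht : 0 < t) :
    ‖Complex.exp (-z * t) - 1‖ ≤ 2 * max 1 ‖z‖ * min 1 t := by
  have hA : ‖Complex.exp (-z * t) - 1‖ ≤ 2 := by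
    refine (norm_sub_le _ _).trans ?_
    rw [Complex.norm_exp]
    have : Real.exp (-z * t).re ≤ 1 := by
      rw [Real.exp_le_one_iff]; simp; positivity
    rw [norm_one]; linarith
  have hB : ‖Complex.exp (-z * t) - 1‖ ≤ 2 * (‖z‖ * t) := by
    have hn : ‖-z * (t : ℂ)‖ = ‖z‖ * t := by simp [abs_of_pos ht]
    by_cases h : ‖z‖ * t ≤ 1
    · rw [← hn]; exact Complex.norm_exp_sub_one_le (by rw [hn]; exact h)
    · push Not at h; linarith
  have hm1 : 1 ≤ max 1 ‖z‖ := le_max_left _ _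
  have hm2 : ‖z‖ ≤ max 1 ‖z‖ := le_max_right _ _
  rcases min_choice 1 t with h | h <;> rw [h]
  · linarith
  · nlinarith

/-- Laplace-type transform. -/
noncomputable def FF (δ : ℝ) (z : ℂ) : ℂ :=
  ∫ t : ℝ in Ioi 0, (Complex.exp (-z * t) - 1) * ((t ^ (-1 - δ) : ℝ) : ℂ)

open MeasureTheory Filter Topology in
lemma FFmeas (δ : ℝ) (z : ℂ) : AEStronglyMeasurable
    (fun t : ℝ => (Complex.exp (-z * t) - 1) * ((t ^ (-1 - δ) : ℝ) : ℂ))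
    (volume.restrict (Ioi 0)) := by
  apply Measurable.aestronglyMeasurable
  fun_prop

lemma FFbd (δ : ℝ) {z : ℂ} (hz : 0 ≤ z.re) {t : ℝ} (ht : 0 < t) :
    ‖(Complex.exp (-z * t) - 1) * ((t ^ (-1 - δ) : ℝ) : ℂ)‖ ≤
      2 * max 1 ‖z‖ * (min 1 t * t ^ (-1 - δ)) := by
  have hw : 0 ≤ t ^ (-1 - δ) := by positivity
  rw [norm_mul, Complex.norm_real, Real.norm_eq_abs, abs_of_nonneg hw, ← mul_assoc]
  exact mul_le_mul_of_nonneg_right (expbd hz ht) hw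

open MeasureTheory Filter Topology in
lemma FFint (δ : ℝ) (h0 : 0 < δ) (h1 : δ < 1) {z : ℂ} (hz : 0 ≤ z.re) :
    IntegrableOn (fun t : ℝ => (Complex.exp (-z * t) - 1) * ((t ^ (-1 - δ) : ℝ) : ℂ)) (Ioi 0) := by
  refine Integrable.mono' ((wint δ h0 h1).const_mul (2 * max 1 ‖z‖)) (FFmeas δ z) ?_
  refine (ae_restrict_iff' measurableSet_Ioi).2 (Eventually.of_forall fun t ht => ?_)
  exact FFbd δ hz ht

open MeasureTheory in
lemma scale {E : Type*} [NormedAddCommGroup E] [NormedSpace ℝ E] (g : ℝ → E) (δ l : ℝ)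
    (hl : 0 < l) :
    ∫ t in Ioi (0:ℝ), (t ^ (-1 - δ)) • g (l * t) = l ^ δ • ∫ t in Ioi (0:ℝ), (t ^ (-1 - δ)) • g t := by
  have := integral_comp_mul_left_Ioi (fun t => (t ^ (-1 - δ)) • g t) 0 hl
  rw [mul_zero] at this
  have h2 : ∫ x in Ioi (0:ℝ), ((l * x) ^ (-1 - δ)) • g (l * x) =
      l ^ (-1 - δ) • ∫ t in Ioi (0:ℝ), (t ^ (-1 - δ)) • g (l * t) := by
    rw [← integral_smul]
    refine setIntegral_congr_fun measurableSet_Ioi fun t ht => ?_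
    rw [Real.mul_rpow hl.le (le_of_lt ht), mul_smul]
  rw [h2] at this
  have h3 := congrArg (fun y => l ^ (1 + δ) • y) this
  simp only [smul_smul] at h3
  rw [← Real.rpow_add hl] at h3
  have e1 : l ^ (1 + δ + (-1 - δ)) = 1 := by
    rw [show 1 + δ + (-1 - δ) = 0 by ring, Real.rpow_zero]
  have e2 : l ^ (1 + δ) * l⁻¹ = l ^ δ := by
    rw [add_comm, Real.rpow_add_one hl.ne']; field_simp
  rw [e1, e2, one_smul] at h3
  exact h3

lemma FFscale (δ l : ℝ) (hl : 0 < l) (z : ℂ) : FF δ (l * z) = (l ^ δ : ℝ) * FF δ z := by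
  have := scale (fun t : ℝ => Complex.exp (-z * t) - 1) δ l hl
  simp only [Complex.real_smul] at this
  unfold FF
  rw [show (∫ t in Ioi (0:ℝ), (Complex.exp (-z * t) - 1) * ((t ^ (-1 - δ) : ℝ) : ℂ)) =
    ∫ t in Ioi (0:ℝ), ((t ^ (-1 - δ) : ℝ) : ℂ) * (Complex.exp (-z * t) - 1) from by
      simp only [mul_comm], ← this]
  congr 1; ext t
  rw [mul_comm]; push_cast; ring_nf

open MeasureTheory Filter Topology in
lemma FFdiff (δ : ℝ) (h0 : 0 < δ) (h1 : δ < 1) {z : ℂ} (hz : 0 < z.re) :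
    DifferentiableAt ℂ (FF δ) z := by
  have hzr : Metric.ball z (z.re / 2) ∈ 𝓝 z := Metric.ball_mem_nhds _ (by linarith)
  have key : ∀ x ∈ Metric.ball z (z.re / 2), z.re / 2 < x.re := by
    intro x hx
    have := Complex.abs_re_le_norm (x - z)
    rw [Metric.mem_ball, dist_eq_norm] at hx
    rw [Complex.sub_re] at this
    have := (abs_lt.1 (this.trans_lt hx)).1
    linarith
  have hb : IntegrableOn (fun t : ℝ => t ^ (-δ) * Real.exp (-(z.re / 2) * t)) (Ioi 0) :=
    by simpa using integrableOn_rpow_mul_exp_neg_mul_rpow (s := -δ) (p := 1) (by linarith) one_pos (by linarith : 0 < z.re/2)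
  refine (hasDerivAt_integral_of_dominated_loc_of_deriv_le (μ := volume.restrict (Ioi 0))
    (F := fun z t => (Complex.exp (-z * t) - 1) * ((t ^ (-1 - δ) : ℝ) : ℂ))
    (F' := fun z t => (Complex.exp (-z * t) * (-t)) * ((t ^ (-1 - δ) : ℝ) : ℂ))
    (bound := fun t : ℝ => t ^ (-δ) * Real.exp (-(z.re / 2) * t))
    hzr (Eventually.of_forall fun w => FFmeas δ w) (FFint δ h0 h1 hz.le) ?_ ?_ hb ?_).2.differentiableAt
  · apply Measurable.aestronglyMeasurable
    fun_prop
  · refine (ae_restrict_iff' measurableSet_Ioi).2 (Eventually.of_forall fun t ht x hx => ?_)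
    have ht : 0 < t := ht
    rw [norm_mul, norm_mul, Complex.norm_exp, norm_neg, Complex.norm_real, Complex.norm_real,
      Real.norm_of_nonneg ht.le, Real.norm_of_nonneg (by positivity)]
    have e : t * t ^ (-1 - δ) = t ^ (-δ) := by
      rw [← Real.rpow_one_add' ht.le (by linarith)]
      congr 1; ring
    rw [mul_assoc, e, mul_comm]
    refine mul_le_mul_of_nonneg_left (Real.exp_le_exp.2 ?_) (by positivity)
    simp
    have := key x hx
    nlinarith
  · refine Eventually.of_forall fun t x hx => ?_
    have : HasDerivAt (fun z : ℂ => -z * t) (-t) x := by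
      simpa using (hasDerivAt_id x).neg.mul_const (t : ℂ)
    exact (this.cexp.sub_const 1).mul_const _

open MeasureTheory Filter Topology in
lemma FFeq (δ : ℝ) (h0 : 0 < δ) (h1 : δ < 1) {z : ℂ} (hz : 0 < z.re) :
    FF δ z = z ^ (δ : ℂ) * FF δ 1 := by
  have hU : IsOpen {z : ℂ | 0 < z.re} := isOpen_lt continuous_const Complex.continuous_re
  have hf : AnalyticOnNhd ℂ (FF δ) {z : ℂ | 0 < z.re} :=
    DifferentiableOn.analyticOnNhd (fun w hw => (FFdiff δ h0 h1 hw).differentiableWithinAt) hU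
  have hg : AnalyticOnNhd ℂ (fun z => z ^ (δ : ℂ) * FF δ 1) {z : ℂ | 0 < z.re} := by
    refine DifferentiableOn.analyticOnNhd (fun w hw => ?_) hU
    have : w ∈ Complex.slitPlane := Or.inl hw
    exact ((differentiableAt_id.cpow_const this).mul_const _).differentiableWithinAt
  have hc : IsPreconnected {z : ℂ | 0 < z.re} := (convex_halfSpace_re_gt 0).isPreconnected
  refine hf.eqOn_of_preconnected_of_frequently_eq hg hc (z₀ := 1) (by simp) ?_ hz
  have ht : Tendsto (fun n : ℕ => ((1 + 1 / ((n : ℝ) + 1) : ℝ) : ℂ)) atTop (𝓝[≠] 1) := by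
    rw [tendsto_nhdsWithin_iff]
    constructor
    · have : Tendsto (fun n : ℕ => (1 + 1 / ((n : ℝ) + 1) : ℝ)) atTop (𝓝 (1 + 0)) :=
        tendsto_const_nhds.add tendsto_one_div_add_atTop_nhds_zero_nat
      have := (Complex.continuous_ofReal.tendsto _).comp this
      rw [add_zero, Complex.ofReal_one] at this
      exact this
    · refine Eventually.of_forall fun n => ?_
      have : (0:ℝ) < 1 / ((n:ℝ) + 1) := by positivity
      simp only [mem_compl_iff, mem_singleton_iff]
      norm_cast
      intro h
      push_cast at h
      linarith
  refine ht.frequently (Frequently.of_forall fun n => ?_)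
  set x : ℝ := 1 + 1 / ((n : ℝ) + 1)
  have hx : 0 < x := by positivity
  have := FFscale δ x hx 1
  rw [mul_one] at this
  rw [this, Complex.ofReal_cpow hx.le]

open MeasureTheory Filter Topology in
lemma FFI (δ : ℝ) (h0 : 0 < δ) (h1 : δ < 1) :
    FF δ (-Complex.I) = Complex.exp (-(Real.pi * δ / 2 * Complex.I)) * FF δ 1 := by
  have hlim : Tendsto (fun e : ℝ => (e : ℂ) - Complex.I) (𝓝[>] 0) (𝓝 (-Complex.I)) := by
    have : Continuous (fun e : ℝ => (e : ℂ) - Complex.I) := by fun_prop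
    have := this.tendsto 0
    simp only [Complex.ofReal_zero, zero_sub] at this
    exact this.mono_left nhdsWithin_le_nhds
  have A : Tendsto (fun e : ℝ => FF δ ((e : ℂ) - Complex.I)) (𝓝[>] 0) (𝓝 (FF δ (-Complex.I))) := by
    unfold FF
    refine tendsto_integral_filter_of_dominated_convergence
      (fun t => 2 * 2 * (min 1 t * t ^ (-1 - δ))) (Eventually.of_forall fun e => FFmeas δ _) ?_
      ((wint δ h0 h1).const_mul _) ?_
    · have : Ioo (0:ℝ) 1 ∈ 𝓝[>] (0:ℝ) := Ioo_mem_nhdsGT one_pos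
      filter_upwards [this] with e he
      refine (ae_restrict_iff' measurableSet_Ioi).2 (Eventually.of_forall fun t ht => ?_)
      have ht : 0 < t := ht
      refine (FFbd δ (by simpa using he.1.le) ht).trans ?_
      have : max 1 ‖(e:ℂ) - Complex.I‖ ≤ 2 := by
        refine max_le (by norm_num) ((norm_sub_le _ _).trans ?_)
        simp [abs_of_pos he.1]; linarith [he.2]
      have : 0 ≤ min 1 t * t ^ (-1 - δ) := by positivity
      gcongr
    · refine Eventually.of_forall fun t => ?_
      have : Continuous (fun z : ℂ => (Complex.exp (-z * t) - 1) * ((t ^ (-1 - δ) : ℝ) : ℂ)) := by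
        fun_prop
      exact (this.tendsto _).comp hlim
  have B : Tendsto (fun e : ℝ => FF δ ((e : ℂ) - Complex.I)) (𝓝[>] 0)
      (𝓝 ((-Complex.I) ^ (δ : ℂ) * FF δ 1)) := by
    have c : ContinuousAt (fun z : ℂ => z ^ (δ : ℂ) * FF δ 1) (-Complex.I) := by
      have : (-Complex.I) ∈ Complex.slitPlane := by simp [Complex.slitPlane]
      exact ContinuousAt.mul (continuousAt_cpow_const this) continuousAt_const
    refine (c.tendsto.comp hlim).congr' ?_
    filter_upwards [self_mem_nhdsWithin] with e he
    exact (FFeq δ h0 h1 (z := (e : ℂ) - Complex.I) (by simpa using he)).symm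
  rw [tendsto_nhds_unique A B]
  congr 1
  rw [Complex.cpow_def_of_ne_zero (by simp), Complex.log_neg_I]
  congr 1; ring

open MeasureTheory Filter Topology in
lemma FF1 (δ : ℝ) (h0 : 0 < δ) (h1 : δ < 1) : ∃ K : ℝ, 0 < K ∧ FF δ 1 = -(K : ℂ) := by
  have e : ∀ t : ℝ, (Complex.exp (-1 * t) - 1) * ((t ^ (-1 - δ) : ℝ) : ℂ) =
     (((Real.exp (-t) - 1) * t ^ (-1 - δ) : ℝ) : ℂ) := by
    intro t; push_cast; ring_nf
  have hi := FFint δ h0 h1 (z := 1) (by simp)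
  refine ⟨∫ t in Ioi (0:ℝ), (1 - Real.exp (-t)) * t ^ (-1 - δ), ?_, ?_⟩
  · simp only [e] at hi
    have hi2 : IntegrableOn (fun t => (1 - Real.exp (-t)) * t ^ (-1 - δ)) (Ioi 0) := by
      have := hi.re.neg
      refine Integrable.congr this (Eventually.of_forall fun t => ?_)
      simp only [Pi.neg_apply, RCLike.re_to_complex, Complex.ofReal_re]; ring
    have hp : ∀ t ∈ Ioi (0:ℝ), 0 < (1 - Real.exp (-t)) * t ^ (-1 - δ) := by
      intro t ht
      have ht : 0 < t := ht
      have : Real.exp (-t) < 1 := by rw [Real.exp_lt_one_iff]; linarith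
      have : 0 < 1 - Real.exp (-t) := by linarith
      positivity
    rw [setIntegral_pos_iff_support_of_nonneg_ae _ hi2]
    · rw [inter_eq_right.2]
      · simp
      · intro t ht; exact (hp t ht).ne'
    · exact (ae_restrict_iff' measurableSet_Ioi).2 (Eventually.of_forall fun t ht => (hp t ht).le)
  · unfold FF
    simp only [e]
    rw [integral_complex_ofReal, ← Complex.ofReal_neg, ← integral_neg]
    congr 2; ext t; ring

lemma bern_sign (j : ℕ) : ∀ x ∈ Ioo (0:ℝ) (1/2), 0 < (-1:ℝ) ^ (j+1) * bernoulliFun (2*j+1) x := by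
  induction j with
  | zero => intro x hx; simp; linarith [hx.2]
  | succ j ih =>
    intro x hx
    set q : ℝ → ℝ := fun x => (-1:ℝ) ^ (j+1+1) * bernoulliFun (2*(j+1)+1) x with hq
    have hd1 : ∀ x, HasDerivAt q ((-1:ℝ) ^ (j+1+1) * ((2*(j+1)+1 : ℕ) * bernoulliFun (2*j+2) x)) x :=
      fun x => (hasDerivAt_bernoulliFun (2*(j+1)+1) x).const_mul _
    have hd2 : ∀ x, HasDerivAt (fun x => (-1:ℝ) ^ (j+1+1) * ((2*(j+1)+1 : ℕ) * bernoulliFun (2*j+2) x))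
        ((-1:ℝ) ^ (j+1+1) * ((2*(j+1)+1 : ℕ) * ((2*j+2 : ℕ) * bernoulliFun (2*j+1) x))) x :=
      fun x => ((hasDerivAt_bernoulliFun (2*j+2) x).const_mul _).const_mul _
    have e1 : deriv q = fun x => (-1:ℝ) ^ (j+1+1) * ((2*(j+1)+1 : ℕ) * bernoulliFun (2*j+2) x) :=
      funext fun x => (hd1 x).deriv
    have hsc : StrictConcaveOn ℝ (Icc (0:ℝ) (1/2)) q := by
      refine strictConcaveOn_of_deriv2_neg (convex_Icc _ _)
        (fun x _ => (hd1 x).continuousAt.continuousWithinAt) ?_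
      intro y hy
      rw [interior_Icc] at hy
      rw [Function.iterate_succ, Function.iterate_one, Function.comp, e1, (hd2 y).deriv]
      have := ih y hy
      have h2 : (0:ℝ) < (2*(j+1)+1 : ℕ) * (2*j+2 : ℕ) := by positivity
      have := mul_pos h2 this
      rw [pow_succ]
      linarith
    have q0 : q 0 = 0 := by
      have h1 := bernoulliFun_eval_one_sub (k := 2*(j+1)+1) (x := 0)
      rw [sub_zero, bernoulliFun_endpoints_eq_of_ne_one (by omega), Odd.neg_one_pow ⟨_, rfl⟩] at h1
      have : bernoulliFun (2*(j+1)+1) 0 = 0 := by linarith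
      simp [hq, this]
    have qh : q (1/2) = 0 := by
      have := bernoulliFun_eval_half_eq_zero (j+1)
      rw [← one_div] at this
      simp only [hq, this, mul_zero]
    have := hsc.2 (show (0:ℝ) ∈ Icc (0:ℝ) (1/2) by simp) (show (1/2:ℝ) ∈ Icc (0:ℝ) (1/2) by simp)
      (by norm_num) (show 0 < 1-2*x by linarith [hx.2]) (show 0 < 2*x by linarith [hx.1]) (by ring)
    rw [q0, qh] at this
    simp only [smul_eq_mul, mul_zero, add_zero, zero_add] at this
    rwa [show 2 * x * (1/2) = x by ring] at this

/-- Periodic normalized Bernoulli function. -/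
noncomputable def PP (j : ℕ) (x : ℝ) : ℝ :=
  ∑' n : ℕ, 1 / (n : ℝ) ^ (2 * (j+1)) * Real.cos (2 * Real.pi * n * x)

lemma PPsm (j : ℕ) : Summable (fun n : ℕ => 1 / (n : ℝ) ^ (2 * (j+1))) :=
  Real.summable_one_div_nat_pow.2 (by omega)

lemma PPbd (j : ℕ) (x : ℝ) (n : ℕ) :
    ‖1 / (n : ℝ) ^ (2 * (j+1)) * Real.cos (2 * Real.pi * n * x)‖ ≤ 1 / (n : ℝ) ^ (2 * (j+1)) := by
  rw [norm_mul, Real.norm_of_nonneg (by positivity)]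
  exact mul_le_of_le_one_right (by positivity) (Real.abs_cos_le_one _)

lemma PPsum (j : ℕ) (x : ℝ) :
    HasSum (fun n : ℕ => 1 / (n : ℝ) ^ (2 * (j+1)) * Real.cos (2 * Real.pi * n * x)) (PP j x) :=
  ((PPsm j).of_norm_bounded (PPbd j x)).hasSum

lemma PPcont (j : ℕ) : Continuous (PP j) := by
  unfold PP
  exact continuous_tsum (fun n => by fun_prop) (PPsm j) (fun n x => PPbd j x n)

lemma PPper (j : ℕ) (x : ℝ) : PP j (x + 1) = PP j x := by
  unfold PP
  congr 1; ext n
  rw [show 2 * Real.pi * n * (x+1) = 2 * Real.pi * n * x + n * (2 * Real.pi) by ring,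
    Real.cos_add_nat_mul_two_pi]

lemma PPeven (j : ℕ) (x : ℝ) : PP j (-x) = PP j x := by
  unfold PP
  congr 1; ext n
  rw [mul_neg, Real.cos_neg]

lemma PPone (j : ℕ) (x : ℝ) : PP j (1 - x) = PP j x := by
  rw [← PPeven j x, ← PPper j (-x)]; ring_nf

lemma PPbern (j : ℕ) : ∃ c : ℝ, 0 < c ∧ ∀ x ∈ Icc (0:ℝ) 1,
    PP j x = c * ((-1) ^ j * bernoulliFun (2*j+2) x) := by
  refine ⟨(2 * Real.pi) ^ (2 * (j+1)) / 2 / (2 * (j+1)).factorial, by positivity, fun x hx => ?_⟩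
  have := (hasSum_one_div_nat_pow_mul_cos (k := j+1) (by omega) hx).unique (PPsum j x)
  rw [← this, pow_add, pow_add, bernoulliFun]
  ring_nf

lemma PPderiv (j : ℕ) : ∀ x ∈ Ioo (0:ℝ) (1/2), ∃ d < 0, HasDerivAt (PP j) d x := by
  intro x hx
  obtain ⟨c, hc, h⟩ := PPbern j
  have hd := ((hasDerivAt_bernoulliFun (2*j+2) x).const_mul ((-1:ℝ)^j)).const_mul c
  refine ⟨_, ?_, hd.congr_of_eventuallyEq ?_⟩
  · have := bern_sign j x hx
    have h2 : 0 < c * (2*j+2 : ℕ) := by positivity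
    have := mul_pos h2 this
    rw [pow_succ] at this
    simp only [show 2*j+2-1 = 2*j+1 by omega]
    linarith
  · have : Icc (0:ℝ) 1 ∈ nhds x := Icc_mem_nhds hx.1 (by linarith [hx.2])
    filter_upwards [this] with y hy using h y hy

lemma PPderiv' (j : ℕ) : ∀ x ∈ Ioo (1/2:ℝ) 1, ∃ d > 0, HasDerivAt (PP j) d x := by
  intro x hx
  obtain ⟨d, hd, h⟩ := PPderiv j (1 - x) ⟨by linarith [hx.2], by linarith [hx.1]⟩
  refine ⟨-d, by linarith, ?_⟩
  have h2 : HasDerivAt (fun x : ℝ => 1 - x) (-1) x := by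
    simpa using (hasDerivAt_id x).const_sub 1
  have := HasDerivAt.comp x h h2
  rw [mul_neg_one] at this
  convert! this using 1
  ext y; exact (PPone j y).symm

lemma PPanti (j : ℕ) : StrictAntiOn (PP j) (Icc 0 (1/2)) := by
  refine strictAntiOn_of_deriv_neg (convex_Icc _ _) (PPcont j).continuousOn ?_
  intro x hx
  rw [interior_Icc] at hx
  obtain ⟨d, hd, h⟩ := PPderiv j x hx
  rw [h.deriv]; exact hd

lemma PPint (j : ℕ) (s : ℝ) : ∫ t in (0:ℝ)..1, PP j (t + s) = 0 := by
  rw [intervalIntegral.integral_comp_add_right]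
  have hp : Function.Periodic (PP j) 1 := PPper j
  have := hp.intervalIntegral_add_eq s 0
  rw [show (0:ℝ) + s = s by ring, add_comm 1 s, this, zero_add]
  obtain ⟨c, hc, h⟩ := PPbern j
  rw [intervalIntegral.integral_congr (g := fun x => c * ((-1) ^ j * bernoulliFun (2*j+2) x))]
  · rw [intervalIntegral.integral_const_mul, intervalIntegral.integral_const_mul,
      integral_bernoulliFun_eq_zero (by omega)]; simp
  · intro x hx
    rw [uIcc_of_le zero_le_one] at hx
    exact h x hx

lemma PPabs (j : ℕ) (x : ℝ) : |PP j x| ≤ PP j 0 := by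
  have h0 : PP j 0 = ∑' n : ℕ, 1 / (n : ℝ) ^ (2 * (j+1)) := by simp [PP]
  rw [h0]
  exact tsum_of_norm_bounded (PPsm j).hasSum (PPbd j x)

open MeasureTheory Filter Topology in
lemma poslem (δ : ℝ) (h0 : 0 < δ) (E : ℝ → ℝ) (hc : Continuous E) (hper : ∀ t, E (t+1) = E t)
    (hE0 : E 0 = 0) (τ : ℝ) (hτ : 0 < τ) (hτ1 : τ ≤ 1) (h1 : ∀ t ∈ Ioo 0 τ, 0 < E t)
    (h2 : ∀ t ∈ Icc τ 1, E t ≤ 0) (hmean : 0 ≤ ∫ t in (0:ℝ)..1, E t)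
    (hi : IntegrableOn (fun t => E t * t ^ (-1 - δ)) (Ioi 0)) :
    0 < ∫ t in Ioi (0:ℝ), E t * t ^ (-1 - δ) := by
  have hii : ∀ a b : ℝ, 0 ≤ a → a ≤ b →
      IntervalIntegrable (fun t => E t * t ^ (-1 - δ)) volume a b := by
    intro a b ha hab
    rw [intervalIntegrable_iff_integrableOn_Ioc_of_le hab]
    exact hi.mono_set fun t ht => lt_of_le_of_lt ha ht.1
  have hperj : ∀ (j : ℕ) t, E (t + j) = E t := by
    intro j
    induction j with
    | zero => simp
    | succ j ih => intro t; push_cast; rw [← add_assoc, hper, ih]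
  have hEi : ∀ a b, IntervalIntegrable E volume a b := fun a b => hc.intervalIntegrable a b

  have hpt : ∀ (j : ℕ), ∀ t ∈ Icc (0:ℝ) 1,
      0 ≤ E t * (t + j) ^ (-1 - δ) - E t * (τ + j) ^ (-1 - δ) := by
    intro j t ht
    rw [← mul_sub]
    rcases eq_or_lt_of_le ht.1 with h | h
    · rw [← h, hE0, zero_mul]
    rcases lt_or_ge t τ with h' | h'
    · apply mul_nonneg (h1 t ⟨h, h'⟩).le
      rw [sub_nonneg]
      exact Real.rpow_le_rpow_of_nonpos (by positivity) (by linarith) (by linarith)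
    · apply mul_nonneg_of_nonpos_of_nonpos (h2 t ⟨h', ht.2⟩)
      rw [sub_nonpos]
      exact Real.rpow_le_rpow_of_nonpos (by positivity) (by linarith) (by linarith)
  have hshift : ∀ j : ℕ, IntervalIntegrable (fun t => E t * (t + j) ^ (-1 - δ)) volume 0 1 := by
    intro j
    have := (hii j (j+1) (by positivity) (by linarith)).comp_add_right (j:ℝ)
    simp only [hperj, sub_self, add_sub_cancel_left] at this
    exact this
  have hsub : ∀ j : ℕ, ∫ t in (0:ℝ)..1, (E t * (t + j) ^ (-1 - δ) - E t * (τ + j) ^ (-1 - δ)) =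
      (∫ t in (0:ℝ)..1, E t * (t + j) ^ (-1 - δ)) - (∫ t in (0:ℝ)..1, E t) * (τ + j) ^ (-1 - δ) := by
    intro j
    rw [intervalIntegral.integral_sub (hshift j) ((hEi 0 1).mul_const _),
      intervalIntegral.integral_mul_const]
  have hj : ∀ j : ℕ, 0 ≤ ∫ t in (j:ℝ)..(j+1), E t * t ^ (-1 - δ) := by
    intro j
    have e : ∫ t in (0:ℝ)..1, E t * (t + j) ^ (-1 - δ) = ∫ t in (j:ℝ)..(j+1), E t * t ^ (-1 - δ) := by
      have := intervalIntegral.integral_comp_add_right (a := 0) (b := 1)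
        (fun t => E t * t ^ (-1 - δ)) (j:ℝ)
      simp only [hperj] at this
      rw [this, zero_add, add_comm]
    rw [← e]
    have hn := intervalIntegral.integral_nonneg (μ := volume) zero_le_one (hpt j)
    rw [hsub] at hn
    have : 0 ≤ (∫ t in (0:ℝ)..1, E t) * (τ + j) ^ (-1 - δ) := by positivity
    linarith
  have hfirst : 0 < ∫ t in (0:ℝ)..1, E t * t ^ (-1 - δ) := by
    have hs := hsub 0
    have hp := hpt 0
    have hs0 := hshift 0
    simp only [Nat.cast_zero, add_zero] at hs hp hs0
    have hg : IntervalIntegrable (fun t => E t * t ^ (-1 - δ) - E t * τ ^ (-1 - δ)) volume 0 1 :=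
      hs0.sub ((hEi 0 1).mul_const _)
    have hg1 : IntervalIntegrable (fun t => E t * t ^ (-1 - δ) - E t * τ ^ (-1 - δ)) volume 0 τ :=
      hg.mono_set (by rw [uIcc_of_le hτ.le, uIcc_of_le zero_le_one]; exact Icc_subset_Icc le_rfl hτ1)
    have hg2 : IntervalIntegrable (fun t => E t * t ^ (-1 - δ) - E t * τ ^ (-1 - δ)) volume τ 1 :=
      hg.mono_set (by rw [uIcc_of_le hτ1, uIcc_of_le zero_le_one]; exact Icc_subset_Icc hτ.le le_rfl)
    have a1 : 0 < ∫ t in (0:ℝ)..τ, (E t * t ^ (-1 - δ) - E t * τ ^ (-1 - δ)) := by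
      refine intervalIntegral.intervalIntegral_pos_of_pos_on hg1 (fun t ht => ?_) hτ
      rw [← mul_sub]
      apply mul_pos (h1 t ht)
      rw [sub_pos]
      exact Real.rpow_lt_rpow_of_neg ht.1 ht.2 (by linarith)
    have a2 : 0 ≤ ∫ t in τ..1, (E t * t ^ (-1 - δ) - E t * τ ^ (-1 - δ)) :=
      intervalIntegral.integral_nonneg hτ1 fun t ht => hp t ⟨hτ.le.trans ht.1, ht.2⟩
    have a3 := intervalIntegral.integral_add_adjacent_intervals hg1 hg2
    have : 0 ≤ (∫ t in (0:ℝ)..1, E t) * τ ^ (-1 - δ) := by positivity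
    linarith
  have hlim := intervalIntegral_tendsto_integral_Ioi 0 hi tendsto_natCast_atTop_atTop
  have hn : ∀ n : ℕ, (∫ t in (0:ℝ)..1, E t * t ^ (-1 - δ)) ≤
      ∫ t in (0:ℝ)..((n+1:ℕ):ℝ), E t * t ^ (-1 - δ) := by
    intro n
    induction n with
    | zero => simp
    | succ n ih =>
      have h3 := intervalIntegral.integral_add_adjacent_intervals
        (hii 0 ((n+1:ℕ):ℝ) le_rfl (by positivity))
        (hii ((n+1:ℕ):ℝ) ((n+1+1:ℕ):ℝ) (by positivity) (by push_cast; linarith))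
      have := hj (n+1)
      push_cast at this ih h3 ⊢
      linarith
  refine hfirst.trans_le (ge_of_tendsto hlim ?_)
  filter_upwards [eventually_ge_atTop 1] with n hn1
  obtain ⟨m, rfl⟩ := Nat.exists_eq_add_of_le' hn1
  exact hn m

open MeasureTheory Filter Topology in
lemma zeta_formula (j : ℕ) (a δ : ℝ) (h0 : 0 ≤ δ) (h1 : δ < 1) :
    ∃ A : ℝ, 0 < A ∧ ∃ V : ℝ,
      HasSum (fun n : ℕ => 1 / (n : ℝ) ^ (2 * (j+1)) *
        ((n:ℝ) ^ δ * Real.cos (2 * Real.pi * n * a + Real.pi * δ / 2))) V ∧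
      hurwitzZeta (a : UnitAddCircle) ((-((2*j : ℕ) : ℝ) - 1 + δ : ℝ) : ℂ) =
        ((A * ((-1) ^ (j+1) * V) : ℝ) : ℂ) := by
  set s : ℝ := 2 * (j+1) - δ with hs
  have hs1 : 1 < s := by
    have : (0:ℝ) ≤ j := by positivity
    linarith
  have hsre : 1 < (s : ℂ).re := by simpa using hs1
  have hz := hurwitzZeta_one_sub (a : UnitAddCircle) (s := (s:ℂ))
    (fun n h => by
      have : s = -(n:ℝ) := by exact_mod_cast h
      have : (0:ℝ) ≤ n := by positivity
      linarith)
    (Or.inr (by exact_mod_cast hs1.ne'))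
  have e1 := hasSum_expZeta_of_one_lt_re a hsre
  have e2 := hasSum_expZeta_of_one_lt_re (-a) hsre
  have e3 := (e1.mul_left (Complex.exp (-Real.pi * Complex.I * s / 2))).add
    (e2.mul_left (Complex.exp (Real.pi * Complex.I * s / 2)))
  have et : ∀ n : ℕ, Complex.exp (-Real.pi * Complex.I * s / 2) *
        (Complex.exp (2 * Real.pi * Complex.I * a * n) / n ^ (s:ℂ)) +
      Complex.exp (Real.pi * Complex.I * s / 2) *
        (Complex.exp (2 * Real.pi * Complex.I * (-a : ℝ) * n) / n ^ (s:ℂ)) =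
      ((2 * (-1) ^ (j+1) * (1 / (n : ℝ) ^ (2 * (j+1)) *
        ((n:ℝ) ^ δ * Real.cos (2 * Real.pi * n * a + Real.pi * δ / 2))) : ℝ) : ℂ) := by
    intro n
    rcases Nat.eq_zero_or_pos n with rfl | hn
    · have : (s:ℂ) ≠ 0 := by
        have : s ≠ 0 := by linarith
        exact_mod_cast this
      simp [this]
    have hn' : (0:ℝ) < n := by exact_mod_cast hn
    have hpw : ((n:ℂ)) ^ (s:ℂ) = (((n:ℝ) ^ (2 * (j+1)) / (n:ℝ) ^ δ : ℝ) : ℂ) := by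
      rw [← Complex.ofReal_natCast, ← Complex.ofReal_cpow hn'.le, hs, Real.rpow_sub hn']
      congr 2
      rw [← Real.rpow_natCast]; push_cast; rfl
    have hcos : (Real.cos (2 * Real.pi * n * a - Real.pi * s / 2) : ℝ) =
        (-1) ^ (j+1) * Real.cos (2 * Real.pi * n * a + Real.pi * δ / 2) := by
      rw [← Real.cos_sub_nat_mul_pi]
      congr 1
      rw [hs]; push_cast; ring
    have hc2 : Complex.exp (-Real.pi * Complex.I * s / 2) *
        (Complex.exp (2 * Real.pi * Complex.I * a * n)) +
      Complex.exp (Real.pi * Complex.I * s / 2) *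
        (Complex.exp (2 * Real.pi * Complex.I * (-a : ℝ) * n)) =
        ((2 * Real.cos (2 * Real.pi * n * a - Real.pi * s / 2) : ℝ) : ℂ) := by
      rw [← Complex.exp_add, ← Complex.exp_add]
      push_cast
      rw [Complex.two_cos]
      congr 1 <;> congr 1 <;> ring
    rw [← mul_div_assoc, ← mul_div_assoc, ← add_div, hc2, hpw, hcos, ← Complex.ofReal_div]
    congr 1
    field_simp
  simp only [et] at e3
  have hp : (0:ℝ) < (2 * Real.pi) ^ (-s) * Real.Gamma s :=
    mul_pos (by positivity) (Real.Gamma_pos_of_pos (by linarith))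
  have hsm : Summable (fun n : ℕ => (2 * (-1) ^ (j+1) * (1 / (n : ℝ) ^ (2 * (j+1)) *
        ((n:ℝ) ^ δ * Real.cos (2 * Real.pi * n * a + Real.pi * δ / 2))) : ℝ)) :=
    Complex.summable_ofReal.1 e3.summable
  have hne : (2 * (-1:ℝ) ^ (j+1)) ≠ 0 := by simp
  have hsm' := (summable_mul_left_iff hne).1 hsm
  refine ⟨2 * ((2 * Real.pi) ^ (-s) * Real.Gamma s), by positivity, _, hsm'.hasSum, ?_⟩
  have e4 := e3.unique (Complex.hasSum_ofReal.2 (hsm'.hasSum.mul_left (2 * (-1:ℝ) ^ (j+1))))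
  rw [show ((-((2*j : ℕ) : ℝ) - 1 + δ : ℝ) : ℂ) = 1 - (s:ℂ) by rw [hs]; push_cast; ring, hz]
  have e5 : ((-a : ℝ) : UnitAddCircle) = -(a : UnitAddCircle) := rfl
  rw [e5] at e4
  rw [e4, Complex.Gamma_ofReal]
  have : (2 * (Real.pi:ℂ)) ^ (-(s:ℂ)) = (((2 * Real.pi) ^ (-s) : ℝ) : ℂ) := by
    rw [Complex.ofReal_cpow (by positivity)]; push_cast; rfl
  rw [this]
  push_cast
  ring

open MeasureTheory Filter Topology in
lemma termI (a δ : ℝ) (h0 : 0 < δ) (h1 : δ < 1) : ∃ K : ℝ, 0 < K ∧ ∃ C : ℝ, ∀ n : ℕ, 0 < n →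
    IntegrableOn (fun t : ℝ => (Real.cos (2 * Real.pi * n * (a - t)) -
        Real.cos (2 * Real.pi * n * a)) * t ^ (-1 - δ)) (Ioi 0) ∧
    (∫ t in Ioi (0:ℝ), (Real.cos (2 * Real.pi * n * (a - t)) -
        Real.cos (2 * Real.pi * n * a)) * t ^ (-1 - δ)) =
      -K * ((n:ℝ) ^ δ * Real.cos (2 * Real.pi * n * a + Real.pi * δ / 2)) ∧
    (∫ t in Ioi (0:ℝ), ‖(Real.cos (2 * Real.pi * n * (a - t)) -
        Real.cos (2 * Real.pi * n * a)) * t ^ (-1 - δ)‖) ≤ C * (n:ℝ) ^ δ := by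
  obtain ⟨K, hK, hF1⟩ := FF1 δ h0 h1
  refine ⟨K * (2 * Real.pi) ^ δ, by positivity, (2 * Real.pi) ^ δ *
    ∫ t in Ioi (0:ℝ), (t ^ (-1 - δ)) • ‖Complex.exp (-(-Complex.I) * t) - 1‖, ?_⟩
  intro n hn
  set l : ℝ := 2 * Real.pi * n with hl
  have hl0 : 0 < l := by positivity
  have hre : 0 ≤ ((l:ℂ) * (-Complex.I)).re := by simp
  have hi := FFint δ h0 h1 hre
  set u : ℂ := Complex.exp (-(l * a : ℝ) * Complex.I) with hu
  have hun : ‖u‖ = 1 := by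
    rw [hu, ← Complex.ofReal_neg, Complex.norm_exp_ofReal_mul_I]
  have pt : ∀ t : ℝ, (u * ((Complex.exp (-((l:ℂ) * (-Complex.I)) * t) - 1) *
      ((t ^ (-1 - δ) : ℝ) : ℂ))).re =
      (Real.cos (l * (a - t)) - Real.cos (l * a)) * t ^ (-1 - δ) := by
    intro t
    rw [← mul_assoc, Complex.re_mul_ofReal, mul_sub, mul_one, hu, ← Complex.exp_add,
      show -((l * a : ℝ) : ℂ) * Complex.I + -((l:ℂ) * (-Complex.I)) * t =
        ((-(l * (a - t)) : ℝ) : ℂ) * Complex.I by push_cast; ring,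
      ← Complex.ofReal_neg, Complex.sub_re, Complex.exp_ofReal_mul_I_re,
      Complex.exp_ofReal_mul_I_re, Real.cos_neg, Real.cos_neg]
  have hi2 := (hi.const_mul u)
  have hi3 := hi2.re
  have hi4 : IntegrableOn (fun t : ℝ => (Real.cos (l * (a - t)) - Real.cos (l * a)) * t ^ (-1 - δ))
      (Ioi 0) := by
    refine hi3.congr (Eventually.of_forall fun t => ?_)
    exact pt t
  refine ⟨hi4, ?_, ?_⟩
  · have e1 := integral_re hi2
    have e2 : (∫ t in Ioi (0:ℝ), (Real.cos (l * (a - t)) - Real.cos (l * a)) * t ^ (-1 - δ)) =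
      (u * FF δ ((l:ℂ) * (-Complex.I))).re := by
      rw [FF, ← integral_const_mul]
      rw [show ∀ z : ℂ, z.re = RCLike.re z from fun z => rfl, ← e1]
      congr 1
      ext t
      exact (pt t).symm
    rw [e2, FFscale δ l hl0, FFI δ h0 h1, hF1, hu,
      show Complex.exp (-(l * a : ℝ) * Complex.I) * (((l ^ δ : ℝ) : ℂ) *
        (Complex.exp (-(Real.pi * δ / 2 * Complex.I)) * -(K:ℂ))) =
        (Complex.exp (-(l * a : ℝ) * Complex.I) *
        (Complex.exp (-(Real.pi * δ / 2 * Complex.I)))) * ((-(l ^ δ) * K : ℝ) : ℂ) by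
          push_cast; ring,
      Complex.re_mul_ofReal, ← Complex.exp_add,
      show -((l * a : ℝ) : ℂ) * Complex.I + -(Real.pi * δ / 2 * Complex.I) =
        ((-(l * a + Real.pi * δ / 2) : ℝ) : ℂ) * Complex.I by push_cast; ring,
      Complex.exp_ofReal_mul_I_re, Real.cos_neg, hl,
      Real.mul_rpow (by positivity) (by positivity)]
    ring
  · have e1 := scale (fun t : ℝ => ‖Complex.exp (-(-Complex.I) * t) - 1‖) δ l hl0
    rw [mul_right_comm ((2 * Real.pi) ^ δ), ← Real.mul_rpow (by positivity) (by positivity), ← hl]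
    change _ = l ^ δ * _ at e1
    rw [← e1]
    refine setIntegral_mono_on hi4.norm ?_ measurableSet_Ioi ?_
    · refine hi.norm.congr ((ae_restrict_iff' measurableSet_Ioi).2
        (Eventually.of_forall fun t ht => ?_))
      have hw : 0 ≤ t ^ (-1 - δ) := Real.rpow_nonneg (le_of_lt ht) _
      simp only [norm_mul, Complex.norm_real, Real.norm_of_nonneg hw, smul_eq_mul]
      rw [mul_comm]
      push_cast
      ring_nf
    · intro t ht
      have hw : 0 ≤ t ^ (-1 - δ) := Real.rpow_nonneg (le_of_lt ht) _
      rw [← pt t, smul_eq_mul]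
      refine (Complex.abs_re_le_norm _).trans (le_of_eq ?_)
      simp only [norm_mul, Complex.norm_real, Real.norm_of_nonneg hw, hun]
      rw [one_mul, mul_comm]
      push_cast
      ring_nf

open MeasureTheory Filter Topology in
lemma mainI (j : ℕ) (a δ : ℝ) (h0 : 0 < δ) (h1 : δ < 1) : 
    IntegrableOn (fun t : ℝ => (PP j (a - t) - PP j a) * t ^ (-1 - δ)) (Ioi 0) ∧
    ∃ A : ℝ, 0 < A ∧ hurwitzZeta (a : UnitAddCircle) ((-((2*j : ℕ) : ℝ) - 1 + δ : ℝ) : ℂ) =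
        ((A * ((-1) ^ j * ∫ t in Ioi (0:ℝ), (PP j (a - t) - PP j a) * t ^ (-1 - δ)) : ℝ) : ℂ) := by
  obtain ⟨K, hK, C, hT⟩ := termI a δ h0 h1
  obtain ⟨A, hA, V, hV, hz⟩ := zeta_formula j a δ h0.le h1
  set F : ℕ → ℝ → ℝ := fun n t => 1 / (n : ℝ) ^ (2 * (j+1)) * ((Real.cos (2 * Real.pi * n * (a - t)) -
        Real.cos (2 * Real.pi * n * a)) * t ^ (-1 - δ)) with hF
  have F0 : F 0 = fun _ => 0 := by ext t; simp [hF]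
  have hFi : ∀ n, Integrable (F n) (volume.restrict (Ioi 0)) := by
    intro n
    rcases Nat.eq_zero_or_pos n with rfl | hn
    · rw [F0]; exact integrable_zero _ _ _
    · exact (hT n hn).1.const_mul _
  have hFe : ∀ n, ∫ t in Ioi (0:ℝ), F n t = -K * (1 / (n : ℝ) ^ (2 * (j+1)) *
        ((n:ℝ) ^ δ * Real.cos (2 * Real.pi * n * a + Real.pi * δ / 2))) := by
    intro n
    rcases Nat.eq_zero_or_pos n with rfl | hn
    · rw [F0]; simp
    · rw [hF]; simp only
      rw [integral_const_mul, (hT n hn).2.1]; ring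
  have hFn : Summable (fun n => ∫ t in Ioi (0:ℝ), ‖F n t‖) := by
    have hs : Summable (fun n : ℕ => C * (1 / (n:ℝ) ^ (2 * (j+1) - δ))) := by
      refine (Real.summable_one_div_nat_rpow.2 ?_).mul_left C
      have : (0:ℝ) ≤ j := by positivity
      linarith
    refine Summable.of_nonneg_of_le (fun n => integral_nonneg fun t => norm_nonneg _) (fun n => ?_) hs
    rcases Nat.eq_zero_or_pos n with rfl | hn
    · rw [F0]
      have : (2 * ((j:ℝ)+1) - δ) ≠ 0 := by
        have : (0:ℝ) ≤ j := by positivity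
        linarith
      simp [Real.zero_rpow this]
    · have hn' : (0:ℝ) < n := by exact_mod_cast hn
      rw [hF]; simp only
      simp_rw [norm_mul (1 / (n : ℝ) ^ (2 * (j+1)))]
      rw [integral_const_mul, Real.norm_of_nonneg (by positivity)]
      refine (mul_le_mul_of_nonneg_left (hT n hn).2.2 (by positivity)).trans (le_of_eq ?_)
      rw [Real.rpow_sub hn', show (2 * ((j:ℝ)+1)) = ((2 * (j+1) : ℕ) : ℝ) by push_cast; rfl,
        Real.rpow_natCast]
      field_simp
  have hsum : ∀ t, HasSum (fun n => F n t) ((PP j (a - t) - PP j a) * t ^ (-1 - δ)) := by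
    intro t
    have := ((PPsum j (a - t)).sub (PPsum j a)).mul_right (t ^ (-1 - δ))
    refine this.congr_fun ?_
    intro n
    simp only [hF]; ring
  have hts : ∀ t, ∑' n, F n t = (PP j (a - t) - PP j a) * t ^ (-1 - δ) := fun t => (hsum t).tsum_eq
  have hI := hasSum_integral_of_summable_integral_norm hFi hFn
  simp only [hts, hFe] at hI
  have hIV := hI.unique (hV.mul_left (-K))
  refine ⟨⟨?_, ?_⟩, A / K, by positivity, ?_⟩
  · apply Measurable.aestronglyMeasurable
    have := (PPcont j).measurable
    fun_prop
  · have hle : ∫⁻ t in Ioi (0:ℝ), ‖(PP j (a - t) - PP j a) * t ^ (-1 - δ)‖ₑ ≤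
        ∑' n, ∫⁻ t in Ioi (0:ℝ), ‖F n t‖ₑ := by
      rw [← lintegral_tsum fun n => (hFi n).1.enorm]
      refine lintegral_mono fun t => ?_
      simp only
      rw [← hts t]
      exact enorm_tsum_le_tsum_enorm
    refine lt_of_le_of_lt hle ?_
    simp_rw [← fun n => ofReal_integral_norm_eq_lintegral_enorm (hFi n)]
    exact hFn.tsum_ofReal_lt_top
  · rw [hz, hIV, pow_succ]
    congr 1
    field_simp

open MeasureTheory Filter Topology in
lemma near1 (E : ℝ → ℝ) (B : ℝ) (hB : ∀ t, |E t| ≤ B) (e : ℝ) (he : 0 < e)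
    (hd : HasDerivAt E e 0) (hE0 : E 0 = 0)
    (hi : ∀ δ : ℝ, 0 < δ → δ < 1 → IntegrableOn (fun t => E t * t ^ (-1 - δ)) (Ioi 0)) :
    ∃ δ : ℝ, 0 < δ ∧ δ < 1 ∧ 0 < ∫ t in Ioi (0:ℝ), E t * t ^ (-1 - δ) := by
  have hB0 : 0 ≤ B := (abs_nonneg _).trans (hB 0)
  obtain ⟨t0, ht0, hlow⟩ : ∃ t0 > 0, ∀ t ∈ Ioc (0:ℝ) t0, e / 2 * t ≤ E t := by
    have h := hd.hasDerivWithinAt (s := Ioi 0)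
    rw [hasDerivWithinAt_iff_tendsto_slope' (by simp)] at h
    have h2 := h.eventually (lt_mem_nhds (show e / 2 < e by linarith))
    obtain ⟨u, hu, hu2⟩ := mem_nhdsGT_iff_exists_Ioc_subset.1 h2
    refine ⟨u, hu, fun t ht => ?_⟩
    have := hu2 ht
    simp only [mem_ofPred_eq, slope_def_field, hE0, sub_zero] at this
    rw [lt_div_iff₀ ht.1] at this
    exact this.le
  set q := e / 2 * t0 with hq
  have hq0 : 0 < q := by positivity
  set δ := (2 * B + q) / (2 * (q + B)) with hδ
  have hδ0 : 0 < δ := by positivity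
  have hδ1 : δ < 1 := by rw [hδ, div_lt_one (by positivity)]; linarith
  have hδq : B < δ * (q + B) := by
    rw [hδ, div_mul_eq_mul_div, lt_div_iff₀ (by positivity)]; nlinarith
  refine ⟨δ, hδ0, hδ1, ?_⟩
  have hI := hi δ hδ0 hδ1
  have hI1 : IntegrableOn (fun t => E t * t ^ (-1 - δ)) (Ioc 0 t0) := hI.mono_set fun t ht => ht.1
  have hI2 : IntegrableOn (fun t => E t * t ^ (-1 - δ)) (Ioi t0) :=
    hI.mono_set fun t ht => ht0.trans ht
  rw [← Ioc_union_Ioi_eq_Ioi ht0.le, setIntegral_union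
    (Ioc_disjoint_Ioi le_rfl) measurableSet_Ioi hI1 hI2]
  have b1 : e / 2 * (t0 ^ (1 - δ) / (1 - δ)) ≤ ∫ t in Ioc 0 t0, E t * t ^ (-1 - δ) := by
    have hr : ∫ t in (0:ℝ)..t0, t ^ (-δ) = t0 ^ (1 - δ) / (1 - δ) := by
      rw [integral_rpow (Or.inl (by linarith)), Real.zero_rpow (by linarith)]
      ring_nf
    have hri : IntegrableOn (fun t : ℝ => t ^ (-δ)) (Ioc 0 t0) := by
      rw [← intervalIntegrable_iff_integrableOn_Ioc_of_le ht0.le]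
      exact intervalIntegral.intervalIntegrable_rpow' (by linarith)
    rw [← hr, intervalIntegral.integral_of_le ht0.le, ← integral_const_mul]
    refine setIntegral_mono_on (hri.const_mul _) hI1 measurableSet_Ioc fun t ht => ?_
    have : t ^ (-δ) = t * t ^ (-1 - δ) := by
      rw [← Real.rpow_one_add' ht.1.le (by linarith)]; ring_nf
    rw [this, ← mul_assoc]
    exact mul_le_mul_of_nonneg_right (hlow t ht) (Real.rpow_nonneg ht.1.le _)
  have b2 : -(B * (t0 ^ (-δ) / δ)) ≤ ∫ t in Ioi t0, E t * t ^ (-1 - δ) := by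
    have hr : ∫ t in Ioi t0, t ^ (-1 - δ) = t0 ^ (-δ) / δ := by
      rw [integral_Ioi_rpow_of_lt (by linarith) ht0, show -1 - δ + 1 = -δ by ring, neg_div_neg_eq]
    have hri : IntegrableOn (fun t : ℝ => t ^ (-1 - δ)) (Ioi t0) :=
      integrableOn_Ioi_rpow_of_lt (by linarith) ht0
    rw [← hr, ← neg_mul, ← integral_const_mul]
    refine setIntegral_mono_on (hri.const_mul _) hI2 measurableSet_Ioi fun t ht => ?_
    exact mul_le_mul_of_nonneg_right (abs_le.1 (hB t)).1 (Real.rpow_nonneg (ht0.trans ht).le _)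
  have hp : 0 < t0 ^ (-δ) := by positivity
  have e1 : t0 ^ (1 - δ) = t0 * t0 ^ (-δ) := by
    rw [← Real.rpow_one_add' ht0.le (by linarith)]; ring_nf
  have h1δ : 0 < 1 - δ := by linarith
  have : 0 < t0 ^ (-δ) * (q / (1 - δ) - B / δ) := by
    apply mul_pos hp
    rw [sub_pos, div_lt_div_iff₀ hδ0 h1δ]
    linarith
  have e2 : t0 ^ (-δ) * (q / (1 - δ) - B / δ) =
      e / 2 * (t0 ^ (1 - δ) / (1 - δ)) + -(B * (t0 ^ (-δ) / δ)) := by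
    rw [e1, hq]; ring
  linarith

lemma PPin (j : ℕ) {a x : ℝ} (ha : a ≤ 1/2) (hx : |x| < a) : PP j a < PP j x := by
  have e : PP j x = PP j |x| := by
    rcases abs_choice x with h | h <;> rw [h]
    rw [PPeven]
  rw [e]
  exact PPanti j ⟨abs_nonneg _, by linarith⟩ ⟨by linarith [abs_nonneg x], ha⟩ hx

lemma PPin' (j : ℕ) {a x : ℝ} (ha : a ≤ 1/2) (hx : |x| ≤ a) : PP j a ≤ PP j x := by
  rcases eq_or_lt_of_le hx with h | h
  · rw [← h]
    rcases abs_choice x with h | h <;> rw [h]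
    rw [PPeven]
  · exact (PPin j ha h).le

lemma PPout (j : ℕ) {a x : ℝ} (ha : 0 ≤ a) (hx : a < x) (hx' : x < 1 - a) : PP j x < PP j a := by
  rcases le_total x (1/2) with h | h
  · exact PPanti j ⟨ha, by linarith⟩ ⟨by linarith, h⟩ hx
  · rw [← PPone j x]
    exact PPanti j ⟨ha, by linarith⟩ ⟨by linarith, by linarith⟩ (by linarith)

lemma PPout' (j : ℕ) {a x : ℝ} (ha : 0 ≤ a) (hx : a ≤ x) (hx' : x ≤ 1 - a) : PP j x ≤ PP j a := by
  rcases eq_or_lt_of_le hx with h | h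
  · rw [h]
  rcases eq_or_lt_of_le hx' with h' | h'
  · rw [h', PPone]
  exact (PPout j ha h h').le

open MeasureTheory Filter Topology in
lemma Ipos (j : ℕ) (a δ : ℝ) (h0 : 0 < δ) (h1 : δ < 1) (ha : 0 < a) (ha2 : a ≤ 1/2)
    (hP : PP j a ≤ 0) : 0 < ∫ t in Ioi (0:ℝ), (PP j (a - t) - PP j a) * t ^ (-1 - δ) := by
  have hc := PPcont j
  refine poslem δ h0 (fun t => PP j (a - t) - PP j a) (by fun_prop) ?_ (by simp) (2 * a)
    (by linarith) (by linarith) ?_ ?_ ?_ (mainI j a δ h0 h1).1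
  · intro t
    rw [← PPper j (a - (t + 1))]; ring_nf
  · intro t ht
    rw [sub_pos]
    exact PPin j ha2 (abs_lt.2 ⟨by linarith [ht.2], by linarith [ht.1]⟩)
  · intro t ht
    rw [sub_nonpos, ← PPeven]
    exact PPout' j ha.le (by linarith [ht.1]) (by linarith [ht.2])
  · have h := PPint j (-a)
    have : ∀ t, PP j (t + -a) = PP j (a - t) := fun t => by rw [← PPeven]; ring_nf
    simp only [this] at h
    rw [intervalIntegral.integral_sub
      ((show Continuous fun t => PP j (a - t) by fun_prop).intervalIntegrable _ _) (by simp), h]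
    simpa using hP

open MeasureTheory Filter Topology in
lemma Ineg (j : ℕ) (a δ : ℝ) (h0 : 0 < δ) (h1 : δ < 1) (ha : 1/2 < a) (ha2 : a ≤ 1)
    (hP : 0 ≤ PP j a) : (∫ t in Ioi (0:ℝ), (PP j (a - t) - PP j a) * t ^ (-1 - δ)) < 0 := by
  have hc := PPcont j
  have hi := (mainI j a δ h0 h1).1
  have he : ∀ t, PP j (a - t) = PP j (1 - a + t) := fun t => by rw [← PPone]; ring_nf
  have ha' : PP j a = PP j (1 - a) := (PPone j a).symm
  have hi' : IntegrableOn (fun t => (PP j a - PP j (a - t)) * t ^ (-1 - δ)) (Ioi 0) := by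
    refine hi.neg.congr (Eventually.of_forall fun t => ?_)
    simp only [Pi.neg_apply]; ring
  have := poslem δ h0 (fun t => PP j a - PP j (a - t)) (by fun_prop) ?_ (by simp) (1 - 2 * (1 - a))
    (by linarith) (by linarith) ?_ ?_ ?_ hi'
  · rw [← neg_pos, ← integral_neg]
    convert this using 2
    ext t; ring
  · intro t
    rw [← PPper j (a - (t + 1))]; ring_nf
  · intro t ht
    rw [sub_pos, he, ha']
    exact PPout j (by linarith) (by linarith [ht.1]) (by linarith [ht.2])
  · intro t ht
    rw [sub_nonpos, he, ha']
    have : PP j (1 - a + t) = PP j (1 - a + t - 1) := by rw [← PPper j (1 - a + t - 1)]; ring_nf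
    rw [this]
    exact PPin' j (by linarith) (abs_le.2 ⟨by linarith [ht.1], by linarith [ht.2]⟩)
  · have h := PPint j (1 - a)
    have : ∀ t, PP j (t + (1 - a)) = PP j (a - t) := fun t => by rw [he]; ring_nf
    simp only [this] at h
    rw [intervalIntegral.integral_sub (by simp)
      ((show Continuous fun t => PP j (a - t) by fun_prop).intervalIntegrable _ _), h]
    simpa using hP

open MeasureTheory Filter Topology in
lemma exist (j : ℕ) (a ε : ℝ) (hP : 0 < ε * PP j a) (δ₁ : ℝ) (h0 : 0 < δ₁) (h1 : δ₁ < 1)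
    (hI : 0 < ε * ∫ t in Ioi (0:ℝ), (PP j (a - t) - PP j a) * t ^ (-1 - δ₁)) :
    ∃ δ : ℝ, 0 < δ ∧ δ < 1 ∧
      hurwitzZeta (a : UnitAddCircle) ((-((2*j : ℕ) : ℝ) - 1 + δ : ℝ) : ℂ) = 0 := by
  set g : ℝ → ℝ := fun δ => ε * ((-1) ^ j *
    (hurwitzZeta (a : UnitAddCircle) ((-((2*j : ℕ) : ℝ) - 1 + δ : ℝ) : ℂ)).re) with hg
  have hgc : ContinuousOn g (Icc 0 δ₁) := by
    intro δ hδ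
    apply ContinuousAt.continuousWithinAt
    have hne : ((-((2*j : ℕ) : ℝ) - 1 + δ : ℝ) : ℂ) ≠ 1 := by
      have h3 : (0:ℝ) ≤ ((2*j : ℕ) : ℝ) := by positivity
      have : (-((2*j : ℕ) : ℝ) - 1 + δ : ℝ) ≠ 1 := by linarith [hδ.2]
      exact_mod_cast this
    have hz := (differentiableAt_hurwitzZeta (a : UnitAddCircle) hne).continuousAt
    have hl : ContinuousAt (fun δ : ℝ => ((-((2*j : ℕ) : ℝ) - 1 + δ : ℝ) : ℂ)) δ := by fun_prop
    have := ContinuousAt.comp (f := fun δ : ℝ => ((-((2*j : ℕ) : ℝ) - 1 + δ : ℝ) : ℂ)) hz hl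
    exact continuousAt_const.mul (continuousAt_const.mul
      (Complex.continuous_re.continuousAt.comp this))
  have hsq : ((-1:ℝ) ^ j) * (-1) ^ j = 1 := by rw [← mul_pow]; simp
  have g0 : g 0 < 0 := by
    obtain ⟨A, hA, V, hV, hz⟩ := zeta_formula j a 0 le_rfl one_pos
    have : V = PP j a := by
      refine hV.unique ?_
      simpa using PPsum j a
    simp only [hg]
    rw [hz, Complex.ofReal_re, this, pow_succ]
    have h4 := mul_pos hA hP
    have : ε * ((-1) ^ j * (A * ((-1) ^ j * -1 * PP j a))) =
      -(((-1:ℝ) ^ j) * (-1) ^ j) * (A * (ε * PP j a)) := by ring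
    rw [this, hsq]; linarith
  have g1 : 0 < g δ₁ := by
    obtain ⟨-, A, hA, hz⟩ := mainI j a δ₁ h0 h1
    simp only [hg]
    rw [hz, Complex.ofReal_re]
    have h4 := mul_pos hA hI
    generalize (∫ t in Ioi (0:ℝ), (PP j (a - t) - PP j a) * t ^ (-1 - δ₁)) = J at *
    have : ε * ((-1) ^ j * (A * ((-1) ^ j * J))) =
      (((-1:ℝ) ^ j) * (-1) ^ j) * (A * (ε * J)) := by ring
    rw [this, hsq]; linarith
  obtain ⟨δ, hδ, hgδ⟩ := intermediate_value_Ioo h0.le hgc ⟨g0, g1⟩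
  have hδ1 : δ < 1 := hδ.2.trans h1
  refine ⟨δ, hδ.1, hδ1, ?_⟩
  obtain ⟨-, A, hA, hz⟩ := mainI j a δ hδ.1 hδ1
  have hε : ε ≠ 0 := by rintro rfl; simp at hP
  have hre : (hurwitzZeta (a : UnitAddCircle) ((-((2*j : ℕ) : ℝ) - 1 + δ : ℝ) : ℂ)).re = 0 := by
    simpa [hg, hε] using hgδ
  rw [hz, Complex.ofReal_re] at hre
  rw [hz, hre, Complex.ofReal_zero]

open MeasureTheory Filter Topology in
lemma exist_both (j : ℕ) (a ε d : ℝ) (hP : 0 < ε * PP j a) (hd : HasDerivAt (PP j) d a)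
    (hεd : ε * d < 0) : ∃ δ : ℝ, 0 < δ ∧ δ < 1 ∧
      hurwitzZeta (a : UnitAddCircle) ((-((2*j : ℕ) : ℝ) - 1 + δ : ℝ) : ℂ) = 0 := by
  have h1 : HasDerivAt (fun t : ℝ => a - t) (-1) 0 := by
    simpa using (hasDerivAt_id (0:ℝ)).const_sub a
  have h2 : HasDerivAt (PP j) d (a - 0) := by simpa using hd
  have h3 := ((HasDerivAt.comp (0:ℝ) h2 h1).sub_const (PP j a)).const_mul ε
  obtain ⟨δ, hδ0, hδ1, hI⟩ := near1 (fun t => ε * (PP j (a - t) - PP j a)) (|ε| * (2 * PP j 0))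
    (fun t => by
      rw [abs_mul]
      refine mul_le_mul_of_nonneg_left ?_ (abs_nonneg _)
      have := PPabs j a
      have := PPabs j (a - t)
      refine (abs_sub _ _).trans ?_
      linarith)
    (ε * (d * -1)) (by linarith) h3 (by simp)
    (fun δ hδ0 hδ1 => by
      simp only [mul_assoc]
      exact (mainI j a δ hδ0 hδ1).1.const_mul ε)
  simp only [mul_assoc] at hI
  rw [integral_const_mul] at hI
  exact exist j a ε hP δ hδ0 hδ1 hI


/-- For an even integer `N ≥ 0` and `0 < a ≤ 1`, with `b⁻ ∈ [0,1/2)` and `b⁺ ∈ [1/2,1)`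
roots of `B_{N+2}`, the Hurwitz zeta function has a real zero in `(-N-1, -N)` iff
`0 < a < b⁻` or `1/2 < a < b⁺`. -/
theorem hurwitzZeta_has_real_zero_iff_of_even (N : ℕ) (hN : Even N) (a : ℝ)
    (ha : 0 < a) (ha' : a ≤ 1) (bm bp : ℝ)
    (hbm : bm ∈ Set.Ico (0 : ℝ) (1 / 2)) (hbm0 : bernoulliPoly (N + 2) bm = 0)
    (hbp : bp ∈ Set.Ico (1 / 2 : ℝ) 1) (hbp0 : bernoulliPoly (N + 2) bp = 0) :
    (∃ σ : ℝ, σ ∈ Set.Ioo (-(N : ℝ) - 1) (-(N : ℝ)) ∧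
        hurwitzZeta (a : UnitAddCircle) (σ : ℂ) = 0) ↔
      (0 < a ∧ a < bm) ∨ (1 / 2 < a ∧ a < bp) := by
  obtain ⟨j, rfl⟩ : ∃ j, N = 2 * j := ⟨_, hN.two_dvd.choose_spec⟩
  obtain ⟨c, hc, hPB⟩ := PPbern j
  have hroot : ∀ x ∈ Icc (0:ℝ) 1, bernoulliPoly (2 * j + 2) x = 0 → PP j x = 0 := by
    intro x hx h
    have : bernoulliFun (2 * j + 2) x = 0 := by
      rw [bernoulliFun, Polynomial.eval_map_algebraMap]; exact h
    rw [hPB x hx, this]; simp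
  have hm := hroot bm ⟨hbm.1, by linarith [hbm.2]⟩ hbm0
  have hp := hroot bp ⟨by linarith [hbp.1], hbp.2.le⟩ hbp0
  have hbm2 := hbm.2
  have hbm1 := hbm.1
  have hbp1 := hbp.1
  have hbp2 := hbp.2
  constructor
  · rintro ⟨σ, hσ, hz⟩
    by_contra hcon
    push Not at hcon
    have hδ0 : 0 < σ + ((2 * j : ℕ) : ℝ) + 1 := by linarith [hσ.1]
    have hδ1 : σ + ((2 * j : ℕ) : ℝ) + 1 < 1 := by linarith [hσ.2]
    obtain ⟨-, A, hA, hz2⟩ := mainI j a _ hδ0 hδ1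
    rw [show (-((2 * j : ℕ) : ℝ) - 1 + (σ + ((2 * j : ℕ) : ℝ) + 1)) = σ by ring, hz] at hz2
    have hz3 : A * ((-1) ^ j * ∫ t in Ioi (0:ℝ), (PP j (a - t) - PP j a) *
        t ^ (-1 - (σ + ((2 * j : ℕ) : ℝ) + 1))) = 0 := by exact_mod_cast hz2.symm
    have hz4 : (∫ t in Ioi (0:ℝ), (PP j (a - t) - PP j a) *
        t ^ (-1 - (σ + ((2 * j : ℕ) : ℝ) + 1))) = 0 := by
      simpa [hA.ne'] using hz3
    rcases le_or_gt a (1/2) with h | h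
    · have hPa : PP j a ≤ 0 := by
        rw [← hm]
        exact (PPanti j).antitoneOn ⟨hbm1, hbm2.le⟩ ⟨ha.le, h⟩ (hcon.1 ha)
      have := Ipos j a _ hδ0 hδ1 ha h hPa
      linarith
    · have hPa : 0 ≤ PP j a := by
        rw [← hp, ← PPone j a, ← PPone j bp]
        exact (PPanti j).antitoneOn ⟨by linarith, by linarith⟩ ⟨by linarith, by linarith⟩
          (by linarith [hcon.2 h])
      have := Ineg j a _ hδ0 hδ1 h ha' hPa
      linarith
  · intro h
    have key : ∃ δ : ℝ, 0 < δ ∧ δ < 1 ∧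
        hurwitzZeta (a : UnitAddCircle) ((-((2*j : ℕ) : ℝ) - 1 + δ : ℝ) : ℂ) = 0 := by
      rcases h with ⟨-, h⟩ | ⟨h1, h2⟩
      · obtain ⟨d, hd, hd2⟩ := PPderiv j a ⟨ha, by linarith⟩
        have : PP j bm < PP j a := PPanti j ⟨ha.le, by linarith⟩ ⟨hbm1, hbm2.le⟩ h
        exact exist_both j a 1 d (by linarith) hd2 (by linarith)
      · obtain ⟨d, hd, hd2⟩ := PPderiv' j a ⟨h1, by linarith⟩
        have : PP j (1 - a) < PP j (1 - bp) :=
          PPanti j ⟨by linarith, by linarith⟩ ⟨by linarith, by linarith⟩ (by linarith)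
        rw [PPone, PPone] at this
        exact exist_both j a (-1) d (by linarith) hd2 (by linarith)
    obtain ⟨δ, hδ0, hδ1, hz⟩ := key
    exact ⟨_, ⟨by linarith, by linarith⟩, hz⟩
end

section
/- Let N ≥ 1 be an odd integer, let 0 < a ≤ 1, and let b⁻ ∈ [0, 1/2) and b⁺ ∈ [1/2, 1) be roots of the Bernoulli polynomial B_{N+1} (such roots exist and are unique in those intervals). Then the Hurwitz zeta function σ ↦ ζ(σ, a) has a real zero in the open interval (-N-1, -N) if and only if b⁻ < a < 1/2 or b⁺ < a < 1. -/
open HurwitzZeta Polynomial Set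

open MeasureTheory

lemma mellin_aux (q n : ℝ) (hq : -1 < q) (hq' : q < 1) (hn : 0 < n) :
    IntegrableOn (fun x : ℝ => x ^ q / (x ^ 2 + n ^ 2)) (Ioi 0) ∧
    ∫ x in Ioi (0:ℝ), x ^ q / (x ^ 2 + n ^ 2) =
      n ^ (q - 1) * (Real.pi / 2 / Real.sin (Real.pi * ((q + 1) / 2))) := by
  set μ := (volume : Measure ℝ).restrict (Ioi 0) with hμ
  let f : ℝ × ℝ → ℝ := fun p => p.2 ^ q * Real.exp (-p.1 * (p.2 ^ 2 + n ^ 2))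
  have h1 : ∀ v : ℝ, 0 < v → IntegrableOn (fun x : ℝ => f (v, x)) (Ioi 0) := by
    intro v hv
    have := (integrableOn_rpow_mul_exp_neg_mul_rpow (p := 2) (s := q) (b := v) hq (by norm_num) hv).mul_const (Real.exp (-v * n ^ 2))
    refine IntegrableOn.congr_fun this ?_ measurableSet_Ioi
    intro x hx
    simp only [f]
    rw [mul_add, Real.exp_add, mul_assoc]
    norm_num
  have h2 : ∀ v : ℝ, 0 < v → ∫ x in Ioi (0:ℝ), f (v, x) =
      (v ^ ((1 - (q + 1) / 2) - 1) * Real.exp (-(n ^ 2 * v))) * (1 / 2 * Real.Gamma ((q + 1) / 2)) := by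
    intro v hv
    have := integral_rpow_mul_exp_neg_mul_rpow (p := 2) (q := q) (b := v) (by norm_num) hq hv
    have e : ∀ x : ℝ, f (v, x) = (x ^ q * Real.exp (-v * x ^ (2:ℝ))) * Real.exp (-v * n ^ 2) := by
      intro x
      simp only [f]
      rw [mul_add, Real.exp_add, mul_assoc]
      norm_num
    simp_rw [e]
    rw [integral_mul_const, this]
    rw [show (1 - (q + 1) / 2) - 1 = -(q + 1) / 2 by ring, show -(n ^ 2 * v) = -v * n ^ 2 by ring]
    ring
  have hpos : ∀ p ∈ (Ioi (0:ℝ)) ×ˢ (Ioi (0:ℝ)), 0 ≤ f p := by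
    rintro ⟨v, x⟩ ⟨hv, hx⟩
    simp only [f]
    have : 0 < x := hx
    positivity
  have hm : AEStronglyMeasurable f (μ.prod μ) := by
    apply Measurable.aestronglyMeasurable
    fun_prop
  have hr : 0 < 1 - (q + 1) / 2 := by linarith
  have hn2 : 0 < n ^ 2 := by positivity
  have hG := Real.integral_rpow_mul_exp_neg_mul_Ioi hr hn2
  have hGi : IntegrableOn (fun v : ℝ => v ^ ((1 - (q + 1) / 2) - 1) * Real.exp (-(n ^ 2 * v))) (Ioi 0) := by
    have := (integrableOn_rpow_mul_exp_neg_mul_rpow (p := 1) (s := (1 - (q + 1) / 2) - 1) (b := n ^ 2) (by linarith) (by norm_num) hn2)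
    refine IntegrableOn.congr_fun this ?_ measurableSet_Ioi
    intro x hx
    simp
  have hint : Integrable f (μ.prod μ) := by
    rw [integrable_prod_iff hm]
    constructor
    · rw [hμ, ae_restrict_iff' measurableSet_Ioi]
      exact ae_of_all _ fun v hv => h1 v hv
    · have : IntegrableOn (fun v : ℝ => (v ^ ((1 - (q + 1) / 2) - 1) * Real.exp (-(n ^ 2 * v))) * (1 / 2 * Real.Gamma ((q + 1) / 2))) (Ioi 0) := hGi.mul_const _
      refine IntegrableOn.congr_fun this ?_ measurableSet_Ioi
      intro v hv
      simp only []
      rw [← h2 v hv]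
      refine setIntegral_congr_fun measurableSet_Ioi ?_
      intro x hx
      exact (Real.norm_of_nonneg (hpos (v, x) ⟨hv, hx⟩)).symm
  have h3 : ∀ x : ℝ, 0 < x → ∫ v in Ioi (0:ℝ), f (v, x) = x ^ q / (x ^ 2 + n ^ 2) := by
    intro x hx
    simp only [f]
    rw [integral_const_mul]
    have hc : 0 < x ^ 2 + n ^ 2 := by positivity
    have := Real.integral_rpow_mul_exp_neg_mul_Ioi (a := 1) one_pos hc
    simp at this
    rw [div_eq_mul_inv, ← this]
    congr 1
    refine setIntegral_congr_fun measurableSet_Ioi ?_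
    intro v hv
    simp only []
    congr 1
    ring
  constructor
  · refine IntegrableOn.congr_fun hint.integral_prod_right ?_ measurableSet_Ioi
    intro x hx
    exact h3 x hx
  · have sw := integral_integral_swap (f := fun v x => f (v, x)) hint
    rw [← setIntegral_congr_fun measurableSet_Ioi h3]
    rw [← sw, setIntegral_congr_fun measurableSet_Ioi h2, integral_mul_const, hG]
    rw [show Real.pi / 2 / Real.sin (Real.pi * ((q + 1) / 2)) = 1 / 2 * (Real.pi / Real.sin (Real.pi * ((q + 1) / 2))) by ring,
      ← Real.Gamma_mul_Gamma_one_sub]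
    have : (1 / n ^ 2) ^ (1 - (q + 1) / 2) = n ^ (q - 1) := by
      rw [one_div, ← Real.rpow_natCast, ← Real.rpow_neg hn.le, ← Real.rpow_mul hn.le]
      congr 1; push_cast; ring
    rw [this]
    ring

lemma kernel_pos (f : ℝ → ℝ) (hc : Continuous f) (hper : ∀ v, f (v + 1) = f v)
    (hodd : ∀ v, f (-v) = -f v) (b a x0 : ℝ) (hb : b ≤ 1 / 2) (ha : 0 ≤ a) (hab : a ≤ b)
    (hmono : MonotoneOn f (Icc 0 b)) (hanti : AntitoneOn f (Icc b (1 / 2)))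
    (hx0 : x0 ∈ Ioo (0:ℝ) (1 / 2)) (hfx : 0 < f x0) (y : ℝ) (hy : 0 < y) :
    0 < ∫ u in (0:ℝ)..1, Real.exp (-(y * u)) * (f a - f (a - u)) := by
  have f0 : f 0 = 0 := by have := hodd 0; simp at this; linarith
  have fh : f (1 / 2) = 0 := by
    have h1 := hper (-(1/2)); have h2 := hodd (1/2); norm_num at h1 h2; norm_num; linarith
  have b0 : 0 ≤ b := ha.trans hab
  have fnn : ∀ v ∈ Icc (0:ℝ) (1 / 2), 0 ≤ f v := by
    rintro v ⟨h1, h2⟩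
    rcases le_total v b with h | h
    · rw [← f0]; exact hmono ⟨le_rfl, b0⟩ ⟨h1, h⟩ h1
    · rw [← fh]; exact hanti ⟨h, h2⟩ ⟨hb, le_rfl⟩ h2
  have fa : 0 ≤ f a := fnn a ⟨ha, hab.trans hb⟩
  obtain ⟨c, ⟨hbc, hc2⟩, hfc⟩ : ∃ c ∈ Icc b (1 / 2), f c = f a := by
    have := intermediate_value_Icc' hb hc.continuousOn
    apply this
    exact ⟨by rw [fh]; exact fa, hmono ⟨ha, hab⟩ ⟨b0, le_rfl⟩ hab⟩
  set u0 := 1 + a - c with hu0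
  have D1 : ∀ u, 0 ≤ u → u ≤ u0 → 0 ≤ f a - f (a - u) := by
    intro u h1 h2
    rw [sub_nonneg]
    rcases le_total 0 (a - u) with h | h
    · exact hmono ⟨h, by linarith⟩ ⟨ha, hab⟩ (by linarith)
    rcases le_total (-(1/2)) (a - u) with h' | h'
    · have := fnn (-(a - u)) ⟨by linarith, by linarith⟩
      rw [hodd] at this; linarith
    · rw [← hper, ← hfc]
      exact hanti ⟨hbc, hc2⟩ ⟨by linarith, by linarith⟩ (by linarith)
  have D2 : ∀ u, u0 ≤ u → u ≤ 1 → f a - f (a - u) ≤ 0 := by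
    intro u h1 h2
    rw [sub_nonpos, ← hper (a - u)]
    rcases le_total (a - u + 1) b with h | h
    · exact hmono ⟨ha, hab⟩ ⟨by linarith, h⟩ (by linarith)
    · rw [← hfc]
      exact hanti ⟨h, by linarith⟩ ⟨hbc, hc2⟩ (by linarith)
  have hmean : ∫ u in (0:ℝ)..1, f (a - u) = 0 := by
    rw [intervalIntegral.integral_comp_sub_left (fun u => f u) a]
    have hp : Function.Periodic f 1 := hper
    have h1 := hp.intervalIntegral_add_eq (a - 1) (-(1/2))
    have e : (-(1/2) + 1 : ℝ) = 1/2 := by norm_num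
    rw [show a - 1 + 1 = a - 0 by ring, e] at h1
    rw [h1]
    have h2 := intervalIntegral.integral_comp_neg (a := -(1/2)) (b := (1/2:ℝ)) f
    simp only [hodd, neg_neg, intervalIntegral.integral_neg] at h2
    linarith
  have hsplit : ∫ u in (0:ℝ)..1, Real.exp (-(y * u)) * (f a - f (a - u)) =
      (∫ u in (0:ℝ)..1, (Real.exp (-(y * u)) - Real.exp (-(y * u0))) * (f a - f (a - u)))
        + Real.exp (-(y * u0)) * f a := by
    have : ∫ u in (0:ℝ)..1, Real.exp (-(y * u0)) * (f a - f (a - u)) = Real.exp (-(y * u0)) * f a := by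
      rw [intervalIntegral.integral_const_mul, intervalIntegral.integral_sub, hmean]
      · simp
      · simp
      · exact Continuous.intervalIntegrable (by fun_prop) _ _
    rw [← this, ← intervalIntegral.integral_add]
    · congr 1; ext u; ring
    · exact Continuous.intervalIntegrable (by fun_prop) _ _
    · exact Continuous.intervalIntegrable (by fun_prop) _ _
  rw [hsplit]
  have : 0 ≤ Real.exp (-(y * u0)) * f a := by positivity
  refine add_pos_of_pos_of_nonneg ?_ this
  apply intervalIntegral.integral_pos one_pos
  · exact Continuous.continuousOn (by fun_prop)
  · rintro u ⟨h1, h2⟩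
    rcases le_total u u0 with h | h
    · refine mul_nonneg ?_ (D1 u h1.le h)
      rw [sub_nonneg, Real.exp_le_exp]; nlinarith
    · refine mul_nonneg_of_nonpos_of_nonpos ?_ (D2 u h h2)
      rw [sub_nonpos, Real.exp_le_exp]; nlinarith
  · refine ⟨a + x0, ⟨by linarith [hx0.1], by linarith [hx0.2]⟩, ?_⟩
    refine mul_pos ?_ ?_
    · rw [sub_pos, Real.exp_lt_exp]
      have : a + x0 < u0 := by linarith [hx0.2]
      nlinarith
    · rw [show a - (a + x0) = -x0 by ring, hodd]; linarith

lemma term_integral (a x A : ℝ) (n : ℕ) (hx : 0 < x) (h : A = 2 * Real.pi * n * a) :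
    ∫ u in (0:ℝ)..1, Real.exp (-(2 * Real.pi * x * u)) * (Real.sin A - Real.sin (2 * Real.pi * n * (a - u))) =
      (1 - Real.exp (-(2 * Real.pi * x))) / (2 * Real.pi * x) *
        (n * ((n * Real.sin A + x * Real.cos A) / (x ^ 2 + n ^ 2))) := by
  have hpi := Real.pi_pos
  set y := 2 * Real.pi * x with hy
  set c := 2 * Real.pi * n with hcc
  have ypos : 0 < y := by positivity
  have hyc : 0 < y ^ 2 + c ^ 2 := by positivity
  have hd : ∀ u : ℝ, HasDerivAt (fun u : ℝ => Real.exp (-(y * u)) * (-(Real.sin A) / y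
      - (-y / (y ^ 2 + c ^ 2) * Real.sin (A - c * u) + c / (y ^ 2 + c ^ 2) * Real.cos (A - c * u))))
      (Real.exp (-(y * u)) * (Real.sin A - Real.sin (c * (a - u)))) u := by
    intro u
    have h1 : HasDerivAt (fun u : ℝ => Real.exp (-(y * u))) (Real.exp (-(y * u)) * (-(y * 1))) u :=
      (((hasDerivAt_id u).const_mul y).neg).exp
    have h0 : HasDerivAt (fun u : ℝ => A - c * u) (-(c * 1)) u :=
      ((hasDerivAt_id u).const_mul c).const_sub A
    have h2 := (h0.sin.const_mul (-y / (y ^ 2 + c ^ 2))).add (h0.cos.const_mul (c / (y ^ 2 + c ^ 2)))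
    have h3 := h1.mul (h2.const_sub (-(Real.sin A) / y))
    refine h3.congr_deriv ?_
    rw [show c * (a - u) = A - c * u by rw [h]; ring]
    simp only [Pi.add_apply]
    field_simp
    ring
  rw [intervalIntegral.integral_eq_sub_of_hasDerivAt (fun u _ => hd u)
    (Continuous.intervalIntegrable (by fun_prop) _ _)]
  have hp : A - c * 1 = A - n * (2 * Real.pi) := by rw [hcc]; ring
  rw [hp, Real.sin_sub_nat_mul_two_pi, Real.cos_sub_nat_mul_two_pi]
  simp only [mul_zero, sub_zero, neg_zero, Real.exp_zero, mul_one, one_mul]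
  have e : y ^ 2 + c ^ 2 = (2 * Real.pi) ^ 2 * (x ^ 2 + n ^ 2) := by rw [hy, hcc]; ring
  have hxn : 0 < x ^ 2 + (n:ℝ) ^ 2 := by positivity
  rw [e]
  generalize Real.exp (-y) = z
  rw [hy, hcc]
  field_simp
  ring

lemma sinSum_norm_le (M : ℕ) (n : ℕ) (v : ℝ) :
    ‖1 / (n:ℝ) ^ (M + 1) * Real.sin (2 * Real.pi * n * v)‖ ≤ 1 / (n:ℝ) ^ (M + 1) := by
  rw [norm_mul, Real.norm_of_nonneg (by positivity : (0:ℝ) ≤ 1 / (n:ℝ) ^ (M + 1))]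
  exact mul_le_of_le_one_right (by positivity) (by simpa using Real.abs_sin_le_one _)

lemma sinSum_summable (M : ℕ) (hM : 2 ≤ M) (v : ℝ) :
    Summable fun n : ℕ => 1 / (n:ℝ) ^ (M + 1) * Real.sin (2 * Real.pi * n * v) :=
  Summable.of_norm_bounded (Real.summable_one_div_nat_pow.2 (by omega)) (sinSum_norm_le M · v)

lemma kernel_hasSum (M : ℕ) (hM : 2 ≤ M) (f : ℝ → ℝ)
    (hf : f = fun v => ∑' n : ℕ, 1 / (n:ℝ) ^ (M + 1) * Real.sin (2 * Real.pi * n * v))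
    (a x : ℝ) (hx : 0 < x) :
    ∫ u in (0:ℝ)..1, Real.exp (-(2 * Real.pi * x * u)) * (f a - f (a - u)) =
     (1 - Real.exp (-(2 * Real.pi * x))) / (2 * Real.pi * x) *
      ∑' n : ℕ, 1 / (n:ℝ) ^ M * ((n * Real.sin (2 * Real.pi * n * a) + x * Real.cos (2 * Real.pi * n * a)) / (x ^ 2 + n ^ 2)) := by
  have hpi := Real.pi_pos
  have hs := sinSum_summable M hM
  have hsum : Summable (fun n : ℕ => 1 / (n:ℝ) ^ (M + 1)) := Real.summable_one_div_nat_pow.2 (by omega)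
  have key := intervalIntegral.hasSum_integral_of_dominated_convergence (a := 0) (b := 1) (μ := volume)
    (F := fun (n : ℕ) (u : ℝ) => 1 / (n:ℝ) ^ (M + 1) * (Real.exp (-(2 * Real.pi * x * u)) * (Real.sin (2 * Real.pi * n * a) - Real.sin (2 * Real.pi * n * (a - u)))))
    (f := fun u => Real.exp (-(2 * Real.pi * x * u)) * (f a - f (a - u)))
    (bound := fun n _ => 1 / (n:ℝ) ^ (M + 1) * 2)
    (fun n => (Continuous.aestronglyMeasurable (by fun_prop)))
    (by
      intro n
      refine ae_of_all _ fun u hu => ?_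
      rw [uIoc_of_le zero_le_one] at hu
      rw [norm_mul, Real.norm_of_nonneg (by positivity : (0:ℝ) ≤ 1 / (n:ℝ) ^ (M + 1))]
      gcongr
      rw [norm_mul, Real.norm_of_nonneg (Real.exp_pos _).le]
      have h1 : Real.exp (-(2 * Real.pi * x * u)) ≤ 1 := by
        rw [Real.exp_le_one_iff]
        have := hu.1
        have : 0 ≤ 2 * Real.pi * x * u := by positivity
        linarith
      have h2 : ‖Real.sin (2 * Real.pi * n * a) - Real.sin (2 * Real.pi * n * (a - u))‖ ≤ 2 := by
        refine (norm_sub_le _ _).trans ?_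
        have e1 := Real.abs_sin_le_one (2 * Real.pi * n * a)
        have e2 := Real.abs_sin_le_one (2 * Real.pi * n * (a - u))
        simp only [Real.norm_eq_abs]
        linarith
      calc _ ≤ 1 * 2 := mul_le_mul h1 h2 (norm_nonneg _) zero_le_one
        _ = 2 := by norm_num)
    (ae_of_all _ fun u hu => hsum.mul_right 2)
    (by simp)
    (by
      refine ae_of_all _ fun u hu => ?_
      have := ((hs a).hasSum.sub (hs (a - u)).hasSum).mul_left (Real.exp (-(2 * Real.pi * x * u)))
      rw [hf]
      refine this.congr_fun ?_
      intro n
      ring)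
  rw [← key.tsum_eq, ← tsum_mul_left]
  congr 1
  ext n
  rw [intervalIntegral.integral_const_mul, term_integral a x _ n hx rfl]
  rcases Nat.eq_zero_or_pos n with h | h
  · subst h
    have : (M ≠ 0) := by omega
    simp [this]
  · have : 0 < (n:ℝ) := by exact_mod_cast h
    rw [pow_succ]
    field_simp

lemma main_pos (M : ℕ) (hM : 2 ≤ M) (f : ℝ → ℝ)
    (hf : f = fun v => ∑' n : ℕ, 1 / (n:ℝ) ^ (M + 1) * Real.sin (2 * Real.pi * n * v))
    (a θ ε : ℝ) (h0 : 0 < θ) (h1 : θ < 1)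
    (hK : ∀ x : ℝ, 0 < x →
      0 < ε * ∫ u in (0:ℝ)..1, Real.exp (-(2 * Real.pi * x * u)) * (f a - f (a - u))) :
    0 < ε * ∑' n : ℕ, 1 / (n:ℝ) ^ M * ((n:ℝ) ^ (-θ) * Real.cos (2 * Real.pi * n * a - Real.pi * θ / 2)) := by
  have hpi := Real.pi_pos
  let k : ℕ → ℝ → ℝ := fun n x => (n * Real.sin (2 * Real.pi * n * a) + x * Real.cos (2 * Real.pi * n * a)) / (x ^ 2 + n ^ 2)
  let K : ℝ → ℝ := fun x => ∑' n : ℕ, 1 / (n:ℝ) ^ M * k n x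
  have hsum : Summable (fun n : ℕ => 1 / (n:ℝ) ^ M) := Real.summable_one_div_nat_pow.2 (by omega)
  have hKpos : ∀ x, 0 < x → 0 < ε * K x := by
    intro x hx
    have := hK x hx
    rw [kernel_hasSum M hM f hf a x hx] at this
    have hc : 0 < (1 - Real.exp (-(2 * Real.pi * x))) / (2 * Real.pi * x) := by
      apply div_pos _ (by positivity)
      rw [sub_pos, Real.exp_lt_one_iff]
      have : 0 < 2 * Real.pi * x := by positivity
      linarith
    rw [mul_left_comm] at this
    exact pos_of_mul_pos_right this hc.le
  let B : ℝ → ℝ := fun x => 2 * (x ^ (-θ) / (x ^ 2 + 1 ^ 2) + x ^ (1 - θ) / (x ^ 2 + 1 ^ 2))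
  have mA := mellin_aux (-θ) 1 (by linarith) (by linarith) one_pos
  have mB := mellin_aux (1 - θ) 1 (by linarith) (by linarith) one_pos
  have hB : IntegrableOn B (Ioi 0) := (mA.1.add mB.1).const_mul 2
  have hkb : ∀ n : ℕ, 1 ≤ n → ∀ x : ℝ, 0 < x → |k n x| ≤ 2 * (1 + x) / (x ^ 2 + 1) := by
    intro n hn x hx
    have hn' : (1:ℝ) ≤ n := by exact_mod_cast hn
    have hd : 0 < x ^ 2 + (n:ℝ) ^ 2 := by positivity
    simp only [k]
    rw [abs_div, abs_of_pos hd]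
    have e1 : |n * Real.sin (2 * Real.pi * n * a) + x * Real.cos (2 * Real.pi * n * a)| ≤ n + x := by
      refine (abs_add_le _ _).trans ?_
      rw [abs_mul, abs_mul, abs_of_pos hx, abs_of_pos (by linarith : (0:ℝ) < n)]
      have := Real.abs_sin_le_one (2 * Real.pi * n * a)
      have := Real.abs_cos_le_one (2 * Real.pi * n * a)
      nlinarith
    calc _ ≤ (n + x) / (x ^ 2 + (n:ℝ) ^ 2) := by gcongr
      _ ≤ 2 / (n + x) := by
        rw [div_le_div_iff₀ hd (by positivity)]
        nlinarith [sq_nonneg ((n:ℝ) - x)]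
      _ ≤ 2 / (1 + x) := by gcongr
      _ ≤ 2 * (1 + x) / (x ^ 2 + 1) := by
        rw [div_le_div_iff₀ (by positivity) (by positivity)]
        nlinarith
  have hM0 : M ≠ 0 := by omega
  have hkb' : ∀ n : ℕ, ∀ x : ℝ, 0 < x → ‖1 / (n:ℝ) ^ M * k n x‖ ≤ 1 / (n:ℝ) ^ M * (2 * (1 + x) / (x ^ 2 + 1)) := by
    intro n x hx
    rcases Nat.eq_zero_or_pos n with h | h
    · subst h; simp [hM0]
    · rw [norm_mul, Real.norm_of_nonneg (by positivity : (0:ℝ) ≤ 1 / (n:ℝ) ^ M)]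
      gcongr
      exact hkb n h x hx
  have hBe : ∀ x : ℝ, 0 < x → B x = x ^ (-θ) * (2 * (1 + x) / (x ^ 2 + 1)) := by
    intro x hx
    simp only [B]
    rw [show (1 - θ) = -θ + 1 by ring, Real.rpow_add hx, Real.rpow_one]
    field_simp
  have hg : ∀ n : ℕ, ∀ x ∈ Ioi (0:ℝ), ‖x ^ (-θ) * (1 / (n:ℝ) ^ M * k n x)‖ ≤ 1 / (n:ℝ) ^ M * B x := by
    intro n x hx
    have hx' : 0 < x := hx
    rw [hBe x hx, norm_mul, Real.norm_of_nonneg (by positivity : (0:ℝ) ≤ x ^ (-θ)), mul_left_comm]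
    gcongr
    exact hkb' n x hx
  have hmeas : ∀ n : ℕ, ContinuousOn (fun x : ℝ => 1 / (n:ℝ) ^ M * k n x) (Ioi 0) := by
    intro n
    apply ContinuousOn.mul continuousOn_const
    apply ContinuousOn.div (by fun_prop) (by fun_prop)
    intro x hx
    have : 0 < x := hx
    positivity
  have hpow : ContinuousOn (fun x : ℝ => x ^ (-θ)) (Ioi 0) := by
    intro x hx
    exact (Real.continuousAt_rpow_const x _ (Or.inl (ne_of_gt hx))).continuousWithinAt
  have hKc : ContinuousOn K (Ioi 0) := by
    apply continuousOn_tsum (u := fun n : ℕ => 1 / (n:ℝ) ^ M * 4) hmeas (hsum.mul_right 4)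
    intro n x hx
    refine (hkb' n x hx).trans ?_
    have : 0 < x := hx
    gcongr
    rw [div_le_iff₀ (by positivity)]
    nlinarith [sq_nonneg (x - 1)]
  have hgi : ∀ n : ℕ, IntegrableOn (fun x : ℝ => x ^ (-θ) * (1 / (n:ℝ) ^ M * k n x)) (Ioi 0) := by
    intro n
    refine Integrable.mono' (hB.const_mul (1 / (n:ℝ) ^ M)) ((hpow.mul (hmeas n)).aestronglyMeasurable measurableSet_Ioi) ?_
    rw [ae_restrict_iff' measurableSet_Ioi]
    exact ae_of_all _ (hg n)
  have hS := hasSum_integral_of_summable_integral_norm hgi (by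
    refine Summable.of_nonneg_of_le (fun n => integral_nonneg fun x => norm_nonneg _) (fun n => ?_)
      (hsum.mul_right (∫ x in Ioi (0:ℝ), B x))
    rw [← integral_const_mul]
    exact setIntegral_mono_on (hgi n).norm (hB.const_mul _) measurableSet_Ioi (hg n))
  have hterm : ∀ n : ℕ, ∫ x in Ioi (0:ℝ), x ^ (-θ) * (1 / (n:ℝ) ^ M * k n x) =
      Real.pi / Real.sin (Real.pi * θ) * (1 / (n:ℝ) ^ M * ((n:ℝ) ^ (-θ) * Real.cos (2 * Real.pi * n * a - Real.pi * θ / 2))) := by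
    intro n
    rcases Nat.eq_zero_or_pos n with h | h
    · subst h; simp [hM0]
    have hn : (0:ℝ) < n := by exact_mod_cast h
    have m1 := mellin_aux (-θ) n (by linarith) (by linarith) hn
    have m2 := mellin_aux (1 - θ) n (by linarith) (by linarith) hn
    have e : ∀ x ∈ Ioi (0:ℝ), x ^ (-θ) * (1 / (n:ℝ) ^ M * k n x) =
        (1 / (n:ℝ) ^ M * (n * Real.sin (2 * Real.pi * n * a))) * (x ^ (-θ) / (x ^ 2 + n ^ 2)) +
        (1 / (n:ℝ) ^ M * Real.cos (2 * Real.pi * n * a)) * (x ^ (1 - θ) / (x ^ 2 + n ^ 2)) := by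
      intro x hx
      rw [show (1 - θ) = -θ + 1 by ring, Real.rpow_add hx, Real.rpow_one]
      simp only [k]
      ring
    rw [setIntegral_congr_fun measurableSet_Ioi e, integral_add (m1.1.const_mul _) (m2.1.const_mul _),
      integral_const_mul, integral_const_mul, m1.2, m2.2]
    have s1 : Real.sin (Real.pi * ((-θ + 1) / 2)) = Real.cos (Real.pi * θ / 2) := by
      rw [← Real.sin_pi_div_two_sub]; congr 1; ring
    have s2 : Real.sin (Real.pi * ((1 - θ + 1) / 2)) = Real.sin (Real.pi * θ / 2) := by
      rw [← Real.sin_pi_sub]; congr 1; ring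
    have s3 : Real.sin (Real.pi * θ) = 2 * Real.sin (Real.pi * θ / 2) * Real.cos (Real.pi * θ / 2) := by
      rw [← Real.sin_two_mul]; congr 1; ring
    have p1 : 0 < Real.sin (Real.pi * θ / 2) := Real.sin_pos_of_pos_of_lt_pi (by positivity) (by nlinarith)
    have p2 : 0 < Real.cos (Real.pi * θ / 2) := Real.cos_pos_of_mem_Ioo ⟨by nlinarith, by nlinarith⟩
    rw [s1, s2, s3, Real.cos_sub, show (1 - θ - 1) = -θ by ring, Real.rpow_sub hn, Real.rpow_one]
    field_simp
    ring
  simp_rw [hterm] at hS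
  have hT := hS.tsum_eq
  rw [tsum_mul_left] at hT
  have hKi : IntegrableOn (fun x : ℝ => ε * (x ^ (-θ) * K x)) (Ioi 0) := by
    apply Integrable.const_mul
    refine Integrable.mono' (hB.const_mul (∑' n : ℕ, 1 / (n:ℝ) ^ M)) ((hpow.mul hKc).aestronglyMeasurable measurableSet_Ioi) ?_
    rw [ae_restrict_iff' measurableSet_Ioi]
    refine ae_of_all _ fun x hx => ?_
    simp only [K]
    rw [← tsum_mul_left, ← tsum_mul_right]
    exact tsum_of_norm_bounded (hsum.mul_right _).hasSum (hg · x hx)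
  have hpos : 0 < ∫ x in Ioi (0:ℝ), ε * (x ^ (-θ) * K x) := by
    have hp : ∀ x ∈ Ioi (0:ℝ), 0 < ε * (x ^ (-θ) * K x) := by
      intro x hx
      rw [mul_left_comm]
      exact mul_pos (Real.rpow_pos_of_pos hx _) (hKpos x hx)
    rw [setIntegral_pos_iff_support_of_nonneg_ae _ hKi]
    · have : Ioi (0:ℝ) ⊆ Function.support (fun x : ℝ => ε * (x ^ (-θ) * K x)) ∩ Ioi 0 :=
        fun x hx => ⟨(hp x hx).ne', hx⟩
      refine lt_of_lt_of_le ?_ (measure_mono this)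
      simp
    · rw [Filter.EventuallyLE, ae_restrict_iff' measurableSet_Ioi]
      exact ae_of_all _ fun x hx => (hp x hx).le
  rw [integral_const_mul] at hpos
  have e2 : ∫ x in Ioi (0:ℝ), x ^ (-θ) * K x = ∫ x in Ioi (0:ℝ), ∑' n : ℕ, x ^ (-θ) * (1 / (n:ℝ) ^ M * k n x) := by
    simp only [K, tsum_mul_left]
  rw [e2, ← hT, mul_left_comm] at hpos
  have hs : 0 < Real.sin (Real.pi * θ) := Real.sin_pos_of_pos_of_lt_pi (by positivity) (by nlinarith)
  exact pos_of_mul_pos_right hpos (by positivity)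

lemma odd_bern_pos (k : ℕ) : ∀ v ∈ Ioo (0:ℝ) (1 / 2), 0 < (-1:ℝ) ^ (k + 1) * bernoulliFun (2 * k + 1) v := by
  induction k with
  | zero => rintro v ⟨h1, h2⟩; simp; linarith
  | succ k ih =>
    have d1 : deriv (fun v => (-1:ℝ) ^ (k + 1 + 1) * bernoulliFun (2 * (k + 1) + 1) v) =
        fun v => (-1:ℝ) ^ (k + 1 + 1) * ((2 * (k + 1) + 1 : ℕ) * bernoulliFun (2 * (k + 1)) v) := by
      ext v
      exact ((hasDerivAt_bernoulliFun (2 * (k + 1) + 1) v).const_mul _).deriv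
    have d2 : deriv^[2] (fun v => (-1:ℝ) ^ (k + 1 + 1) * bernoulliFun (2 * (k + 1) + 1) v) =
        fun v => (-1:ℝ) ^ (k + 1 + 1) * ((2 * (k + 1) + 1 : ℕ) * ((2 * (k + 1) : ℕ) * bernoulliFun (2 * k + 1) v)) := by
      rw [Function.iterate_succ, Function.iterate_one, Function.comp_apply, d1]
      ext v
      exact (((hasDerivAt_bernoulliFun (2 * (k + 1)) v).const_mul _).const_mul _).deriv
    have hconc : StrictConcaveOn ℝ (Icc (0:ℝ) (1 / 2)) (fun v => (-1:ℝ) ^ (k + 1 + 1) * bernoulliFun (2 * (k + 1) + 1) v) := by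
      apply strictConcaveOn_of_deriv2_neg (convex_Icc _ _)
      · exact (continuous_const.mul (continuous_bernoulliFun _)).continuousOn
      · intro v hv
        rw [interior_Icc] at hv
        have := ih v hv
        rw [d2]
        simp only []
        rw [show (-1:ℝ) ^ (k + 1 + 1) * ((2 * (k + 1) + 1 : ℕ) * ((2 * (k + 1) : ℕ) * bernoulliFun (2 * k + 1) v)) = - ((2 * (k + 1) + 1 : ℕ) * (2 * (k + 1) : ℕ) * ((-1:ℝ) ^ (k + 1) * bernoulliFun (2 * k + 1) v)) by ring]
        rw [neg_lt_zero]
        positivity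
    intro v hv
    have z0 : bernoulliFun (2 * (k + 1) + 1) 0 = 0 := by
      have h1 := bernoulliFun_endpoints_eq_of_ne_one (k := 2 * (k + 1) + 1) (by omega)
      have h2 := bernoulliFun_eval_one_sub (k := 2 * (k + 1) + 1) (x := 0)
      rw [sub_zero, h1, Odd.neg_one_pow ⟨k + 1, rfl⟩] at h2
      linarith
    have zh : bernoulliFun (2 * (k + 1) + 1) (1 / 2) = 0 := by
      rw [one_div]; exact bernoulliFun_eval_half_eq_zero (k + 1)
    have hconc2 := hconc.2
    have := @hconc2 0 (by norm_num) (1 / 2) (by norm_num) (by norm_num)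
      (1 - 2 * v) (2 * v) (by linarith [hv.2]) (by linarith [hv.1]) (by ring)
    simp only [z0, zh, smul_eq_mul, mul_zero, add_zero, zero_add] at this
    rwa [show 2 * v * (1 / 2) = v by ring] at this

lemma even_bern_anti (k : ℕ) : StrictAntiOn (fun v => (-1:ℝ) ^ (k + 2) * bernoulliFun (2 * (k + 1)) v) (Icc (0:ℝ) (1 / 2)) := by
  apply strictAntiOn_of_deriv_neg (convex_Icc _ _)
  · exact (continuous_const.mul (continuous_bernoulliFun _)).continuousOn
  · intro v hv
    rw [interior_Icc] at hv
    rw [((hasDerivAt_bernoulliFun (2 * (k + 1)) v).const_mul _).deriv]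
    have := odd_bern_pos k v hv
    rw [show 2 * (k + 1) - 1 = 2 * k + 1 by omega]
    rw [show (-1:ℝ) ^ (k + 2) * (((2 * (k + 1) : ℕ) : ℝ) * bernoulliFun (2 * k + 1) v) = - (((2 * (k + 1) : ℕ) : ℝ) * ((-1:ℝ) ^ (k + 1) * bernoulliFun (2 * k + 1) v)) by ring]
    rw [neg_lt_zero]
    positivity

lemma odd_bern_mono (k : ℕ) (b : ℝ) (hb : b ∈ Icc (0:ℝ) (1 / 2)) (hb0 : bernoulliFun (2 * (k + 1)) b = 0) :
    MonotoneOn (fun v => (-1:ℝ) ^ (k + 2) * bernoulliFun (2 * (k + 1) + 1) v) (Icc 0 b) ∧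
    AntitoneOn (fun v => (-1:ℝ) ^ (k + 2) * bernoulliFun (2 * (k + 1) + 1) v) (Icc b (1 / 2)) := by
  have hanti := even_bern_anti k
  have hd : ∀ v, HasDerivAt (fun v => (-1:ℝ) ^ (k + 2) * bernoulliFun (2 * (k + 1) + 1) v)
      (((2 * (k + 1) + 1 : ℕ) : ℝ) * ((-1:ℝ) ^ (k + 2) * bernoulliFun (2 * (k + 1)) v)) v := by
    intro v
    refine ((hasDerivAt_bernoulliFun (2 * (k + 1) + 1) v).const_mul _).congr_deriv ?_
    simp only [Nat.add_sub_cancel]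
    ring
  constructor
  · apply monotoneOn_of_deriv_nonneg (convex_Icc _ _)
    · exact (continuous_const.mul (continuous_bernoulliFun _)).continuousOn
    · exact fun v _ => (hd v).differentiableAt.differentiableWithinAt
    · intro v hv
      rw [interior_Icc] at hv
      rw [(hd v).deriv]
      have := hanti ⟨hv.1.le, hv.2.le.trans hb.2⟩ hb hv.2
      simp only [hb0, mul_zero] at this
      positivity
  · apply antitoneOn_of_deriv_nonpos (convex_Icc _ _)
    · exact (continuous_const.mul (continuous_bernoulliFun _)).continuousOn
    · exact fun v _ => (hd v).differentiableAt.differentiableWithinAt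
    · intro v hv
      rw [interior_Icc] at hv
      rw [(hd v).deriv]
      have := hanti hb ⟨hb.1.trans hv.1.le, hv.2.le⟩ hv.1
      simp only [hb0, mul_zero] at this
      exact mul_nonpos_of_nonneg_of_nonpos (by positivity) this.le

lemma sum_link (a : ℝ) (k : ℕ) (θ : ℝ) (h0 : 0 < θ) (h1 : θ < 1) :
    hurwitzZeta (a : UnitAddCircle) ((1 - ((2 * (k + 1) : ℕ) + θ) : ℝ) : ℂ) = 0 ↔
      ∑' n : ℕ, 1 / (n:ℝ) ^ (2 * (k + 1)) * ((n:ℝ) ^ (-θ) * Real.cos (2 * Real.pi * n * a - Real.pi * θ / 2)) = 0 := by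
  set s : ℝ := (2 * (k + 1) : ℕ) + θ with hs
  have hs1 : 1 < s := by rw [hs]; push_cast; nlinarith [(Nat.cast_nonneg k : (0:ℝ) ≤ k)]
  have hsn : ∀ n : ℕ, (s : ℂ) ≠ -n := by
    intro n h
    have h' : s = -n := by exact_mod_cast h
    linarith [(Nat.cast_nonneg n : (0:ℝ) ≤ n)]
  have hsr : 1 < (s : ℂ).re := by simpa using hs1
  have fe := hurwitzZeta_one_sub (a : UnitAddCircle) hsn (Or.inr (by exact_mod_cast hs1.ne'))
  have S1 := (hasSum_expZeta_of_one_lt_re a hsr).mul_left (Complex.exp (-Real.pi * Complex.I * s / 2))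
  have S2 := (hasSum_expZeta_of_one_lt_re (-a) hsr).mul_left (Complex.exp (Real.pi * Complex.I * s / 2))
  have S := S1.add S2
  have et : ∀ n : ℕ, Complex.exp (-Real.pi * Complex.I * s / 2) * (Complex.exp (2 * Real.pi * Complex.I * a * n) / (n:ℂ) ^ (s:ℂ)) +
      Complex.exp (Real.pi * Complex.I * s / 2) * (Complex.exp (2 * Real.pi * Complex.I * (-a : ℝ) * n) / (n:ℂ) ^ (s:ℂ)) =
      (((-1) ^ (k + 1) * 2 : ℝ) : ℂ) * ((1 / (n:ℝ) ^ (2 * (k + 1)) * ((n:ℝ) ^ (-θ) * Real.cos (2 * Real.pi * n * a - Real.pi * θ / 2)) : ℝ) : ℂ) := by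
    intro n
    rcases Nat.eq_zero_or_pos n with h | h
    · subst h
      have : s ≠ 0 := by linarith
      simp [this]
    have hn : (0:ℝ) < n := by exact_mod_cast h
    have hp : (n:ℂ) ^ (s:ℂ) = ((n:ℝ) ^ (2 * (k + 1)) * (n:ℝ) ^ θ : ℝ) := by
      rw [← Real.rpow_natCast, ← Real.rpow_add hn, ← hs, Complex.ofReal_cpow hn.le]
      simp
    have hcos : Real.cos (2 * Real.pi * n * a - Real.pi * s / 2) = (-1) ^ (k + 1) * Real.cos (2 * Real.pi * n * a - Real.pi * θ / 2) := by
      rw [← Real.cos_sub_nat_mul_pi]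
      congr 1
      rw [hs]; push_cast; ring
    have hE : Complex.exp (-Real.pi * Complex.I * s / 2) * Complex.exp (2 * Real.pi * Complex.I * a * n) +
        Complex.exp (Real.pi * Complex.I * s / 2) * Complex.exp (2 * Real.pi * Complex.I * (-a : ℝ) * n) =
        ((2 * Real.cos (2 * Real.pi * n * a - Real.pi * s / 2) : ℝ) : ℂ) := by
      rw [← Complex.exp_add, ← Complex.exp_add]
      push_cast
      rw [Complex.two_cos]
      congr 2
      · ring
      · ring
    rw [mul_div_assoc', mul_div_assoc', ← add_div, hE, hp, hcos, ← Complex.ofReal_div, ← Complex.ofReal_mul]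
    congr 1
    rw [Real.rpow_neg hn.le]
    field_simp
  simp_rw [et] at S
  have ST := S.tsum_eq
  rw [tsum_mul_left, ← Complex.ofReal_tsum] at ST
  have e1 : ((1 - s : ℝ) : ℂ) = 1 - (s : ℂ) := by push_cast; ring
  have e2 : ((-a : ℝ) : UnitAddCircle) = -(a : UnitAddCircle) := by simp
  rw [e2] at ST
  rw [e1, fe, ← ST]
  have hG : Complex.Gamma s ≠ 0 := Complex.Gamma_ne_zero_of_re_pos (by linarith)
  have hpp : (2 * (Real.pi : ℂ)) ^ (-(s : ℂ)) ≠ 0 := by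
    rw [Ne, Complex.cpow_eq_zero_iff]
    simp [Real.pi_ne_zero]
  have h2 : (((-1) ^ (k + 1) * 2 : ℝ) : ℂ) ≠ 0 := by simp
  constructor
  · intro h
    have := (mul_eq_zero.1 ((mul_eq_zero.1 h).resolve_left (mul_ne_zero hpp hG))).resolve_left h2
    exact_mod_cast this
  · intro h
    rw [h]; simp

lemma phi_continuous (M : ℕ) (hM : 2 ≤ M) (a : ℝ) :
    ContinuousOn (fun θ : ℝ => ∑' n : ℕ, 1 / (n:ℝ) ^ M * ((n:ℝ) ^ (-θ) * Real.cos (2 * Real.pi * n * a - Real.pi * θ / 2))) (Icc 0 1) := by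
  have hM0 : M ≠ 0 := by omega
  apply continuousOn_tsum (u := fun n : ℕ => 1 / (n:ℝ) ^ M) _ (Real.summable_one_div_nat_pow.2 (by omega))
  · intro n θ hθ
    rcases Nat.eq_zero_or_pos n with h | h
    · subst h; simp [hM0]
    have hn : (1:ℝ) ≤ n := by exact_mod_cast h
    rw [norm_mul, Real.norm_of_nonneg (by positivity : (0:ℝ) ≤ 1 / (n:ℝ) ^ M), norm_mul,
      Real.norm_of_nonneg (by positivity : (0:ℝ) ≤ (n:ℝ) ^ (-θ))]
    refine mul_le_of_le_one_right (by positivity) ?_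
    have e1 : (n:ℝ) ^ (-θ) ≤ 1 := Real.rpow_le_one_of_one_le_of_nonpos hn (by linarith [hθ.1])
    have e2 := Real.abs_cos_le_one (2 * Real.pi * n * a - Real.pi * θ / 2)
    exact mul_le_one₀ e1 (norm_nonneg _) e2
  · intro n
    rcases Nat.eq_zero_or_pos n with h | h
    · subst h; simp [hM0, continuousOn_const]
    have hn : (0:ℝ) < n := by exact_mod_cast h
    apply Continuous.continuousOn
    apply continuous_const.mul
    refine Continuous.mul ?_ (by fun_prop)
    exact (Real.continuous_const_rpow hn.ne').comp continuous_neg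

lemma bernoulliPoly_eq (n : ℕ) (x : ℝ) : bernoulliPoly n x = bernoulliFun n x := by
  simp [bernoulliPoly, bernoulliFun, Polynomial.aeval_def, Polynomial.eval_map]

/-- For an odd integer `N ≥ 1` and `0 < a ≤ 1`, with `b⁻ ∈ [0,1/2)` and `b⁺ ∈ [1/2,1)`
roots of `B_{N+1}`, the Hurwitz zeta function has a real zero in `(-N-1, -N)` iff
`b⁻ < a < 1/2` or `b⁺ < a < 1`. -/
theorem hurwitzZeta_has_real_zero_iff_of_odd (N : ℕ) (hN1 : 1 ≤ N) (hN : Odd N) (a : ℝ)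
    (ha : 0 < a) (ha' : a ≤ 1) (bm bp : ℝ)
    (hbm : bm ∈ Set.Ico (0 : ℝ) (1 / 2)) (hbm0 : bernoulliPoly (N + 1) bm = 0)
    (hbp : bp ∈ Set.Ico (1 / 2 : ℝ) 1) (hbp0 : bernoulliPoly (N + 1) bp = 0) :
    (∃ σ : ℝ, σ ∈ Set.Ioo (-(N : ℝ) - 1) (-(N : ℝ)) ∧
        hurwitzZeta (a : UnitAddCircle) (σ : ℂ) = 0) ↔
      (bm < a ∧ a < 1 / 2) ∨ (bp < a ∧ a < 1) := by
  have hpi := Real.pi_pos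
  obtain ⟨k, rfl⟩ := hN
  rw [bernoulliPoly_eq, show 2 * k + 1 + 1 = 2 * (k + 1) by ring] at hbm0 hbp0
  have hM : 2 ≤ 2 * (k + 1) := by omega
  set β : ℝ → ℝ := fun v => (-1:ℝ) ^ (k + 2) * bernoulliFun (2 * (k + 1)) v with hβ
  have hanti : StrictAntiOn β (Icc (0:ℝ) (1 / 2)) := even_bern_anti k
  have hβsym : ∀ v, β (1 - v) = β v := by
    intro v
    simp only [hβ]
    rw [bernoulliFun_eval_one_sub, (even_two_mul (k + 1)).neg_one_pow, one_mul]
  have hβbm : β bm = 0 := by simp only [hβ, hbm0, mul_zero]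
  have hbpm : bp = 1 - bm := by
    have h1 : β (1 - bp) = 0 := by rw [hβsym]; simp only [hβ, hbp0, mul_zero]
    have := hanti.injOn (x₁ := 1 - bp) ⟨by linarith [hbp.2], by linarith [hbp.1]⟩ ⟨hbm.1, hbm.2.le⟩ (h1.trans hβbm.symm)
    linarith
  obtain ⟨f, hf⟩ : ∃ f : ℝ → ℝ, f = fun v => ∑' n : ℕ, 1 / (n:ℝ) ^ (2 * (k + 1) + 1) * Real.sin (2 * Real.pi * n * v) := ⟨_, rfl⟩
  have hfc : Continuous f := by
    rw [hf]
    exact continuous_tsum (fun n => by fun_prop) (Real.summable_one_div_nat_pow.2 (by omega)) (sinSum_norm_le (2 * (k + 1)))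
  have hper : ∀ v, f (v + 1) = f v := by
    intro v
    rw [hf]
    simp only []
    congr 1; ext n
    rw [show 2 * Real.pi * n * (v + 1) = 2 * Real.pi * n * v + n * (2 * Real.pi) by ring, Real.sin_add_nat_mul_two_pi]
  have hodd : ∀ v, f (-v) = -f v := by
    intro v
    rw [hf]
    simp only []
    rw [← tsum_neg]
    congr 1; ext n
    rw [mul_neg, Real.sin_neg, mul_neg]
  obtain ⟨c, hc0, hfe⟩ : ∃ c : ℝ, 0 < c ∧ ∀ v ∈ Icc (0:ℝ) 1, f v = c * ((-1:ℝ) ^ (k + 2) * bernoulliFun (2 * (k + 1) + 1) v) := by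
    refine ⟨(2 * Real.pi) ^ (2 * (k + 1) + 1) / 2 / (Nat.factorial (2 * (k + 1) + 1)), by positivity, ?_⟩
    intro v hv
    rw [hf]
    simp only []
    rw [(hasSum_one_div_nat_pow_mul_sin (k := k + 1) (by omega) hv).tsum_eq, bernoulliFun]
    ring
  have hfpos : ∀ v ∈ Ioo (0:ℝ) (1 / 2), 0 < f v := by
    intro v hv
    rw [hfe v ⟨hv.1.le, by linarith [hv.2]⟩]
    exact mul_pos hc0 (odd_bern_pos (k + 1) v hv)
  have hmm := odd_bern_mono k bm ⟨hbm.1, hbm.2.le⟩ hbm0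
  have hfm : MonotoneOn f (Icc 0 bm) := by
    intro x hx y hy hxy
    have b2 := hbm.2
    rw [hfe x ⟨hx.1, by linarith [hx.2]⟩, hfe y ⟨hy.1, by linarith [hy.2]⟩]
    exact mul_le_mul_of_nonneg_left (hmm.1 hx hy hxy) hc0.le
  have hfa : AntitoneOn f (Icc bm (1 / 2)) := by
    intro x hx y hy hxy
    have b1 := hbm.1
    rw [hfe x ⟨by linarith [hx.1], by linarith [hx.2]⟩, hfe y ⟨by linarith [hy.1], by linarith [hy.2]⟩]
    exact mul_le_mul_of_nonneg_left (hmm.2 hx hy hxy) hc0.le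
  set Φ : ℝ → ℝ := fun θ : ℝ => ∑' n : ℕ, 1 / (n:ℝ) ^ (2 * (k + 1)) * ((n:ℝ) ^ (-θ) * Real.cos (2 * Real.pi * n * a - Real.pi * θ / 2)) with hΦ
  have hΦc : ContinuousOn Φ (Icc 0 1) := phi_continuous _ hM a
  constructor
  · rintro ⟨σ, ⟨hσ1, hσ2⟩, hz⟩
    push_cast at hσ1 hσ2
    set θ : ℝ := -(2 * k + 1) - σ with hθ
    have h0 : 0 < θ := by linarith
    have h1 : θ < 1 := by linarith
    have hzero : Φ θ = 0 := by
      rw [hΦ]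
      rw [← sum_link a k θ h0 h1]
      rw [← hz]
      congr 2
      rw [hθ]; push_cast; ring
    by_contra hcon
    push Not at hcon
    obtain ⟨c1, c2⟩ := hcon
    have x0 : (1/4:ℝ) ∈ Ioo (0:ℝ) (1 / 2) := by constructor <;> norm_num
    have hcase1 : ∀ a0, 0 ≤ a0 → a0 ≤ bm → (f a = f a0) → (∀ u, f (a - u) = f (a0 - u)) → False := by
      intro a0 h2 h3 h4 h5
      have := main_pos _ hM f hf a θ 1 h0 h1 (by
        intro x hx
        simp only [h4, h5, one_mul]
        exact kernel_pos f hfc hper hodd bm a0 (1/4) hbm.2.le h2 h3 hfm hfa x0 (hfpos _ x0) _ (by positivity))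
      rw [one_mul] at this
      exact this.ne' hzero
    rcases le_or_gt a bm with h | h
    · exact hcase1 a ha.le h rfl (fun _ => rfl)
    have c1' := c1 h
    rcases le_or_gt a bp with h' | h'
    · have hg1 : ∀ v, -f (v + 1 / 2) = f (1 / 2 - v) := by
        intro v
        rw [← hodd, ← hper]
        congr 1; ring
      have := main_pos _ hM f hf a θ (-1) h0 h1 (by
        intro x hx
        have := kernel_pos (fun v => f (1 / 2 - v)) (by fun_prop)
          (by intro v; rw [← hper]; congr 1; ring)
          (by intro v; rw [← hg1]; congr 2; ring) (1 / 2 - bm) (a - 1 / 2) (1/4)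
          (by linarith [hbm.1]) (by linarith) (by linarith)
          (by
            intro x hx y hy hxy
            exact hfa ⟨by linarith [hy.2], by linarith [hy.1]⟩ ⟨by linarith [hx.2], by linarith [hx.1]⟩ (by linarith))
          (by
            intro x hx y hy hxy
            exact hfm ⟨by linarith [hy.2], by linarith [hy.1]⟩ ⟨by linarith [hx.2], by linarith [hx.1]⟩ (by linarith))
          x0 (by norm_num; exact hfpos _ x0) (2 * Real.pi * x) (by positivity)
        rw [← intervalIntegral.integral_const_mul]
        refine lt_of_lt_of_eq this ?_
        congr 1
        ext u
        rw [← hg1, ← hg1, show a - 1 / 2 + 1 / 2 = a by ring, show a - 1 / 2 - u + 1 / 2 = a - u by ring]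
        ring)
      have hz' : ∑' n : ℕ, 1 / (n:ℝ) ^ (2 * (k + 1)) * ((n:ℝ) ^ (-θ) * Real.cos (2 * Real.pi * n * a - Real.pi * θ / 2)) = 0 := hzero
      rw [hz'] at this
      simp at this
    · have ha1 : a = 1 := le_antisymm ha' (c2 h')
      refine hcase1 0 le_rfl hbm.1 ?_ ?_
      · rw [ha1, ← hper 0]; norm_num
      · intro u
        rw [ha1, ← hper (0 - u)]; congr 1; ring
  · intro hcase
    have hΦ0 : ∃ d : ℝ, 0 < d ∧ Φ 0 = d * β a := by
      refine ⟨(2 * Real.pi) ^ (2 * (k + 1)) / 2 / (Nat.factorial (2 * (k + 1))), by positivity, ?_⟩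
      have := (hasSum_one_div_nat_pow_mul_cos (k := k + 1) (by omega) (x := a) ⟨ha.le, ha'⟩).tsum_eq
      simp only [hΦ, neg_zero, Real.rpow_zero, one_mul, mul_zero, zero_div, sub_zero]
      rw [this]
      simp only [hβ, bernoulliFun]
      ring
    have hΦ1 : Φ 1 = f a := by
      rw [hf]
      simp only [hΦ]
      congr 1; ext n
      rw [mul_one, Real.cos_sub_pi_div_two, Real.rpow_neg_one, pow_succ, ← mul_assoc]
      congr 1
      rw [one_div, one_div, mul_inv]
    obtain ⟨d, hd, hd0⟩ := hΦ0
    have hroot : ∃ θ ∈ Ioo (0:ℝ) 1, Φ θ = 0 := by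
      rcases hcase with ⟨h1, h2⟩ | ⟨h1, h2⟩
      · have n0 : Φ 0 < 0 := by
          have := hanti ⟨hbm.1, hbm.2.le⟩ ⟨ha.le, h2.le⟩ h1
          rw [hβbm] at this
          rw [hd0]; exact mul_neg_of_pos_of_neg hd this
        have n1 : 0 < Φ 1 := by rw [hΦ1]; exact hfpos a ⟨ha, h2⟩
        exact intermediate_value_Ioo zero_le_one hΦc ⟨n0, n1⟩
      · have n0 : 0 < Φ 0 := by
          have := hanti (a := 1 - a) (b := bm) ⟨by linarith, by linarith [hbp.1]⟩ ⟨hbm.1, hbm.2.le⟩ (by linarith)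
          rw [hβbm, hβsym] at this
          rw [hd0]; exact mul_pos hd this
        have n1 : Φ 1 < 0 := by
          have h3 := hfpos (1 - a) ⟨by linarith, by linarith [hbp.1]⟩
          have h4 := hper (-a)
          rw [hodd, show -a + 1 = 1 - a by ring] at h4
          rw [hΦ1]; linarith
        exact intermediate_value_Ioo' zero_le_one hΦc ⟨n1, n0⟩
    obtain ⟨θ, ⟨h0, h1⟩, hz⟩ := hroot
    refine ⟨1 - ((2 * (k + 1) : ℕ) + θ), ⟨?_, ?_⟩, ?_⟩
    · push_cast; linarith
    · push_cast; linarith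
    · exact (sum_link a k θ h0 h1).2 hz
end
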